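/- arXiv:2601.11474 — 11 statements merged into one kernel-verified Lean document; each statement's English description precedes it below -/
import Mathlib

section
/- Fix integers 1 ≤ d < e and a field k. Let R = k[a_0,…,a_d, b_0,…,b_e] be the polynomial ring over k in d+e+2 variables. For each tuple h = (h_0,…,h_{e−d}) ∈ k^{e−d+1}, let τ_h : R → R be the unique k-algebra endomorphism with τ_h(a_i) = a_i for 0 ≤ i ≤ d and τ_h(b_j) = b_j + Σ_{i+i′=j, 0≤i≤e−d, 0≤i′≤d} h_i a_{i′} for 0 ≤ j ≤ e. Then the subalgebra of invariants {P ∈ R : τ_h(P) = P for all h ∈ k^{e−d+1}} is a finitely generated k-algebra. -/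
/-!
Write `F = ∑ a_i X^i` and `G = ∑ b_j X^j` for the generic polynomials of degrees `d` and `e`, and
put `m = e - d`, so that the translations are `G ↦ G + H F` with `deg H ≤ m`.

If `k` is finite, the group of translations is finite, so `R` is integral, hence finite, over the
invariants (`x` is a root of `∏_h (X - τ_h x)`), and the Artin–Tate lemma applies
(`inv_fg_finite`).

If `k` is infinite, the invariants are shown to be a finite module over an explicit finitely
generated subalgebra `A`, by induction on `d` with `m` fixed (`FinProp`, `finProp`). The algebra `A`
is generated by the square minors of the coefficient matrices of the families
`G, …, X^(q-1) G, F, …, X^(p-1) F`, where `q = 0` or `q + m ≤ p`: adding `H X^j F` to `X^j G` for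
`j < q` is then a column operation, so these minors are invariant. The resultant `Res` of `F` and
`G` is one of them.

For `d = 0`, translating by `-b_j / a_0` shows that the invariants are `k[a_0]` (`finProp_zero`).

For the step from `(d, e)` to `(d + 1, e + 1)`, let `Θ` be the homomorphism
`R_{d+1,e+1} → R_{d,e}[ξ]` that replaces `F, G` by `(X - ξ) F, (X - ξ) G`, the generic pair with a
common root `ξ`.

* The kernel of `Θ` is generated by `Res` (`Res_dvd_of_Theta_eq_zero`): factor `F` over an
  algebraic closure. As polynomials in `b_0`, both `Res` and an element of the kernel vanish at the
  values of `b_0` for which `G` vanishes at a root of `F`; these are pairwise distinct and are all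
  the roots of `Res`. By Gauss's lemma the divisibility descends, `Res` being primitive in `b_0`.
* `Θ` maps an invariant of degree `n` to a polynomial of degree at most `n` in `ξ` whose
  coefficients are invariants of degree `n` (`Theta_Gr`, `coeff_Theta_mem_inv`).
* For a minor `ω` of size `r` for `(d, e)` and `j ≤ r`, the element `ξ^j ω` is integral over
  `Θ(A)` (`isIntegral_pow_mul`). Indeed, if `x_n` is the row of coefficients of `X^n` in the family
  for `(F, G)`, then `y_(n+1) = x_n - ξ x_(n+1)` is the row for `((X - ξ) F, (X - ξ) G)`. Solving
  for `x_n` from above, and for `ξ^(n+1) x_n` from below, expresses `ω` and `ξ^s ω`, for a suitable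
  `s`, as combinations with coefficients in `k[ξ]` of images under `Θ` of minors for
  `(d + 1, e + 1)`. The degrees of these coefficients are small enough for multiplication by
  `ξ^j ω` to preserve the `Θ(A)`-span of finitely many powers of `ξ`.

By the induction hypothesis, the image of the invariants under `Θ` therefore lies in a finite
`A`-module (`exists_bigmodule`), so it is finite over the noetherian ring `A`
(`exists_finite_lift`). Since `ker Θ = (Res)` with `Res ∈ A` homogeneous of positive degree, the
graded Nakayama lemma shows that the invariants are finite over `A` (`finProp_succ`).
-/

namespace TranslationInvariants

open Polynomial

/-- The polynomial ring `k[a_0, …, a_d, b_0, …, b_e]`. -/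
abbrev Rg (k : Type) [Field k] (d e : ℕ) := MvPolynomial (Fin (d + 1) ⊕ Fin (e + 1)) k

noncomputable section

/-! ### Generic polynomials and substitution -/

/-- The polynomial `∑ v_i X^i` with prescribed coefficients. -/
def pol {A : Type} [CommRing A] {n : ℕ} (v : Fin (n + 1) → A) : A[X] :=
  ∑ i : Fin (n + 1), C (v i) * X ^ (i : ℕ)

lemma coeff_pol {A : Type} [CommRing A] {n : ℕ} (v : Fin (n + 1) → A) (i : Fin (n + 1)) :
    (pol v).coeff i = v i := by
  simp only [pol, finsetSum_coeff, coeff_C_mul, coeff_X_pow]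
  rw [Finset.sum_eq_single i]
  · simp
  · intro b _ hb
    have : (i : ℕ) ≠ b := fun h => hb (Fin.ext h.symm)
    simp [this]
  · simp

lemma natDegree_pol {A : Type} [CommRing A] {n : ℕ} (v : Fin (n + 1) → A) :
    (pol v).natDegree ≤ n := by
  apply natDegree_sum_le_of_forall_le
  intro i _
  exact (natDegree_C_mul_X_pow_le _ _).trans (Nat.lt_succ_iff.mp i.2)

lemma eq_pol {A : Type} [CommRing A] {n : ℕ} {P : A[X]} (hP : P.natDegree ≤ n) :
    P = pol (fun i : Fin (n + 1) => P.coeff i) := by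
  ext m
  by_cases hm : m < n + 1
  · exact (coeff_pol (fun i : Fin (n + 1) => P.coeff i) ⟨m, hm⟩).symm
  · rw [coeff_eq_zero_of_natDegree_lt (by omega), coeff_eq_zero_of_natDegree_lt]
    exact (natDegree_pol _).trans_lt (by omega)

lemma map_pol {A B : Type} [CommRing A] [CommRing B] (φ : A →+* B) {n : ℕ}
    (v : Fin (n + 1) → A) : (pol v).map φ = pol (fun i => φ (v i)) := by
  simp [pol, Polynomial.map_sum]

section
variable (k : Type) [Field k] (d e : ℕ)

/-- The generic polynomial `F = ∑ a_i X^i`. -/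
def genF : (Rg k d e)[X] := pol fun i => MvPolynomial.X (Sum.inl i)

/-- The generic polynomial `G = ∑ b_j X^j`. -/
def genG : (Rg k d e)[X] := pol fun j => MvPolynomial.X (Sum.inr j)

lemma natDegree_genF : (genF k d e).natDegree ≤ d := natDegree_pol _
lemma natDegree_genG : (genG k d e).natDegree ≤ e := natDegree_pol _
end

variable {k : Type} [Field k] {d e : ℕ}

/-- The specialisation of the generic pair `(F, G)` to `(P, Q)`. Coefficients of `P` beyond `d` and
of `Q` beyond `e` are ignored, so this is the intended map only if `deg P ≤ d` and `deg Q ≤ e`. -/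
def ev {A : Type} [CommRing A] [Algebra k A] (P Q : A[X]) : Rg k d e →ₐ[k] A :=
  MvPolynomial.aeval (Sum.elim (fun i => P.coeff i) (fun j => Q.coeff j))

lemma map_ev_genF {A : Type} [CommRing A] [Algebra k A] {P Q : A[X]} (hP : P.natDegree ≤ d) :
    (genF k d e).map (ev P Q : Rg k d e →ₐ[k] A).toRingHom = P := by
  conv_rhs => rw [eq_pol hP]
  rw [genF, map_pol]
  congr 1; ext i; simp [ev]

lemma map_ev_genG {A : Type} [CommRing A] [Algebra k A] {P Q : A[X]} (hQ : Q.natDegree ≤ e) :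
    (genG k d e).map (ev P Q : Rg k d e →ₐ[k] A).toRingHom = Q := by
  conv_rhs => rw [eq_pol hQ]
  rw [genG, map_pol]
  congr 1; ext i; simp [ev]

/-- A homomorphism out of `Rg k d e` is determined by the images of the generic polynomials. -/
lemma Rg_hom_ext {A : Type} [CommRing A] [Algebra k A] {φ ψ : Rg k d e →ₐ[k] A}
    (hF : (genF k d e).map φ.toRingHom = (genF k d e).map ψ.toRingHom)
    (hG : (genG k d e).map φ.toRingHom = (genG k d e).map ψ.toRingHom) : φ = ψ := by
  apply MvPolynomial.algHom_ext
  rintro (i | j)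
  · have := congrArg (fun p => coeff p (i : ℕ)) hF
    simpa [genF, map_pol, coeff_pol] using this
  · have := congrArg (fun p => coeff p (j : ℕ)) hG
    simpa [genG, map_pol, coeff_pol] using this

/-! ### The kernel of the common-root specialisation -/

/-- The specialisation `Θ` of the generic pair of degrees `(d + 1, e + 1)` to
`((X - ξ) F, (X - ξ) G)`, the generic pair with a common root. The variable of the outer polynomial
ring `(Rg k d e)[X]`, written `C X` on the right, plays the role of `ξ`. -/
def Theta (k : Type) [Field k] (d e : ℕ) : Rg k (d + 1) (e + 1) →ₐ[k] (Rg k d e)[X] :=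
  ev ((X - C X) * (genF k d e).map C) ((X - C X) * (genG k d e).map C)

lemma natDegree_mul_lin {A : Type} [CommRing A] (x : A) {P : A[X]} {n : ℕ}
    (hP : P.natDegree ≤ n) : ((X - C x) * P).natDegree ≤ n + 1 := by
  refine natDegree_mul_le.trans ?_
  have := natDegree_X_sub_C_le x
  omega

lemma Theta_F : (genF k (d + 1) (e + 1)).map (Theta k d e).toRingHom
    = (X - C X) * (genF k d e).map C :=
  map_ev_genF (natDegree_mul_lin _ (natDegree_map_le.trans (natDegree_genF _ _ _)))

lemma Theta_G : (genG k (d + 1) (e + 1)).map (Theta k d e).toRingHom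
    = (X - C X) * (genG k d e).map C :=
  map_ev_genG (natDegree_mul_lin _ (natDegree_map_le.trans (natDegree_genG _ _ _)))

/-- A specialisation to a pair of polynomials with a common linear factor factors through `Θ`. -/
lemma factor_Theta {A : Type} [CommRing A] [Algebra k A] (φ : Rg k (d + 1) (e + 1) →ₐ[k] A)
    (x : A) (F G : A[X]) (hF : F.natDegree ≤ d) (hG : G.natDegree ≤ e)
    (h1 : (genF k (d + 1) (e + 1)).map φ.toRingHom = (X - C x) * F)
    (h2 : (genG k (d + 1) (e + 1)).map φ.toRingHom = (X - C x) * G)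
    {P : Rg k (d + 1) (e + 1)} (hP : Theta k d e P = 0) : φ P = 0 := by
  let χ : (Rg k d e)[X] →ₐ[k] A :=
    { eval₂RingHom (ev F G : Rg k d e →ₐ[k] A).toRingHom x with
      commutes' := fun r => by simp [Polynomial.algebraMap_apply] }
  have hχC : χ.toRingHom.comp C = (ev F G : Rg k d e →ₐ[k] A).toRingHom := by
    ext a <;> simp [χ]
  have hχX : χ.toRingHom X = x := by simp [χ]
  have : φ = χ.comp (Theta k d e) := by
    apply Rg_hom_ext
    · rw [h1]
      have := congrArg (Polynomial.map χ.toRingHom) (Theta_F (k := k) (d := d) (e := e))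
      rw [Polynomial.map_map, Polynomial.map_mul, Polynomial.map_sub, Polynomial.map_X,
        Polynomial.map_C, hχX, Polynomial.map_map, hχC, map_ev_genF hF] at this
      exact this.symm
    · rw [h2]
      have := congrArg (Polynomial.map χ.toRingHom) (Theta_G (k := k) (d := d) (e := e))
      rw [Polynomial.map_map, Polynomial.map_mul, Polynomial.map_sub, Polynomial.map_X,
        Polynomial.map_C, hχX, Polynomial.map_map, hχC, map_ev_genG hG] at this
      exact this.symm
  rw [this]
  simp [hP]

/-- The resultant of the generic polynomials `F` and `G`. -/
def Res (k : Type) [Field k] (d e : ℕ) : Rg k d e := resultant (genF k d e) (genG k d e) d e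

lemma map_Res {A : Type} [CommRing A] [Algebra k A] {P Q : A[X]} (hP : P.natDegree ≤ d)
    (hQ : Q.natDegree ≤ e) : (ev P Q : Rg k d e →ₐ[k] A) (Res k d e) = resultant P Q d e := by
  have := resultant_map_map (genF k d e) (genG k d e) d e (ev P Q : Rg k d e →ₐ[k] A).toRingHom
  rw [map_ev_genF hP, map_ev_genG hQ] at this
  rw [this]; rfl

lemma resultant_split {A : Type} [CommRing A] [IsDomain A] (t : A) {n : ℕ} (x : Fin n → A)
    (G : A[X]) {e : ℕ} (hG : G.natDegree ≤ e) :
    resultant (C t * ∏ m, (X - C (x m))) G n e = t ^ e * ∏ m, G.eval (x m) := by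
  rw [resultant_C_mul_left]
  congr 1
  have h := resultant_prod_left Finset.univ (fun m => X - C (x m)) G e
    (by simp) hG
  simp only [natDegree_finsetProd_X_sub_C_eq_card] at h
  simpa [hG] using h

lemma natDegree_split {A : Type} [CommRing A] [IsDomain A] (t : A) {n : ℕ} (x : Fin n → A) :
    (C t * ∏ m, (X - C (x m))).natDegree ≤ n := by
  refine (natDegree_C_mul_le _ _).trans ?_
  rw [natDegree_finsetProd_X_sub_C_eq_card]; simp

section divisibility
variable (k : Type) [Field k] (d e : ℕ)

/-- The polynomial ring `k[t, x_1, …, x_d, b_1, …, b_e]`, in which `t` is the leading coefficient of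
`F` and the `x_m` are its roots. The coefficient `b_0` is left out: it is the variable of the
polynomial ring over this one. -/
abbrev C0 := MvPolynomial (Option (Fin d) ⊕ Fin e) k

/-- The polynomial `t ∏ (X - x_m)`, over `k[t, x, b_1, …, b_e][b_0]`. -/
def splitF : (C0 k d e)[X][X] :=
  C (C (MvPolynomial.X (Sum.inl none))) *
    ∏ m : Fin d, (X - C (C (MvPolynomial.X (Sum.inl (some m)))))

/-- The generic polynomial `G`, over `k[t, x, b_1, …, b_e][b_0]`. -/
def splitG : (C0 k d e)[X][X] :=
  pol (n := e) (Fin.cons X (fun j : Fin e => C (MvPolynomial.X (Sum.inr j))))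

/-- The value `-∑_{j ≥ 1} b_j x_m^j` of `b_0` for which `G` vanishes at `x_m`. -/
def rt (m : Fin d) : C0 k d e :=
  - ∑ j : Fin e, MvPolynomial.X (Sum.inr j) * MvPolynomial.X (Sum.inl (some m)) ^ (j + 1 : ℕ)

lemma eval_splitG (m : Fin d) :
    (splitG k d e).eval (C (MvPolynomial.X (Sum.inl (some m)))) = X - C (rt k d e m) := by
  simp [splitG, pol, eval_finsetSum, Fin.sum_univ_succ, rt]

lemma rt_injective (he : 0 < e) : Function.Injective (rt k d e) := by
  intro m n h
  by_contra hmn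
  have := congrArg (MvPolynomial.aeval (R := k) (S₁ := MvPolynomial (Fin d) k)
    (Sum.elim (fun o => o.elim 0 (fun m => MvPolynomial.X m)) (Pi.single ⟨0, he⟩ 1))) h
  simp only [rt, map_neg, map_sum, map_mul, map_pow, MvPolynomial.aeval_X, Sum.elim_inl,
    Sum.elim_inr, Option.elim_some, neg_inj] at this
  rw [Finset.sum_eq_single ⟨0, he⟩ (by intro b _ hb; simp [hb]) (by simp),
    Finset.sum_eq_single ⟨0, he⟩ (by intro b _ hb; simp [hb]) (by simp)] at this
  simp at this
  exact hmn this

/-- An element of the kernel of `Θ` vanishes whenever `x_m` is a common root of `F` and `G`. -/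
lemma eval_rt_eq_zero {P : Rg k (d + 1) (e + 1)} (hP : Theta k d e P = 0) (m : Fin (d + 1)) :
    ((ev (splitF k (d + 1) (e + 1)) (splitG k (d + 1) (e + 1)) : Rg k (d + 1) (e + 1) →ₐ[k] _) P
      ).eval (rt k (d + 1) (e + 1) m) = 0 := by
  let ρ : (C0 k (d + 1) (e + 1))[X] →ₐ[k] C0 k (d + 1) (e + 1) :=
    { evalRingHom (rt k (d + 1) (e + 1) m) with
      commutes' := fun r => by simp [Polynomial.algebraMap_apply] }
  let φ := ρ.comp (ev (splitF k (d + 1) (e + 1)) (splitG k (d + 1) (e + 1)) :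
    Rg k (d + 1) (e + 1) →ₐ[k] _)
  change φ P = 0
  have hF : (genF k (d + 1) (e + 1)).map φ.toRingHom = (splitF k (d + 1) (e + 1)).map
      ρ.toRingHom := by
    rw [← map_ev_genF (k := k) (e := e + 1) (P := splitF k (d + 1) (e + 1))
      (Q := splitG k (d + 1) (e + 1)) (natDegree_split _ _), Polynomial.map_map]
    rfl
  have hG : (genG k (d + 1) (e + 1)).map φ.toRingHom = (splitG k (d + 1) (e + 1)).map
      ρ.toRingHom := by
    rw [← map_ev_genG (k := k) (d := d + 1) (P := splitF k (d + 1) (e + 1))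
      (Q := splitG k (d + 1) (e + 1)) (natDegree_pol _), Polynomial.map_map]
    rfl
  set x : C0 k (d + 1) (e + 1) := MvPolynomial.X (Sum.inl (some m))
  have hρC : ∀ y, ρ.toRingHom (C y) = y := fun y => by simp [ρ]
  have hroot : ((splitG k (d + 1) (e + 1)).map ρ.toRingHom).IsRoot x := by
    have h1 := eval_splitG k (d + 1) (e + 1) m
    have h2 := congrArg ρ.toRingHom h1
    rw [← Polynomial.eval_map_apply, hρC] at h2
    rw [IsRoot, h2]
    simp [ρ]
  obtain ⟨G, hG'⟩ := dvd_iff_isRoot.mpr hroot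
  have hFm : (splitF k (d + 1) (e + 1)).map ρ.toRingHom = (X - C x) *
      (C (MvPolynomial.X (Sum.inl none)) * ∏ n : Fin d,
        (X - C (MvPolynomial.X (Sum.inl (some (m.succAbove n)))))) := by
    rw [splitF, Polynomial.map_mul, Polynomial.map_C, hρC, Polynomial.map_prod,
      Fin.prod_univ_succAbove _ m]
    simp only [Polynomial.map_sub, Polynomial.map_X, Polynomial.map_C, hρC]
    ring
  refine factor_Theta φ x _ G (natDegree_split _ _) ?_ (hF.trans hFm) (hG.trans hG') hP
  have h3 : ((splitG k (d + 1) (e + 1)).map ρ.toRingHom).natDegree ≤ e + 1 :=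
    natDegree_map_le.trans (natDegree_pol _)
  rw [hG'] at h3
  by_cases hG0 : G = 0
  · simp [hG0]
  · rw [natDegree_mul (X_sub_C_ne_zero _) hG0, natDegree_X_sub_C] at h3
    omega

/-- In terms of the roots of `F`, the resultant is `t^e ∏ G(x_m)`, a product of linear factors in
`b_0`. -/
lemma Res_split : (ev (splitF k (d + 1) (e + 1)) (splitG k (d + 1) (e + 1)) :
      Rg k (d + 1) (e + 1) →ₐ[k] _) (Res k (d + 1) (e + 1)) =
      C (MvPolynomial.X (Sum.inl none)) ^ (e + 1) *
        ∏ m, (X - C (rt k (d + 1) (e + 1) m)) := by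
  rw [map_Res (P := splitF k (d + 1) (e + 1)) (Q := splitG k (d + 1) (e + 1))
    (natDegree_split _ _) (natDegree_pol _), splitF,
    resultant_split _ _ (splitG k (d + 1) (e + 1)) (natDegree_pol _)]
  simp only [eval_splitG]

/-- After adjoining the roots of `F`, an element of the kernel of `Θ` is divisible by `Res` up to a
power of the leading coefficient of `F`. -/
lemma Res_dvd_split {P : Rg k (d + 1) (e + 1)} (hP : Theta k d e P = 0) :
    (ev (splitF k (d + 1) (e + 1)) (splitG k (d + 1) (e + 1)) : Rg k (d + 1) (e + 1) →ₐ[k] _)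
      (Res k (d + 1) (e + 1)) ∣ C (MvPolynomial.X (Sum.inl none)) ^ (e + 1) *
    (ev (splitF k (d + 1) (e + 1)) (splitG k (d + 1) (e + 1)) : Rg k (d + 1) (e + 1) →ₐ[k] _) P
    := by
  rw [Res_split]
  apply mul_dvd_mul_left
  have hz := eval_rt_eq_zero k d e hP
  set p := (ev (splitF k (d + 1) (e + 1)) (splitG k (d + 1) (e + 1)) :
    Rg k (d + 1) (e + 1) →ₐ[k] _) P
  by_cases hp : p = 0
  · simp [hp]
  have := (Multiset.prod_X_sub_C_dvd_iff_le_roots hp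
    ((Finset.univ : Finset (Fin (d + 1))).val.map (rt k (d + 1) (e + 1)))).mpr ?_
  · rw [Multiset.map_map] at this
    exact this
  · rw [Multiset.le_iff_subset ((Multiset.nodup_map_iff_of_injective
      (rt_injective k (d + 1) (e + 1) (by omega))).mpr Finset.univ.nodup)]
    intro r hr
    simp only [Multiset.mem_map] at hr
    obtain ⟨m, _, rfl⟩ := hr
    rw [mem_roots hp]
    exact hz m

/-- The polynomial ring `k[a_0, …, a_d, b_1, …, b_e]`. -/
abbrev R0 := MvPolynomial (Fin (d + 1) ⊕ Fin e) k

/-- The isomorphism of `Rg k d e` with the polynomial ring in `b_0` over the other variables. -/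
def beta : Rg k d e →ₐ[k] (R0 k d e)[X] :=
  ev (pol (n := d) fun i => C (MvPolynomial.X (Sum.inl i)))
    (pol (n := e) (Fin.cons X (fun j : Fin e => C (MvPolynomial.X (Sum.inr j)))))

/-- The left inverse of `beta`. -/
def gam : (R0 k d e)[X] →+* Rg k d e :=
  eval₂RingHom (MvPolynomial.aeval (R := k) (Sum.elim (fun i => MvPolynomial.X (Sum.inl i))
    (fun j : Fin e => MvPolynomial.X (Sum.inr j.succ)))).toRingHom (MvPolynomial.X (Sum.inr 0))

lemma gam_beta (P : Rg k d e) : gam k d e (beta k d e P) = P := by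
  have : (gam k d e).comp (beta k d e).toRingHom = RingHom.id _ := by
    apply MvPolynomial.ringHom_ext
    · intro r
      simp [gam, beta, ev, Polynomial.algebraMap_apply]
    · rintro (i | j)
      · simp [gam, beta, ev, coeff_pol]
      · refine Fin.cases ?_ (fun j => ?_) j
        · simp [gam, beta, ev, coeff_pol]
        · simp [gam, beta, ev, coeff_pol, -Fin.val_succ]
  exact congrArg (fun f => f P) this

lemma exists_split {L : Type} [Field L] [IsAlgClosed L] (p : L[X]) (n : ℕ)
    (hp : p.natDegree ≤ n) (hn : p.coeff n ≠ 0) :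
    ∃ x : Fin n → L, p = C (p.coeff n) * ∏ m, (X - C (x m)) := by
  have hdeg : p.natDegree = n := le_antisymm hp (le_natDegree_of_ne_zero hn)
  have hs := IsAlgClosed.splits p
  have hcard : p.roots.card = n := by rw [← hdeg]; exact hs.natDegree_eq_card_roots.symm
  obtain ⟨l, hl⟩ := Quot.exists_rep p.roots
  have hl' : p.roots = (l : Multiset L) := hl.symm
  rw [hl', Multiset.coe_card] at hcard
  subst hcard
  refine ⟨l.get, ?_⟩
  conv_lhs => rw [hs.eq_prod_roots]
  rw [leadingCoeff, hdeg, hl', Multiset.map_coe, Multiset.prod_coe]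
  congr 1
  rw [← List.prod_ofFn]
  congr 1
  apply List.ext_getElem <;> simp

/-- An algebraic closure of `k(a_0, …, a_d, b_1, …, b_e)`. -/
abbrev Om := AlgebraicClosure (FractionRing (R0 k d e))

/-- The embedding of `k[a_0, …, a_d, b_1, …, b_e]` into the algebraic closure `Om`. -/
def toOm : R0 k d e →+* Om k d e :=
  (algebraMap (FractionRing (R0 k d e)) (Om k d e)).comp (algebraMap (R0 k d e) _)

/-- `toOm` as a homomorphism of `k`-algebras. -/
def toOmA : R0 k d e →ₐ[k] Om k d e := ⟨toOm k d e, fun _ => rfl⟩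

lemma toOmA_apply (x : R0 k d e) : toOmA k d e x = toOm k d e x := rfl

lemma toOm_injective : Function.Injective (toOm k d e) :=
  (algebraMap (FractionRing (R0 k d e)) (Om k d e)).injective.comp
    (IsFractionRing.injective (R0 k d e) (FractionRing (R0 k d e)))

/-- Specialising the `x_m` to the roots of `F` in the algebraic closure `Om` turns the split pair back
into the generic pair. -/
lemma exists_eta : ∃ (η : (C0 k d e)[X] →+* (Om k d e)[X]) (y : Fin d → Om k d e),
    η (C (MvPolynomial.X (Sum.inl none))) = C (toOm k d e (MvPolynomial.X (Sum.inl (Fin.last d)))) ∧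
    (∀ m, η (X - C (rt k d e m)) = X - C (y m)) ∧
    ∀ P, η ((ev (splitF k d e) (splitG k d e) : Rg k d e →ₐ[k] _) P) =
      (beta k d e P).map (toOm k d e) := by
  set p : (Om k d e)[X] := pol (n := d) fun i => toOm k d e (MvPolynomial.X (Sum.inl i)) with hp
  have hlast : p.coeff d = toOm k d e (MvPolynomial.X (Sum.inl (Fin.last d))) :=
    coeff_pol _ (Fin.last d)
  obtain ⟨x, hx⟩ := exists_split p d (natDegree_pol _) (by
    rw [hlast]
    exact (map_ne_zero_iff _ (toOm_injective k d e)).mpr (MvPolynomial.X_ne_zero _))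
  rw [hlast] at hx
  let η0 : C0 k d e →ₐ[k] Om k d e := MvPolynomial.aeval (Sum.elim
    (fun o => o.elim (toOm k d e (MvPolynomial.X (Sum.inl (Fin.last d)))) x)
    (fun j => toOm k d e (MvPolynomial.X (Sum.inr j))))
  refine ⟨mapRingHom η0.toRingHom, fun m => η0 (rt k d e m), ?_, ?_, ?_⟩
  · simp [η0]
  · intro m; simp
  · intro P
    have key : (Polynomial.mapAlgHom η0).comp
        (ev (splitF k d e) (splitG k d e) : Rg k d e →ₐ[k] _) =
        (Polynomial.mapAlgHom (toOmA k d e)).comp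
          (beta k d e) := by
      apply Rg_hom_ext
      · have h1 := map_ev_genF (k := k) (e := e) (P := splitF k d e) (Q := splitG k d e)
          (natDegree_split _ _)
        have h2 := map_ev_genF (k := k) (e := e) (d := d)
          (P := (pol (n := d) fun i => C (MvPolynomial.X (Sum.inl i)) : (R0 k d e)[X][X]))
          (Q := pol (n := e) (Fin.cons X (fun j : Fin e => C (MvPolynomial.X (Sum.inr j)))))
          (natDegree_pol _)
        have h3 := congrArg (Polynomial.map (Polynomial.mapAlgHom η0).toRingHom) h1
        have h4 := congrArg (Polynomial.map (Polynomial.mapAlgHom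
          (toOmA k d e)).toRingHom) h2
        rw [Polynomial.map_map] at h3 h4
        refine h3.trans (Eq.trans ?_ h4.symm)
        rw [map_pol, splitF, Polynomial.map_mul, Polynomial.map_prod]
        have h5 := congrArg (Polynomial.map C) hx
        rw [hp, map_pol, Polynomial.map_mul, Polynomial.map_prod] at h5
        simpa [η0, toOmA_apply] using h5.symm
      · have h1 := map_ev_genG (k := k) (d := d) (P := splitF k d e) (Q := splitG k d e)
          (natDegree_pol _)
        have h2 := map_ev_genG (k := k) (e := e) (d := d)
          (P := (pol (n := d) fun i => C (MvPolynomial.X (Sum.inl i)) : (R0 k d e)[X][X]))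
          (Q := pol (n := e) (Fin.cons X (fun j : Fin e => C (MvPolynomial.X (Sum.inr j)))))
          (natDegree_pol _)
        have h3 := congrArg (Polynomial.map (Polynomial.mapAlgHom η0).toRingHom) h1
        have h4 := congrArg (Polynomial.map (Polynomial.mapAlgHom
          (toOmA k d e)).toRingHom) h2
        rw [Polynomial.map_map] at h3 h4
        refine h3.trans (Eq.trans ?_ h4.symm)
        rw [map_pol, splitG, map_pol]
        congr 1
        ext1 j
        refine Fin.cases ?_ (fun j => ?_) j
        · simp
        · simp [η0, toOmA_apply]
    exact congrArg (fun f => f P) key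

lemma beta_Res : ∃ y : Fin (d + 1) → Om k (d + 1) (e + 1),
    (beta k (d + 1) (e + 1) (Res k (d + 1) (e + 1))).map (toOm k (d + 1) (e + 1)) =
      C (toOm k (d + 1) (e + 1) (MvPolynomial.X (Sum.inl (Fin.last (d + 1)))) ^ (e + 1)) *
        ∏ m, (X - C (y m)) := by
  obtain ⟨η, y, h1, h2, h3⟩ := exists_eta k (d + 1) (e + 1)
  refine ⟨y, ?_⟩
  rw [← h3, Res_split, map_mul, map_pow, h1, map_prod, C_pow]
  simp only [h2]

/-- The leading coefficient of `F` does not divide the resultant, because the resultant of `1` and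
`X^(e+1)` is not zero. -/
lemma a_not_dvd : ¬ C (MvPolynomial.X (Sum.inl (Fin.last (d + 1)))) ∣
    beta k (d + 1) (e + 1) (Res k (d + 1) (e + 1)) := by
  intro h
  have h1 := map_dvd (gam k (d + 1) (e + 1)) h
  rw [gam_beta] at h1
  have h2 := map_dvd (ev (d := d + 1) (e := e + 1) (1 : k[X]) (X ^ (e + 1))) h1
  rw [map_Res (by simp) (by simp)] at h2
  simp [gam, ev, coeff_one] at h2

/-- As a polynomial in `b_0` the resultant has leading coefficient a power of `a_(d+1)`, a prime which
does not divide the resultant. -/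
lemma beta_Res_primitive : (beta k (d + 1) (e + 1) (Res k (d + 1) (e + 1))).IsPrimitive := by
  obtain ⟨y, hy⟩ := beta_Res k d e
  set B := beta k (d + 1) (e + 1) (Res k (d + 1) (e + 1)) with hB
  set a : R0 k (d + 1) (e + 1) := MvPolynomial.X (Sum.inl (Fin.last (d + 1))) with ha
  have hlead : B.coeff (d + 1) = a ^ (e + 1) := by
    apply toOm_injective k (d + 1) (e + 1)
    rw [← coeff_map, hy, coeff_C_mul, map_pow]
    have hm : (∏ m, (X - C (y m))).Monic := monic_prod_of_monic _ _ fun m _ => monic_X_sub_C _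
    have hd : (∏ m, (X - C (y m))).natDegree = d + 1 := by
      rw [natDegree_finsetProd_X_sub_C_eq_card]; simp
    have : (∏ m, (X - C (y m))).coeff (d + 1) = 1 := by
      have := hm.coeff_natDegree
      rwa [hd] at this
    rw [this, mul_one]
  intro c hc
  have h1 : c ∣ a ^ (e + 1) := by
    rw [← hlead]
    exact (C_dvd_iff_dvd_coeff _ _).mp hc _
  have hprime : Prime a := MvPolynomial.X_prime
  obtain ⟨i, hi, hassoc⟩ := (dvd_prime_pow hprime _).mp h1
  rcases Nat.eq_zero_or_pos i with rfl | hpos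
  · rw [pow_zero] at hassoc
    exact associated_one_iff_isUnit.mp hassoc
  · exfalso
    apply a_not_dvd k d e
    refine dvd_trans ?_ hc
    exact _root_.map_dvd C ((dvd_pow_self a hpos.ne').trans hassoc.symm.dvd)

/-- The kernel of `Θ` is contained in the ideal generated by the resultant. -/
lemma Res_dvd_of_Theta_eq_zero {P : Rg k (d + 1) (e + 1)} (hP : Theta k d e P = 0) :
    Res k (d + 1) (e + 1) ∣ P := by
  obtain ⟨η, y, h1, h2, h3⟩ := exists_eta k (d + 1) (e + 1)
  have h := map_dvd η (Res_dvd_split k d e hP)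
  rw [map_mul, map_pow, h1, h3, h3] at h
  have hu : IsUnit (C (toOm k (d + 1) (e + 1) (MvPolynomial.X (Sum.inl (Fin.last (d + 1)))))
      ^ (e + 1)) := by
    apply IsUnit.pow
    apply IsUnit.map C
    rw [isUnit_iff_ne_zero]
    exact (map_ne_zero_iff _ (toOm_injective k _ _)).mpr (MvPolynomial.X_ne_zero _)
  rw [hu.dvd_mul_left, toOm, ← Polynomial.map_map, ← Polynomial.map_map,
    Polynomial.map_dvd_map'] at h
  have : beta k (d + 1) (e + 1) (Res k (d + 1) (e + 1)) ∣ beta k (d + 1) (e + 1) P := by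
    exact (beta_Res_primitive k d e).dvd_of_fraction_map_dvd_fraction_map h
  have := map_dvd (gam k (d + 1) (e + 1)) this
  rwa [gam_beta, gam_beta] at this

end divisibility

/-! ### Minors, translations and invariants -/

section minors
variable {A : Type} [CommRing A]

/-- The polynomials `Q, XQ, …, X^{q-1}Q, P, XP, …, X^{p-1}P`. -/
def rows (P Q : A[X]) (q p : ℕ) : Fin q ⊕ Fin p → A[X] :=
  Sum.elim (fun j => X ^ (j : ℕ) * Q) (fun i => X ^ (i : ℕ) * P)

/-- The determinant whose columns are the coefficient vectors of the polynomials `rows P Q q p`,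
restricted to the rows of index `f j`. Here `f` need not be injective; repetitions give `0`. -/
def minor (P Q : A[X]) {q p : ℕ} (f : Fin q ⊕ Fin p → ℕ) : A :=
  (Matrix.of fun j i => (rows P Q q p i).coeff (f j)).det

lemma rows_map {B : Type} [CommRing B] (φ : A →+* B) (P Q : A[X]) {q p : ℕ} (i) :
    (rows P Q q p i).map φ = rows (P.map φ) (Q.map φ) q p i := by
  rcases i with i | i <;> simp [rows]

lemma minor_map {B : Type} [CommRing B] (φ : A →+* B) (P Q : A[X]) {q p : ℕ}
    (f : Fin q ⊕ Fin p → ℕ) : φ (minor P Q f) = minor (P.map φ) (Q.map φ) f := by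
  rw [minor, RingHom.map_det, minor]
  congr 1
  ext j i
  simp [← rows_map]

/-- The minors do not change under `Q ↦ Q + H P` with `deg H ≤ m` if `q = 0` or `q + m ≤ p`: the
polynomials `X^j H P` with `j < q` are combinations of the `X^i P` with `i < p`, so this is a column
operation, written as multiplication by a unipotent block matrix. -/
lemma minor_add_mul (P Q H : A[X]) {q p m : ℕ} (hqp : q = 0 ∨ q + m ≤ p) (hH : H.natDegree ≤ m)
    (f : Fin q ⊕ Fin p → ℕ) : minor P (Q + H * P) f = minor P Q f := by
  have : (Matrix.of fun j i => (rows P (Q + H * P) q p i).coeff (f j)) =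
      (Matrix.of fun j i => (rows P Q q p i).coeff (f j)) *
        Matrix.fromBlocks 1 0 (Matrix.of fun (i : Fin p) (j : Fin q) => (X ^ (j : ℕ) * H).coeff i)
          1 := by
    ext j i
    rw [Matrix.mul_apply, Fintype.sum_sum_type]
    rcases i with i | i
    · simp only [Matrix.of_apply, Matrix.fromBlocks_apply₁₁, Matrix.fromBlocks_apply₂₁, rows,
        Sum.elim_inl, Sum.elim_inr]
      rw [Finset.sum_eq_single i (by intro b _ hb; simp [hb]) (by simp)]
      have hdeg : (X ^ (i : ℕ) * H).natDegree < p := by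
        rcases hqp with rfl | hqp
        · exact i.elim0
        · have := natDegree_mul_le (p := X ^ (i : ℕ)) (q := H)
          have h2 := natDegree_X_pow_le (R := A) (i : ℕ)
          omega
      have h3 : X ^ (i : ℕ) * (Q + H * P) = X ^ (i : ℕ) * Q + ∑ l : Fin p,
          C ((X ^ (i : ℕ) * H).coeff l) * (X ^ (l : ℕ) * P) := by
        have := (X ^ (i : ℕ) * H).as_sum_range' p hdeg
        rw [mul_add, ← mul_assoc]
        conv_lhs => rw [this]
        rw [Finset.sum_mul, Finset.sum_range]
        congr 1
        refine Finset.sum_congr rfl fun l _ => ?_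
        rw [← C_mul_X_pow_eq_monomial, mul_assoc]
      rw [h3, coeff_add, finsetSum_coeff]
      simp only [coeff_C_mul, Matrix.one_apply_eq, mul_one]
      congr 1
      exact Finset.sum_congr rfl fun l _ => mul_comm _ _
    · simp only [Matrix.of_apply, Matrix.fromBlocks_apply₁₂, Matrix.fromBlocks_apply₂₂, rows,
        Sum.elim_inl, Sum.elim_inr]
      rw [Finset.sum_eq_single i (by intro b _ hb; simp [hb]) (by simp)]
      simp
  rw [minor, this, Matrix.det_mul, Matrix.det_fromBlocks_zero₁₂]
  simp [minor]

/-- The resultant is the minor with `q = d` and `p = e` on the rows `0, …, d + e - 1`. -/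
lemma resultant_eq_minor (P Q : A[X]) {d e : ℕ} (hP : P.natDegree ≤ d) (hQ : Q.natDegree ≤ e) :
    resultant P Q d e = minor P Q (q := d) (p := e) fun j => (finSumFinEquiv j : ℕ) := by
  rw [resultant, minor, ← Matrix.det_submatrix_equiv_self finSumFinEquiv]
  congr 1
  ext j i
  rcases i with i | i
  · simp only [sylvester, Matrix.submatrix_apply, Matrix.of_apply, finSumFinEquiv_apply_left,
      Fin.addCases_left, rows, Sum.elim_inl, coeff_X_pow_mul', Set.mem_Icc]
    split_ifs with h1 h2 h2
    · rfl
    · omega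
    · rw [coeff_eq_zero_of_natDegree_lt]; omega
    · rfl
  · simp only [sylvester, Matrix.submatrix_apply, Matrix.of_apply, finSumFinEquiv_apply_right,
      Fin.addCases_right, rows, Sum.elim_inr, coeff_X_pow_mul', Set.mem_Icc]
    split_ifs with h1 h2 h2
    · rfl
    · omega
    · rw [coeff_eq_zero_of_natDegree_lt]; omega
    · rfl

end minors

lemma rows_gen_isHomogeneous {q p : ℕ} (i : Fin q ⊕ Fin p) (n : ℕ) :
    ((rows (genF k d e) (genG k d e) q p i).coeff n).IsHomogeneous 1 := by
  have hF : ∀ n, ((genF k d e).coeff n).IsHomogeneous 1 := by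
    intro n
    by_cases hn : n < d + 1
    · have := coeff_pol (fun i : Fin (d + 1) =>
        (MvPolynomial.X (Sum.inl i) : Rg k d e)) ⟨n, hn⟩
      rw [genF, this]
      exact MvPolynomial.isHomogeneous_X _ _
    · rw [coeff_eq_zero_of_natDegree_lt ((natDegree_genF k d e).trans_lt (by omega))]
      exact MvPolynomial.isHomogeneous_zero _ _ _
  have hG : ∀ n, ((genG k d e).coeff n).IsHomogeneous 1 := by
    intro n
    by_cases hn : n < e + 1
    · have := coeff_pol (fun i : Fin (e + 1) =>
        (MvPolynomial.X (Sum.inr i) : Rg k d e)) ⟨n, hn⟩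
      rw [genG, this]
      exact MvPolynomial.isHomogeneous_X _ _
    · rw [coeff_eq_zero_of_natDegree_lt ((natDegree_genG k d e).trans_lt (by omega))]
      exact MvPolynomial.isHomogeneous_zero _ _ _
  rcases i with i | i
  · simp only [rows, Sum.elim_inl, coeff_X_pow_mul']
    split_ifs
    exacts [hG _, MvPolynomial.isHomogeneous_zero _ _ _]
  · simp only [rows, Sum.elim_inr, coeff_X_pow_mul']
    split_ifs
    exacts [hF _, MvPolynomial.isHomogeneous_zero _ _ _]

lemma minor_isHomogeneous {q p : ℕ} (f : Fin q ⊕ Fin p → ℕ) :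
    (minor (genF k d e) (genG k d e) f).IsHomogeneous (q + p) := by
  rw [minor, Matrix.det_apply]
  apply MvPolynomial.IsHomogeneous.sum
  intro σ _
  have : (∏ i, (Matrix.of fun j i => (rows (genF k d e) (genG k d e) q p i).coeff (f j))
      (σ i) i).IsHomogeneous (∑ i : Fin q ⊕ Fin p, 1) :=
    MvPolynomial.IsHomogeneous.prod _ _ _ fun i _ => rows_gen_isHomogeneous i _
  simp only [Finset.sum_const, Finset.card_univ, Fintype.card_sum, Fintype.card_fin, smul_eq_mul,
    mul_one] at this
  rcases Int.units_eq_one_or (Equiv.Perm.sign σ) with h | h <;> rw [h]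
  · simpa using this
  · simpa using this.neg

/-- The finite set of invariant minors generating the algebra over which the invariants turn out to
be a finite module. -/
def gens (k : Type) [Field k] (d e m : ℕ) : Set (Rg k d e) :=
  {ω | ∃ (q p : ℕ) (f : Fin q ⊕ Fin p → ℕ), q ≤ d ∧ p ≤ e ∧ (q = 0 ∨ q + m ≤ p) ∧
    (∀ j, f j < d + e) ∧ ω = minor (genF k d e) (genG k d e) f}

lemma gens_finite (m : ℕ) : (gens k d e m).Finite := by
  refine (Set.finite_range (fun x : Σ q : Fin (d + 1), Σ p : Fin (e + 1),
    (Fin q ⊕ Fin p → Fin (d + e)) => minor (genF k d e) (genG k d e)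
      (fun j => (x.2.2 j : ℕ)))).subset ?_
  rintro _ ⟨q, p, f, hq, hp, -, hf, rfl⟩
  exact ⟨⟨⟨q, by omega⟩, ⟨p, by omega⟩, fun j => ⟨f j, hf j⟩⟩, rfl⟩

/-- The translation `F ↦ F`, `G ↦ G + H F`, where `H = ∑ h_i X^i`. This is the intended map only if
`d + m ≤ e`; otherwise the coefficients of `H F` beyond `e` are dropped. -/
def tau (k : Type) [Field k] (d e m : ℕ) (h : Fin (m + 1) → k) : Rg k d e →ₐ[k] Rg k d e :=
  ev (genF k d e) (genG k d e + (pol h).map (algebraMap k _) * genF k d e)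

lemma tau_F (m : ℕ) (h : Fin (m + 1) → k) :
    (genF k d e).map (tau k d e m h).toRingHom = genF k d e :=
  map_ev_genF (natDegree_genF _ _ _)

lemma tau_G {m : ℕ} (hm : d + m ≤ e) (h : Fin (m + 1) → k) :
    (genG k d e).map (tau k d e m h).toRingHom =
      genG k d e + (pol h).map (algebraMap k _) * genF k d e := by
  refine map_ev_genG (natDegree_add_le_of_degree_le (natDegree_genG _ _ _) ?_)
  refine natDegree_mul_le.trans ?_
  have h1 := natDegree_genF k d e
  have h2 := natDegree_map_le (f := algebraMap k (Rg k d e)) (p := pol h)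
  have h3 := natDegree_pol h
  omega

/-- The algebra of invariants of all translations. -/
def inv (k : Type) [Field k] (d e m : ℕ) : Subalgebra k (Rg k d e) :=
  ⨅ h : Fin (m + 1) → k, AlgHom.equalizer (tau k d e m h) (AlgHom.id k _)

lemma mem_inv {m : ℕ} {P : Rg k d e} : P ∈ inv k d e m ↔ ∀ h, tau k d e m h P = P := by
  simp [inv, Algebra.mem_iInf, AlgHom.mem_equalizer]

lemma gens_subset_inv {m : ℕ} (hm : d + m ≤ e) : gens k d e m ⊆ inv k d e m := by
  rintro _ ⟨q, p, f, hq, hp, hqp, hf, rfl⟩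
  rw [SetLike.mem_coe, mem_inv]
  intro h
  have := minor_map (tau k d e m h).toRingHom (genF k d e) (genG k d e) f
  rw [tau_F, tau_G hm, minor_add_mul _ _ _ hqp
    (natDegree_map_le.trans (natDegree_pol h))] at this
  exact this

lemma Res_mem_gens {m : ℕ} (hm : d + m ≤ e) : Res k d e ∈ gens k d e m :=
  ⟨d, e, fun j => (finSumFinEquiv j : ℕ), le_rfl, le_rfl, Or.inr hm, fun j => (finSumFinEquiv j).2,
    resultant_eq_minor _ _ (natDegree_genF _ _ _) (natDegree_genG _ _ _)⟩

lemma Res_isHomogeneous : (Res k d e).IsHomogeneous (d + e) := by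
  rw [Res, resultant_eq_minor _ _ (natDegree_genF _ _ _) (natDegree_genG _ _ _)]
  exact minor_isHomogeneous _

lemma Res_ne_zero : Res k d e ≠ 0 := by
  intro h
  have h2 := congrArg (ev (d := d) (e := e) (1 : k[X]) (X ^ e)) h
  rw [map_Res (by simp) (by simp)] at h2
  simp at h2

/-! ### Gradings -/

lemma coeff_X_mul_ite {A : Type} [CommRing A] (p : A[X]) (n : ℕ) :
    (X * p).coeff n = if 1 ≤ n then p.coeff (n - 1) else 0 := by
  rw [← coeff_X_pow_mul', pow_one]

section grading
variable {σ τ : Type}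

lemma hc_of_hom {p : MvPolynomial σ k} {m : ℕ} (h : p.IsHomogeneous m) (n : ℕ) :
    MvPolynomial.homogeneousComponent n p = if n = m then p else 0 :=
  MvPolynomial.homogeneousComponent_of_mem h

lemma hc_monomial (s : σ →₀ ℕ) (a : k) (n : ℕ) :
    MvPolynomial.homogeneousComponent n (MvPolynomial.monomial s a) =
      if n = s.degree then MvPolynomial.monomial s a else 0 :=
  hc_of_hom (MvPolynomial.isHomogeneous_monomial a rfl) n

lemma hc_mul (x y : MvPolynomial σ k) (n : ℕ) :
    MvPolynomial.homogeneousComponent n (x * y) = ∑ ij ∈ Finset.HasAntidiagonal.antidiagonal n,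
      MvPolynomial.homogeneousComponent ij.1 x * MvPolynomial.homogeneousComponent ij.2 y := by
  induction x using MvPolynomial.induction_on' with
  | add p q hp hq => simp only [add_mul, map_add, hp, hq, Finset.sum_add_distrib]
  | monomial s a =>
    induction y using MvPolynomial.induction_on' with
    | add p q hp hq => simp only [mul_add, map_add, hp, hq, Finset.sum_add_distrib]
    | monomial t b =>
      rw [MvPolynomial.monomial_mul]
      simp only [hc_monomial, map_add]
      by_cases h : n = s.degree + t.degree
      · rw [if_pos h, Finset.sum_eq_single (s.degree, t.degree)]
        · simp [MvPolynomial.monomial_mul]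
        · rintro ⟨i, j⟩ - hne
          by_cases h1 : i = s.degree
          · have : j ≠ t.degree := fun h2 => hne (by simp [h1, h2])
            simp [this]
          · simp [h1]
        · intro h1
          exact absurd (Finset.HasAntidiagonal.mem_antidiagonal.mpr h.symm) h1
      · rw [if_neg h, Finset.sum_eq_zero]
        rintro ⟨i, j⟩ hij
        rw [Finset.HasAntidiagonal.mem_antidiagonal] at hij
        by_cases h1 : i = s.degree
        · have : j ≠ t.degree := fun h2 => h (by rw [← hij, h1, h2])
          simp [this]
        · simp [h1]

lemma hc_mul_right {x s : MvPolynomial σ k} {b : ℕ} (hs : s.IsHomogeneous b) (n : ℕ) :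
    MvPolynomial.homogeneousComponent n (x * s) =
      if b ≤ n then MvPolynomial.homogeneousComponent (n - b) x * s else 0 := by
  rw [hc_mul]
  split_ifs with h
  · rw [Finset.sum_eq_single (n - b, b)]
    · simp [MvPolynomial.homogeneousComponent_eq_self hs]
    · rintro ⟨i, j⟩ hij hne
      rw [Finset.HasAntidiagonal.mem_antidiagonal] at hij
      have hj : j ≠ b := by rintro rfl; exact hne (by simp [← hij])
      rw [hc_of_hom hs, if_neg hj, mul_zero]
    · intro h1
      exact absurd (Finset.HasAntidiagonal.mem_antidiagonal.mpr (Nat.sub_add_cancel h)) h1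
  · refine Finset.sum_eq_zero ?_
    rintro ⟨i, j⟩ hij
    rw [Finset.HasAntidiagonal.mem_antidiagonal] at hij
    rw [hc_of_hom hs, if_neg (by simp at hij ⊢; omega),
      mul_zero]

/-- A homomorphism that maps variables to linear forms commutes with homogeneous components. -/
lemma hc_map (φ : MvPolynomial σ k →ₐ[k] MvPolynomial τ k)
    (hφ : ∀ i, (φ (MvPolynomial.X i)).IsHomogeneous 1) (P : MvPolynomial σ k) (n : ℕ) :
    MvPolynomial.homogeneousComponent n (φ P) = φ (MvPolynomial.homogeneousComponent n P) := by
  have hom : ∀ (Q : MvPolynomial σ k) (i : ℕ), Q.IsHomogeneous i → (φ Q).IsHomogeneous i := by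
    intro Q i hQ
    have := hQ.aeval (fun i => φ (MvPolynomial.X i)) hφ
    rw [one_mul] at this
    have h2 := MvPolynomial.aeval_unique φ
    rw [h2]; exact this
  conv_lhs => rw [← MvPolynomial.sum_homogeneousComponent P, map_sum, map_sum]
  by_cases hn : n ∈ Finset.range (P.totalDegree + 1)
  · rw [Finset.sum_eq_single n]
    · exact MvPolynomial.homogeneousComponent_eq_self
        (hom _ _ (MvPolynomial.homogeneousComponent_isHomogeneous n P))
    · intro b _ hb
      rw [hc_of_hom (hom _ _ (MvPolynomial.homogeneousComponent_isHomogeneous b P)),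
        if_neg (Ne.symm hb)]
    · intro h; exact absurd hn h
  · rw [MvPolynomial.homogeneousComponent_eq_zero n P
      (by rw [Finset.mem_range] at hn; omega), map_zero, Finset.sum_eq_zero]
    intro b hb
    rw [hc_of_hom (hom _ _ (MvPolynomial.homogeneousComponent_isHomogeneous b P)), if_neg]
    rintro rfl; exact hn hb

lemma hc_mem_adjoin {T : Set (MvPolynomial σ k)} (hT : ∀ x ∈ T, ∃ r, x.IsHomogeneous r)
    {x : MvPolynomial σ k} (hx : x ∈ Algebra.adjoin k T) (n : ℕ) :
    MvPolynomial.homogeneousComponent n x ∈ Algebra.adjoin k T := by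
  induction hx using Algebra.adjoin_induction generalizing n with
  | mem x hx =>
    obtain ⟨r, hr⟩ := hT x hx
    rw [hc_of_hom hr]
    split_ifs
    exacts [Algebra.subset_adjoin hx, zero_mem _]
  | algebraMap c =>
    rw [MvPolynomial.algebraMap_eq, hc_of_hom (MvPolynomial.isHomogeneous_C _ c)]
    split_ifs
    exacts [Subalgebra.algebraMap_mem _ c, zero_mem _]
  | add x y _ _ hx hy => rw [map_add]; exact add_mem (hx n) (hy n)
  | mul x y _ _ hx hy =>
    rw [hc_mul]
    exact sum_mem fun ij _ => mul_mem (hx _) (hy _)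

/-- All coefficients of `p` are homogeneous of degree `n`, and `p` has degree at most `n`. -/
def Gr (n : ℕ) (p : (MvPolynomial σ k)[X]) : Prop :=
  ∀ i, (p.coeff i).IsHomogeneous n ∧ (n < i → p.coeff i = 0)

lemma Gr_mul {m n : ℕ} {p q : (MvPolynomial σ k)[X]} (hp : Gr m p) (hq : Gr n q) :
    Gr (m + n) (p * q) := by
  intro i
  rw [coeff_mul]
  refine ⟨MvPolynomial.IsHomogeneous.sum _ _ _ fun ij _ => (hp _).1.mul (hq _).1, fun h => ?_⟩
  refine Finset.sum_eq_zero fun ij hij => ?_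
  rw [Finset.HasAntidiagonal.mem_antidiagonal] at hij
  by_cases h1 : m < ij.1
  · rw [(hp _).2 h1, zero_mul]
  · rw [(hq _).2 (by omega), mul_zero]

lemma Gr_C (c : k) : Gr 0 (C (MvPolynomial.C c) : (MvPolynomial σ k)[X]) := by
  intro i
  rw [coeff_C]
  split_ifs with h
  · exact ⟨MvPolynomial.isHomogeneous_C _ c, fun h' => by omega⟩
  · exact ⟨MvPolynomial.isHomogeneous_zero _ _ _, fun _ => rfl⟩

lemma Gr_sum {ι : Type} {n : ℕ} (s : Finset ι) (f : ι → (MvPolynomial σ k)[X])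
    (h : ∀ i ∈ s, Gr n (f i)) : Gr n (∑ i ∈ s, f i) := by
  intro i
  rw [finsetSum_coeff]
  exact ⟨MvPolynomial.IsHomogeneous.sum _ _ _ fun j hj => (h j hj i).1,
    fun hi => Finset.sum_eq_zero fun j hj => (h j hj i).2 hi⟩

lemma Gr_pow {n : ℕ} {p : (MvPolynomial σ k)[X]} (hp : Gr n p) (m : ℕ) : Gr (m * n) (p ^ m) := by
  induction m with
  | zero => simpa using Gr_C (1 : k)
  | succ m ih => rw [pow_succ, add_mul, one_mul]; exact Gr_mul ih hp

lemma Gr_prod {ι : Type} (s : Finset ι) (n : ι → ℕ) (f : ι → (MvPolynomial σ k)[X])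
    (h : ∀ i ∈ s, Gr (n i) (f i)) : Gr (∑ i ∈ s, n i) (∏ i ∈ s, f i) := by
  classical
  induction s using Finset.induction_on with
  | empty => simpa using Gr_C (1 : k)
  | insert a s ha ih =>
    rw [Finset.sum_insert ha, Finset.prod_insert ha]
    exact Gr_mul (h _ (Finset.mem_insert_self _ _))
      (ih fun i hi => h i (Finset.mem_insert_of_mem hi))

lemma Gr_map (φ : MvPolynomial τ k →ₐ[k] (MvPolynomial σ k)[X])
    (hφ : ∀ i, Gr 1 (φ (MvPolynomial.X i))) {P : MvPolynomial τ k} {n : ℕ}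
    (hP : P.IsHomogeneous n) : Gr n (φ P) := by
  rw [P.as_sum, map_sum]
  refine Gr_sum _ _ fun s hs => ?_
  have hn := hP.degree_eq_sum_deg_support hs
  rw [MvPolynomial.monomial_eq, map_mul, Finsupp.prod, map_prod, ← zero_add n, hn]
  refine Gr_mul ?_ ?_
  · have := φ.commutes (P.coeff s)
    rw [MvPolynomial.algebraMap_eq] at this
    rw [this]
    exact Gr_C _
  · refine Gr_prod _ _ _ fun i _ => ?_
    rw [map_pow]
    have := Gr_pow (hφ i) (s i)
    rwa [mul_one] at this

end grading

lemma coeff_genF_hom (n : ℕ) : ((genF k d e).coeff n).IsHomogeneous 1 := by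
  simpa [rows] using rows_gen_isHomogeneous (k := k) (d := d) (e := e) (q := 0) (p := 1)
    (Sum.inr 0) n

lemma coeff_genG_hom (n : ℕ) : ((genG k d e).coeff n).IsHomogeneous 1 := by
  simpa [rows] using rows_gen_isHomogeneous (k := k) (d := d) (e := e) (q := 1) (p := 0)
    (Sum.inl 0) n

/-- `Θ` maps the variables to polynomials of degree at most one in `ξ` whose coefficients are linear
forms; hence it maps forms of degree `n` to polynomials of degree at most `n` in `ξ` whose
coefficients are forms of degree `n`. -/
lemma Theta_Gr {P : Rg k (d + 1) (e + 1)} {n : ℕ} (hP : P.IsHomogeneous n) :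
    Gr n (Theta k d e P) := by
  have key : ∀ (Q : (Rg k d e)[X]) (i : ℕ), (∀ n, (Q.coeff n).IsHomogeneous 1) →
      Gr 1 (((X - C X) * Q.map C : (Rg k d e)[X][X]).coeff i) := by
    intro Q i hQ j
    have hz := MvPolynomial.isHomogeneous_zero (Fin (d + 1) ⊕ Fin (e + 1)) k 1
    have hc : ∀ j n, ((C (Q.coeff n) : (Rg k d e)[X]).coeff j).IsHomogeneous 1 := by
      intro j n
      rw [coeff_C]; split_ifs
      exacts [hQ _, hz]
    have hs : ((X - C X) * Q.map C : (Rg k d e)[X][X]) = X * Q.map C - C X * Q.map C := by ring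
    rw [hs, coeff_sub, coeff_C_mul, coeff_map, coeff_sub, coeff_X_mul_ite]
    constructor
    · apply MvPolynomial.IsHomogeneous.sub
      · split_ifs
        · rw [coeff_map]; exact hc _ _
        · rw [coeff_zero]; exact hz
      · rw [coeff_X_mul_ite]
        split_ifs
        exacts [hc _ _, hz]
    · intro hj
      have h1 : j ≠ 0 := by omega
      have h2 : j - 1 ≠ 0 := by omega
      have h3 : 1 ≠ j := by omega
      split_ifs <;> simp [coeff_C, coeff_X, h1, h3]
  refine Gr_map _ ?_ hP
  rintro (i | j)
  · have : Theta k d e (MvPolynomial.X (Sum.inl i)) =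
      ((X - C X) * (genF k d e).map C : (Rg k d e)[X][X]).coeff i := by simp [Theta, ev]
    rw [this]
    exact key _ _ coeff_genF_hom
  · have : Theta k d e (MvPolynomial.X (Sum.inr j)) =
      ((X - C X) * (genG k d e).map C : (Rg k d e)[X][X]).coeff j := by simp [Theta, ev]
    rw [this]
    exact key _ _ coeff_genG_hom

lemma tau_hom {m : ℕ} (h : Fin (m + 1) → k) (i) :
    (tau k d e m h (MvPolynomial.X i)).IsHomogeneous 1 := by
  rcases i with i | j
  · simp only [tau, ev, MvPolynomial.aeval_X, Sum.elim_inl]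
    exact coeff_genF_hom _
  · simp only [tau, ev, MvPolynomial.aeval_X, Sum.elim_inr, coeff_add, coeff_mul, coeff_map]
    refine (coeff_genG_hom _).add (MvPolynomial.IsHomogeneous.sum _ _ _ fun ij _ => ?_)
    rw [MvPolynomial.algebraMap_eq]
    exact (coeff_genF_hom _).C_mul _

lemma hc_mem_inv {m : ℕ} {P : Rg k d e} (hP : P ∈ inv k d e m) (n : ℕ) :
    MvPolynomial.homogeneousComponent n P ∈ inv k d e m := by
  rw [mem_inv] at hP ⊢
  intro h
  rw [← hc_map _ (tau_hom h), hP h]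

/-- `Θ` is equivariant for the translations, acting on the coefficients of polynomials in `ξ`:
multiplication by `X - ξ` commutes with `G ↦ G + H F`. -/
lemma coeff_Theta_mem_inv {m : ℕ} (hm : d + m ≤ e) {P : Rg k (d + 1) (e + 1)}
    (hP : P ∈ inv k (d + 1) (e + 1) m) (i : ℕ) : (Theta k d e P).coeff i ∈ inv k d e m := by
  rw [mem_inv] at hP ⊢
  intro h
  have key : (Polynomial.mapAlgHom (tau k d e m h)).comp (Theta k d e) =
      (Theta k d e).comp (tau k (d + 1) (e + 1) m h) := by
    have hC : (Polynomial.mapAlgHom (tau k d e m h)).toRingHom.comp C =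
        (C : _ →+* _).comp (tau k d e m h).toRingHom := by
      ext <;> simp
    have hX : (Polynomial.mapAlgHom (tau k d e m h)).toRingHom X = X := by simp
    have hF1 := congrArg (Polynomial.map (Polynomial.mapAlgHom (tau k d e m h)).toRingHom)
      (Theta_F (k := k) (d := d) (e := e))
    have hG1 := congrArg (Polynomial.map (Polynomial.mapAlgHom (tau k d e m h)).toRingHom)
      (Theta_G (k := k) (d := d) (e := e))
    rw [Polynomial.map_mul, Polynomial.map_sub, Polynomial.map_X, Polynomial.map_C, hX,
      Polynomial.map_map, Polynomial.map_map, hC,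
      ← Polynomial.map_map (tau k d e m h).toRingHom C] at hF1 hG1
    rw [tau_F] at hF1
    rw [tau_G hm] at hG1
    have hF2 := congrArg (Polynomial.map (Theta k d e).toRingHom)
      (tau_F (k := k) (d := d + 1) (e := e + 1) m h)
    have hG2 := congrArg (Polynomial.map (Theta k d e).toRingHom)
      (tau_G (k := k) (d := d + 1) (e := e + 1) (m := m) (by omega) h)
    rw [Polynomial.map_map, Theta_F] at hF2
    rw [Polynomial.map_map, Polynomial.map_add, Polynomial.map_mul, Theta_F, Theta_G,
      Polynomial.map_map] at hG2
    apply Rg_hom_ext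
    · exact hF1.trans hF2.symm
    · refine hG1.trans (Eq.trans ?_ hG2.symm)
      have h3 : (C : Rg k d e →+* _).comp (algebraMap k (Rg k d e)) =
          (Theta k d e).toRingHom.comp (algebraMap k _) := by
        ext r
        have := (Theta k d e).commutes r
        simp [Polynomial.algebraMap_apply]
      rw [Polynomial.map_add, Polynomial.map_mul, Polynomial.map_map, h3]
      ring
  have := congrArg (fun f => (f P).coeff i) key
  simpa [hP h] using this

/-! ### Integrality of the minors over the image of the common-root specialisation -/

section columns
variable {I A : Type} [CommRing A] [Algebra k A]

/-- Multilinear expansion of a determinant whose rows, scaled by the `a j`, are combinations of the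
rows `y l` with coefficients polynomial in `ξ`. -/
lemma det_expand [Fintype I] [DecidableEq I] (x : I → I → A) (ξ : A) {L : ℕ} (y : Fin L → I → A)
    (c : I → Fin L → k[X]) (a : I → A) (h : ∀ j, a j • x j = ∑ l, (aeval ξ (c j l)) • y l) :
    (∏ j, a j) * (Matrix.of x).det =
      ∑ g : I → Fin L, aeval ξ (∏ j, c j (g j)) * (Matrix.of fun j => y (g j)).det := by
  have h1 := (Matrix.detRowAlternating (R := A) (n := I)).toMultilinearMap.map_smul_univ a x
  have h2 := (Matrix.detRowAlternating (R := A) (n := I)).toMultilinearMap.map_sum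
    (fun j l => (aeval ξ (c j l)) • y l)
  rw [show (fun j => a j • x j) = fun j => ∑ l, (aeval ξ (c j l)) • y l from funext h, h2] at h1
  rw [← smul_eq_mul]
  refine h1.symm.trans (Finset.sum_congr rfl fun g _ => ?_)
  have h3 := (Matrix.detRowAlternating (R := A) (n := I)).toMultilinearMap.map_smul_univ
    (fun j => aeval ξ (c j (g j))) (fun j => y (g j))
  rw [h3, smul_eq_mul, map_prod]
  rfl

/-- Solving `y_(n+1) = x_n - ξ x_(n+1)` from above:
`x_n = ∑_{l > n} ξ^(l-n-1) y_l`, since `x_n = 0` for large `n`. -/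
lemma col_high (x y : ℕ → I → A) (ξ : A) (N : ℕ) (hx : ∀ n, N ≤ n → x n = 0)
    (hy : ∀ n, y (n + 1) = x n - ξ • x (n + 1)) (n : ℕ) (hn : n < N) :
    x n = ∑ l : Fin (N + 1), (aeval ξ (if n < l then X ^ ((l : ℕ) - n - 1) else 0 : k[X])) • y l
    := by
  rw [← Finset.sum_range (fun l => (aeval ξ (if n < l then X ^ (l - n - 1) else 0 : k[X])) • y l)]
  have key : ∀ M, ∑ l ∈ Finset.range (n + 1 + M),
      (aeval ξ (if n < l then X ^ (l - n - 1) else 0 : k[X])) • y l =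
      x n - ξ ^ M • x (n + M) := by
    intro M
    induction M with
    | zero =>
      rw [Finset.sum_eq_zero]
      · simp
      · intro l hl
        rw [Finset.mem_range] at hl
        rw [if_neg (by omega), map_zero, zero_smul]
    | succ M ih =>
      rw [← add_assoc, Finset.sum_range_succ, ih, if_pos (by omega),
        show n + 1 + M = (n + M) + 1 by ring, hy, show n + M + 1 - n - 1 = M by omega,
        show n + (M + 1) = n + M + 1 by ring, map_pow, aeval_X, smul_sub, smul_smul, pow_succ]
      abel
  have := key (N - n)
  rw [show n + 1 + (N - n) = N + 1 by omega, hx (n + (N - n)) (by omega), smul_zero,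
    sub_zero] at this
  exact this.symm

/-- Solving `y_(n+1) = x_n - ξ x_(n+1)` from below:
`ξ^(n+1) x_n = -∑_{l ≤ n} ξ^l y_l`, since `y_0 = -ξ x_0`. -/
lemma col_low (x y : ℕ → I → A) (ξ : A) (N : ℕ) (hy0 : y 0 = - (ξ • x 0))
    (hy : ∀ n, y (n + 1) = x n - ξ • x (n + 1)) (n : ℕ) (hn : n < N) :
    ξ ^ (n + 1) • x n =
      ∑ l : Fin (N + 1), (aeval ξ (if l ≤ n then - X ^ (l : ℕ) else 0 : k[X])) • y l := by
  rw [← Finset.sum_range (fun l => (aeval ξ (if l ≤ n then - X ^ l else 0 : k[X])) • y l)]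
  have h1 : ∑ l ∈ Finset.range (N + 1), (aeval ξ (if l ≤ n then - X ^ l else 0 : k[X])) • y l
      = ∑ l ∈ Finset.range (n + 1), - (ξ ^ l • y l) := by
    rw [← Finset.sum_subset (Finset.range_subset_range.mpr (show n + 1 ≤ N + 1 by omega))]
    · refine Finset.sum_congr rfl fun l hl => ?_
      rw [Finset.mem_range] at hl
      rw [if_pos (by omega)]
      simp
    · intro l _ hl
      rw [Finset.mem_range] at hl
      rw [if_neg (by omega), map_zero, zero_smul]
  rw [h1]
  clear h1 hn
  induction n with
  | zero => simp [hy0]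
  | succ n ih =>
    rw [Finset.sum_range_succ, ← ih, hy, smul_sub, smul_smul, ← pow_succ]
    abel

end columns

section integrality
variable {A : Type} [CommRing A] [Algebra k A] [Algebra A (Rg k d e)[X]]
  [IsScalarTower k A (Rg k d e)[X]]

/-- The `A`-submodule spanned by `1, ξ, …, ξ^K`. -/
def pows (A : Type) [CommRing A] [Algebra A (Rg k d e)[X]] (K : ℕ) :
    Submodule A (Rg k d e)[X] :=
  Submodule.span A (Set.range fun i : Fin (K + 1) => (X : (Rg k d e)[X]) ^ (i : ℕ))

lemma mem_pows {K : ℕ} {c : k[X]} (hc : c.natDegree ≤ K) {z : (Rg k d e)[X]}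
    (hz : z ∈ Set.range (algebraMap A (Rg k d e)[X])) : aeval (X : (Rg k d e)[X]) c * z ∈
      pows A K := by
  obtain ⟨a, rfl⟩ := hz
  rw [mul_comm, ← Algebra.smul_def]
  refine Submodule.smul_mem _ _ ?_
  rw [aeval_eq_sum_range' (Nat.lt_succ_iff.mpr hc)]
  refine Submodule.sum_mem _ fun i hi => ?_
  rw [← algebraMap_smul A]
  refine Submodule.smul_mem _ _ (Submodule.subset_span ?_)
  exact ⟨⟨i, Finset.mem_range.mp hi⟩, rfl⟩

/-- For a minor `ω` of size `q + p` and `j ≤ q + p`, the element `ξ^j ω` is integral over `A` if the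
image of `A` contains the images under `Θ` of all minors for `(d + 1, e + 1)`: multiplication by
`ξ^j ω` preserves the span of `1, ξ, …, ξ^K` with `K = (q + p)(d + e)`. -/
lemma isIntegral_pow_mul (m : ℕ)
    (hA : ∀ ω ∈ gens k (d + 1) (e + 1) m, Theta k d e ω ∈ Set.range (algebraMap A (Rg k d e)[X]))
    {q p : ℕ} (f : Fin q ⊕ Fin p → ℕ) (hq : q ≤ d) (hp : p ≤ e) (hqp : q = 0 ∨ q + m ≤ p)
    (hf : ∀ j, f j < d + e) (j : ℕ) (hj : j ≤ q + p) :
    IsIntegral A (X ^ j * C (minor (genF k d e) (genG k d e) f) : (Rg k d e)[X]) := by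
  set N := d + e
  set K := (q + p) * N
  let x : ℕ → Fin q ⊕ Fin p → (Rg k d e)[X] := fun n i =>
    ((rows (genF k d e) (genG k d e) q p i).map C).coeff n
  let y : ℕ → Fin q ⊕ Fin p → (Rg k d e)[X] := fun n i =>
    ((X - C X) * (rows (genF k d e) (genG k d e) q p i).map C).coeff n
  have hx : ∀ n, N ≤ n → x n = 0 := by
    intro n hn
    funext i
    simp only [x, coeff_map, Pi.zero_apply]
    rw [coeff_eq_zero_of_natDegree_lt, map_zero]
    have hF := natDegree_genF k d e
    have hG := natDegree_genG k d e
    rcases i with i | i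
    · have h1 := natDegree_mul_le (p := X ^ (i : ℕ)) (q := genG k d e)
      have h2 := natDegree_X_pow_le (R := Rg k d e) (i : ℕ)
      simp only [rows, Sum.elim_inl]
      omega
    · have h1 := natDegree_mul_le (p := X ^ (i : ℕ)) (q := genF k d e)
      have h2 := natDegree_X_pow_le (R := Rg k d e) (i : ℕ)
      simp only [rows, Sum.elim_inr]
      omega
  have hy : ∀ n, y (n + 1) = x n - (X : (Rg k d e)[X]) • x (n + 1) := by
    intro n
    funext i
    simp only [x, y, Pi.sub_apply, Pi.smul_apply, smul_eq_mul]
    rw [sub_mul, coeff_sub, coeff_X_mul, coeff_C_mul]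
  have hy0 : y 0 = - ((X : (Rg k d e)[X]) • x 0) := by
    funext i
    simp only [x, y, Pi.neg_apply, Pi.smul_apply, smul_eq_mul]
    rw [sub_mul, coeff_sub, coeff_C_mul, mul_coeff_zero, coeff_X_zero, zero_mul, zero_sub]
  have hω : C (minor (genF k d e) (genG k d e) f) = (Matrix.of fun j => x (f j)).det := by
    rw [minor_map C, minor]
    congr 1
    ext1 j i
    simp only [x, Matrix.of_apply, rows_map]
  have hΘ : ∀ g : Fin q ⊕ Fin p → Fin (N + 1), (Matrix.of fun j => y (g j)).det ∈
      Set.range (algebraMap A (Rg k d e)[X]) := by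
    intro g
    have h1 := hA (minor (genF k (d + 1) (e + 1)) (genG k (d + 1) (e + 1)) fun j => (g j : ℕ))
      ⟨q, p, _, by omega, by omega, hqp, fun j => by have := (g j).2; omega, rfl⟩
    have h2 := minor_map (Theta k d e).toRingHom (genF k (d + 1) (e + 1)) (genG k (d + 1) (e + 1))
      fun j => (g j : ℕ)
    rw [Theta_F, Theta_G] at h2
    convert h1 using 1
    refine Eq.trans ?_ h2.symm
    rw [minor]
    congr 1
    ext1 j i
    simp only [y, Matrix.of_apply, rows_map]
    congr 1
    rcases i with i | i <;> simp only [rows, Sum.elim_inl, Sum.elim_inr] <;> ring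
  have hcard : (Finset.univ : Finset (Fin q ⊕ Fin p)).card = q + p := by simp
  refine isIntegral_of_smul_mem_submodule (pows (k := k) (d := d) (e := e) A K) ?_ ?_ _ ?_
  · intro h
    have : (1 : (Rg k d e)[X]) ∈ pows (k := k) (d := d) (e := e) A K := Submodule.subset_span ⟨0, by simp⟩
    rw [h] at this
    exact one_ne_zero ((Submodule.mem_bot A).mp this)
  · exact Submodule.fg_span (Set.finite_range _)
  · intro z hz
    induction hz using Submodule.span_induction with
    | zero => rw [smul_zero]; exact zero_mem _
    | add u v _ _ hu hv => rw [smul_add]; exact add_mem hu hv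
    | smul a u _ hu => rw [smul_comm]; exact Submodule.smul_mem _ _ hu
    | mem u hu =>
      obtain ⟨⟨i, hi⟩, rfl⟩ := hu
      change X ^ j * C (minor (genF k d e) (genG k d e) f) * X ^ i ∈ _
      rw [mul_right_comm, ← pow_add]
      set s := ∑ j, (f j + 1) with hs
      have hsK : s ≤ K := by
        rw [hs]
        refine (Finset.sum_le_card_nsmul _ _ N fun j _ => hf j).trans ?_
        rw [hcard, smul_eq_mul]
      -- With `ω` expanded from above the coefficients have degree at most `K - s` in `ξ`, which
      -- suffices for `j + i ≤ s`; expanding `ξ^s ω` from below costs degree `s - (q + p)`, which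
      -- suffices for `j + i ≥ s` because `j ≤ q + p` and `i ≤ K`.
      by_cases hij : j + i < s
      · have h1 := det_expand (k := k) (fun j => x (f j)) X (fun l : Fin (N + 1) => y l)
          (fun j l => if f j < l then X ^ ((l : ℕ) - f j - 1) else 0) 1
          (fun j => by
            rw [Pi.one_apply, one_smul]
            exact col_high x y X N hx hy (f j) (hf j))
        simp only [Pi.one_apply, Finset.prod_const_one, one_mul] at h1
        rw [hω, h1, Finset.mul_sum]
        refine Submodule.sum_mem _ fun g _ => ?_
        rw [← mul_assoc, ← aeval_X_pow (R := k), ← map_mul]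
        refine mem_pows ?_ (hΘ g)
        refine natDegree_mul_le.trans ?_
        have h2 : (∏ j, if f j < (g j : ℕ) then (X : k[X]) ^ ((g j : ℕ) - f j - 1)
            else 0).natDegree ≤ ∑ j, (N - (f j + 1)) := by
          refine (natDegree_prod_le _ _).trans (Finset.sum_le_sum fun j _ => ?_)
          split_ifs
          · rw [natDegree_X_pow]
            have := (g j).2
            omega
          · simp
        have h3 : ∑ j, (N - (f j + 1)) + s = K := by
          rw [hs, ← Finset.sum_add_distrib, Finset.sum_congr rfl fun j _ =>
            Nat.sub_add_cancel (hf j), Finset.sum_const, hcard, smul_eq_mul]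
        rw [natDegree_X_pow]
        omega
      · have h1 := det_expand (k := k) (fun j => x (f j)) X (fun l : Fin (N + 1) => y l)
          (fun j l => if (l : ℕ) ≤ f j then - X ^ (l : ℕ) else 0) (fun j => X ^ (f j + 1))
          (fun j => col_low x y X N hy0 hy (f j) (hf j))
        rw [Finset.prod_pow_eq_pow_sum] at h1
        rw [show j + i = (j + i - s) + s by omega, pow_add, mul_assoc, hω, h1, Finset.mul_sum]
        refine Submodule.sum_mem _ fun g _ => ?_
        rw [← mul_assoc, ← aeval_X_pow (R := k), ← map_mul]
        refine mem_pows ?_ (hΘ g)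
        refine natDegree_mul_le.trans ?_
        have h2 : (∏ j, if (g j : ℕ) ≤ f j then - (X : k[X]) ^ (g j : ℕ)
            else 0).natDegree ≤ ∑ j, f j := by
          refine (natDegree_prod_le _ _).trans (Finset.sum_le_sum fun j _ => ?_)
          split_ifs
          · rw [natDegree_neg, natDegree_X_pow]
            assumption
          · simp
        have h3 : s = ∑ j, f j + (q + p) := by
          rw [hs, Finset.sum_add_distrib]
          simp
        rw [natDegree_X_pow]
        omega

end integrality

/-! ### The finite module containing the image of the invariants -/

section bigmodule
variable {σ : Type}

lemma hc_mem_span {T E : Set (MvPolynomial σ k)} (hT : ∀ x ∈ T, ∃ r, x.IsHomogeneous r)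
    (hE : ∀ x ∈ E, ∃ r, x.IsHomogeneous r) {x : MvPolynomial σ k}
    (hx : x ∈ Submodule.span (Algebra.adjoin k T) E) (n : ℕ) :
    MvPolynomial.homogeneousComponent n x ∈ Submodule.span (Algebra.adjoin k T) E := by
  induction hx using Submodule.span_induction generalizing n with
  | mem x hx =>
    obtain ⟨r, hr⟩ := hE x hx
    rw [hc_of_hom hr]
    split_ifs
    exacts [Submodule.subset_span hx, zero_mem _]
  | zero => rw [map_zero]; exact zero_mem _
  | add x y _ _ hx hy => rw [map_add]; exact add_mem (hx n) (hy n)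
  | smul a x _ hx =>
    rw [Subalgebra.smul_def, smul_eq_mul, hc_mul]
    refine sum_mem fun ij _ => ?_
    exact Submodule.smul_mem _ (⟨_, hc_mem_adjoin hT a.2 ij.1⟩ : Algebra.adjoin k T) (hx ij.2)

variable {A : Type} [CommRing A] [Algebra k A] [Algebra A (MvPolynomial σ k)[X]]
  [IsScalarTower k A (MvPolynomial σ k)[X]]

/-- Let `M` be the module spanned by a finite set `E` of forms over the algebra generated by a finite
set `T` of forms. If `X^j x` is integral over `A` for all `x ∈ T` and `j ≤ deg x`, then all `X^i z`
with `z ∈ M` homogeneous and `i ≤ deg z` lie in one finite `A`-module: the span of the `X^i x`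
with `x ∈ E` and `i ≤ deg x` over the finite `A`-algebra generated by the `X^j x` with `x ∈ T` and
`j ≤ deg x`. -/
lemma exists_bigmodule {T E : Set (MvPolynomial σ k)} (hTf : T.Finite) (hEf : E.Finite)
    (hT : ∀ x ∈ T, ∃ r, x.IsHomogeneous r ∧
      ∀ j ≤ r, IsIntegral A (X ^ j * C x : (MvPolynomial σ k)[X]))
    (hE : ∀ x ∈ E, ∃ r, x.IsHomogeneous r) :
    ∃ N : Submodule A (MvPolynomial σ k)[X], N.FG ∧
      ∀ z ∈ Submodule.span (Algebra.adjoin k T) E, ∀ n i, i ≤ n →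
        X ^ i * C (MvPolynomial.homogeneousComponent n z) ∈ N := by
  choose! r hr hint using hT
  choose! b hb using hE
  set W : Set (MvPolynomial σ k)[X] := ⋃ x ∈ T, ⋃ j ∈ Set.Iic (r x), {X ^ j * C x} with hW
  set V : Set (MvPolynomial σ k)[X] := ⋃ x ∈ E, ⋃ j ∈ Set.Iic (b x), {X ^ j * C x} with hV
  have hWf : W.Finite := hTf.biUnion fun x _ => (Set.finite_Iic _).biUnion fun j _ =>
    Set.finite_singleton _
  have hVf : V.Finite := hEf.biUnion fun x _ => (Set.finite_Iic _).biUnion fun j _ =>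
    Set.finite_singleton _
  have hWm : ∀ x ∈ T, ∀ j ≤ r x, X ^ j * C x ∈ W := fun x hx j hj => by
    simp only [hW, Set.mem_iUnion]
    exact ⟨x, hx, j, hj, rfl⟩
  have hVm : ∀ x ∈ E, ∀ j ≤ b x, X ^ j * C x ∈ V := fun x hx j hj => by
    simp only [hV, Set.mem_iUnion]
    exact ⟨x, hx, j, hj, rfl⟩
  set B := Algebra.adjoin A W with hB
  have hBfg : (Subalgebra.toSubmodule B).FG := by
    refine fg_adjoin_of_finite hWf fun w hw => ?_
    simp only [hW, Set.mem_iUnion] at hw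
    obtain ⟨x, hx, j, hj, rfl⟩ := hw
    exact hint x hx j hj
  have hk : ∀ (c : k), C (MvPolynomial.C c) ∈ B := by
    intro c
    have := B.algebraMap_mem (algebraMap k A c)
    rwa [← IsScalarTower.algebraMap_apply] at this
  have hα : ∀ α ∈ Algebra.adjoin k T, ∀ n i, i ≤ n →
      X ^ i * C (MvPolynomial.homogeneousComponent n α) ∈ B := by
    intro α hα
    induction hα using Algebra.adjoin_induction with
    | mem x hx =>
      intro n i hi
      rw [hc_of_hom (hr x hx)]
      split_ifs with h
      · exact Algebra.subset_adjoin (hWm x hx i (h ▸ hi))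
      · rw [C_0, mul_zero]; exact zero_mem _
    | algebraMap c =>
      intro n i hi
      rw [MvPolynomial.algebraMap_eq, hc_of_hom (MvPolynomial.isHomogeneous_C _ c)]
      split_ifs with h
      · rw [show i = 0 by omega, pow_zero, one_mul]
        exact hk c
      · rw [C_0, mul_zero]; exact zero_mem _
    | add x y _ _ hx hy =>
      intro n i hi
      rw [map_add, C_add, mul_add]
      exact add_mem (hx n i hi) (hy n i hi)
    | mul x y _ _ hx hy =>
      intro n i hi
      rw [hc_mul, map_sum, Finset.mul_sum]
      refine sum_mem fun ij hij => ?_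
      rw [Finset.HasAntidiagonal.mem_antidiagonal] at hij
      have h1 := mul_mem (hx ij.1 (min i ij.1) (min_le_right _ _))
        (hy ij.2 (i - min i ij.1) (by omega))
      convert h1 using 1
      rw [C_mul, mul_mul_mul_comm, ← pow_add, Nat.add_sub_cancel' (min_le_left _ _)]
  set N := Subalgebra.toSubmodule B * Submodule.span A V with hN
  refine ⟨N, hBfg.mul (Submodule.fg_span hVf), ?_⟩
  have hBN : ∀ b ∈ B, ∀ y ∈ N, b * y ∈ N := by
    intro b hb y hy
    have h1 := Submodule.mul_mem_mul (show b ∈ Subalgebra.toSubmodule B from hb) hy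
    rwa [hN, ← mul_assoc, Subalgebra.mul_toSubmodule, sup_idem] at h1
  intro z hz
  induction hz using Submodule.span_induction with
  | mem x hx =>
    intro n i hi
    rw [hc_of_hom (hb x hx)]
    split_ifs with h
    · rw [← one_mul (X ^ i * C x)]
      exact Submodule.mul_mem_mul (one_mem B) (Submodule.subset_span (hVm x hx i (h ▸ hi)))
    · rw [C_0, mul_zero]; exact zero_mem _
  | zero =>
    intro n i _
    rw [map_zero, C_0, mul_zero]; exact zero_mem _
  | add x y _ _ hx hy =>
    intro n i hi
    rw [map_add, C_add, mul_add]
    exact add_mem (hx n i hi) (hy n i hi)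
  | smul a x _ hx =>
    intro n i hi
    rw [Subalgebra.smul_def, smul_eq_mul, hc_mul, map_sum, Finset.mul_sum]
    refine sum_mem fun ij hij => ?_
    rw [Finset.HasAntidiagonal.mem_antidiagonal] at hij
    have h1 := hBN _ (hα a a.2 ij.1 (min i ij.1) (min_le_right _ _)) _
      (hx ij.2 (i - min i ij.1) (by omega))
    convert h1 using 1
    rw [C_mul, mul_mul_mul_comm, ← pow_add, Nat.add_sub_cancel' (min_le_left _ _)]

end bigmodule

/-! ### The induction -/

/-- The invariants are generated, as a module over the algebra generated by `gens k d e m`, by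
finitely many homogeneous invariants. -/
def FinProp (k : Type) [Field k] (d e m : ℕ) : Prop :=
  ∃ E : Set (Rg k d e), E.Finite ∧ (∀ s ∈ E, ∃ b, s.IsHomogeneous b) ∧ E ⊆ inv k d e m ∧
    ∀ z ∈ inv k d e m, z ∈ Submodule.span (Algebra.adjoin k (gens k d e m)) E

lemma gens_hom {m : ℕ} : ∀ x ∈ gens k d e m, ∃ r, x.IsHomogeneous r := by
  rintro _ ⟨q, p, f, -, -, -, -, rfl⟩
  exact ⟨_, minor_isHomogeneous f⟩

lemma adjoin_gens_le {m : ℕ} (hm : d + m ≤ e) : Algebra.adjoin k (gens k d e m) ≤ inv k d e m :=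
  Algebra.adjoin_le (gens_subset_inv hm)

lemma adjoin_gens_fg {m : ℕ} : (Algebra.adjoin k (gens k d e m)).FG :=
  Subalgebra.fg_def.mpr ⟨_, gens_finite m, rfl⟩

lemma span_subset_inv {m : ℕ} (hm : d + m ≤ e) {E : Set (Rg k d e)} (hE : E ⊆ inv k d e m)
    {z : Rg k d e} (hz : z ∈ Submodule.span (Algebra.adjoin k (gens k d e m)) E) :
    z ∈ inv k d e m := by
  induction hz using Submodule.span_induction with
  | mem x hx => exact hE hx
  | zero => exact zero_mem _
  | add x y _ _ hx hy => exact add_mem hx hy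
  | smul a x _ hx => exact mul_mem (adjoin_gens_le hm a.2) hx

lemma finProp_fg {m : ℕ} (hm : d + m ≤ e) (h : FinProp k d e m) : (inv k d e m).FG := by
  obtain ⟨E, hEf, -, hEi, hE⟩ := h
  refine Subalgebra.fg_def.mpr ⟨gens k d e m ∪ E, (gens_finite m).union hEf, ?_⟩
  apply le_antisymm
  · exact Algebra.adjoin_le (Set.union_subset (gens_subset_inv hm) hEi)
  · intro z hz
    have := hE z hz
    clear hz
    induction this using Submodule.span_induction with
    | mem x hx => exact Algebra.subset_adjoin (Or.inr hx)
    | zero => exact zero_mem _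
    | add x y _ _ hx hy => exact add_mem hx hy
    | smul a x _ hx => exact mul_mem (Algebra.adjoin_mono Set.subset_union_left a.2) hx

/-- For `d = 0` every invariant is a polynomial in `a_0`: at a point with `a_0 ≠ 0`, translating by
`-b_j / a_0` shows that its value does not change when all `b_j` are replaced by `0`. -/
lemma finProp_zero [Infinite k] {m : ℕ} (hm : 1 ≤ m) : FinProp k 0 m m := by
  have ha : ∀ e, (genF k 0 e) = C (MvPolynomial.X (Sum.inl 0)) := by
    intro e; simp [genF, pol]
  refine ⟨{1}, Set.finite_singleton _, ?_, ?_, ?_⟩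
  · rintro _ rfl; exact ⟨0, MvPolynomial.isHomogeneous_one _ _⟩
  · rintro _ rfl; exact one_mem _
  · intro z hz
    rw [mem_inv] at hz
    set v : Fin (0 + 1) ⊕ Fin (m + 1) → Rg k 0 m :=
      Sum.elim (fun i => MvPolynomial.X (Sum.inl i)) (fun _ => 0) with hv
    have hzA : MvPolynomial.aeval v z ∈ Algebra.adjoin k (gens k 0 m m) := by
      have h1 : MvPolynomial.aeval v z ∈ Algebra.adjoin k (Set.range v) := by
        rw [Algebra.adjoin_range_eq_range_aeval]
        exact ⟨z, rfl⟩
      refine Algebra.adjoin_le ?_ h1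
      rintro _ ⟨i | j, rfl⟩
      · refine Algebra.subset_adjoin ⟨0, 1, fun _ => 0, le_rfl, hm, Or.inl rfl,
          fun _ => by show 0 < 0 + m; omega, ?_⟩
        have : Subsingleton (Fin 0 ⊕ Fin 1) := (Equiv.emptySum (Fin 0) (Fin 1)).subsingleton
        rw [minor, Matrix.det_eq_elem_of_subsingleton _ (Sum.inr 0)]
        have : i = 0 := Fin.ext (by omega)
        subst this
        change _ = (X ^ ((0 : Fin 1) : ℕ) * genF k 0 m).coeff 0
        rw [ha]; simp [hv]
      · exact zero_mem _
    -- The factor `a_0` takes care of the points with `a_0 = 0`.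
    have key : MvPolynomial.X (Sum.inl 0) * (z - MvPolynomial.aeval v z) = 0 := by
      apply MvPolynomial.funext
      intro w
      rw [map_mul, MvPolynomial.eval_X, map_zero, map_sub]
      by_cases hw : w (Sum.inl 0) = 0
      · rw [hw, zero_mul]
      · have h1 : (MvPolynomial.aeval w : Rg k 0 m →ₐ[k] k).comp
            (tau k 0 m m fun i => - w (Sum.inr i) / w (Sum.inl 0)) =
            (MvPolynomial.aeval w : Rg k 0 m →ₐ[k] k).comp (MvPolynomial.aeval v) := by
          apply MvPolynomial.algHom_ext
          rintro (i | j)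
          · have : i = 0 := Fin.ext (by omega)
            subst this
            simp [tau, ev, ha, hv]
          · have h2 : (genG k 0 m).coeff j = MvPolynomial.X (Sum.inr j) := coeff_pol _ j
            simp [tau, ev, ha, hv, h2, coeff_pol]
            field_simp
            ring
        have h3 := congrArg (fun f => f z) h1
        simp only [AlgHom.comp_apply, hz] at h3
        rw [MvPolynomial.aeval_eq_eval] at h3
        rw [show MvPolynomial.eval w z = _ from h3]
        simp
    rcases mul_eq_zero.mp key with h | h
    · exact absurd h (MvPolynomial.X_ne_zero _)
    · rw [sub_eq_zero.mp h]
      have := Submodule.smul_mem (Submodule.span (Algebra.adjoin k (gens k 0 m m)) {(1 : Rg k 0 m)})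
        ⟨_, hzA⟩ (Submodule.mem_span_singleton_self 1)
      rwa [Subalgebra.smul_def, smul_eq_mul, mul_one] at this

/-- The image of the invariants under `Θ` is a finite module over the algebra generated by the minors,
stated through lifts of module generators. -/
lemma exists_finite_lift {m : ℕ} (hm : d + m ≤ e) (h : FinProp k d e m) :
    ∃ E : Set (Rg k (d + 1) (e + 1)), E.Finite ∧ E ⊆ inv k (d + 1) (e + 1) m ∧
      ∀ z ∈ inv k (d + 1) (e + 1) m,
        ∃ y ∈ Submodule.span (Algebra.adjoin k (gens k (d + 1) (e + 1) m)) E,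
          Theta k d e y = Theta k d e z := by
  classical
  obtain ⟨E', hEf, hEh, hEi, hE⟩ := h
  let A := Algebra.adjoin k (gens k (d + 1) (e + 1) m)
  let : Algebra A (Rg k d e)[X] := ((Theta k d e).comp A.val).toRingHom.toAlgebra
  have hmap : ∀ a : A, algebraMap A (Rg k d e)[X] a = Theta k d e a := fun a => rfl
  have : IsScalarTower k A (Rg k d e)[X] := IsScalarTower.of_algebraMap_eq fun c => by
    rw [hmap]
    exact ((Theta k d e).commutes c).symm
  have : IsNoetherianRing A := isNoetherianRing_of_fg adjoin_gens_fg
  obtain ⟨N, hN, hzN⟩ := exists_bigmodule (A := A) (gens_finite m) hEf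
    (by
      rintro _ ⟨q, p, f, hq, hp, hqp, hf, rfl⟩
      refine ⟨q + p, minor_isHomogeneous f, fun j hj => isIntegral_pow_mul m ?_ f hq hp hqp hf j hj⟩
      exact fun ω hω => ⟨⟨ω, Algebra.subset_adjoin hω⟩, rfl⟩) hEh
  have hTN : ∀ P ∈ inv k (d + 1) (e + 1) m, Theta k d e P ∈ N := by
    intro P hP
    rw [← MvPolynomial.sum_homogeneousComponent P, map_sum]
    refine sum_mem fun n _ => ?_
    have hg := Theta_Gr (k := k) (MvPolynomial.homogeneousComponent_isHomogeneous n P)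
    have hi := coeff_Theta_mem_inv hm (hc_mem_inv hP n)
    rw [Polynomial.as_sum_range' (Theta k d e (MvPolynomial.homogeneousComponent n P)) (n + 1)
      (Nat.lt_succ_of_le (natDegree_le_iff_coeff_eq_zero.mpr fun i hi => (hg i).2 hi))]
    refine sum_mem fun i hin => ?_
    rw [← C_mul_X_pow_eq_monomial, mul_comm]
    have := hzN _ (hE _ (hi i)) n i (by rw [Finset.mem_range] at hin; omega)
    rwa [MvPolynomial.homogeneousComponent_eq_self (hg i).1] at this
  have := isNoetherian_of_fg_of_noetherian N hN
  let L : Rg k (d + 1) (e + 1) →ₗ[A] (Rg k d e)[X] :=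
    { toFun := Theta k d e
      map_add' := map_add _
      map_smul' := fun a x => by
        rw [Subalgebra.smul_def, smul_eq_mul, map_mul, RingHom.id_apply, Algebra.smul_def, hmap] }
  have hfg : (Submodule.span A (L '' (inv k (d + 1) (e + 1) m : Set _))).FG := by
    refine isNoetherian_submodule.mp ‹_› _ (Submodule.span_le.mpr ?_)
    rintro _ ⟨P, hP, rfl⟩
    exact hTN P hP
  obtain ⟨s, hs, hspan⟩ := (Submodule.fg_span_iff_fg_span_finset_subset _).mp hfg
  obtain ⟨s', hs', rfl⟩ := Finset.subset_set_image_iff.mp hs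
  refine ⟨s', s'.finite_toSet, hs', fun z hz => ?_⟩
  have h1 : L z ∈ Submodule.span A (L '' (inv k (d + 1) (e + 1) m : Set _)) :=
    Submodule.subset_span ⟨z, hz, rfl⟩
  rw [hspan, Finset.coe_image, ← Submodule.map_span] at h1
  exact h1

/-- The induction step, by the graded Nakayama lemma: modulo the kernel of `Θ`, which is generated by
`Res`, the invariants are finitely generated by `exists_finite_lift`. If
`z - y = Res * w` with `z` and `y` invariant of degree `n`, then `w` may be taken homogeneous; it is
invariant and has smaller degree. -/
lemma finProp_succ {m : ℕ} (hm : d + m ≤ e) (h : FinProp k d e m) :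
    FinProp k (d + 1) (e + 1) m := by
  have hm' : d + 1 + m ≤ e + 1 := by omega
  obtain ⟨E₀, hE₀f, hE₀i, hE₀⟩ := exists_finite_lift hm h
  let E : Set (Rg k (d + 1) (e + 1)) := ⋃ x ∈ E₀, ⋃ n ∈ Set.Iic x.totalDegree,
    {MvPolynomial.homogeneousComponent n x}
  have hEhom : ∀ s ∈ E, ∃ b, s.IsHomogeneous b := by
    intro s hs
    simp only [E, Set.mem_iUnion] at hs
    obtain ⟨x, hx, n, hn, rfl⟩ := hs
    exact ⟨n, MvPolynomial.homogeneousComponent_isHomogeneous n x⟩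
  have hEi : E ⊆ inv k (d + 1) (e + 1) m := by
    intro s hs
    simp only [E, Set.mem_iUnion] at hs
    obtain ⟨x, hx, n, hn, rfl⟩ := hs
    exact hc_mem_inv (hE₀i hx) n
  have hE₀E : Submodule.span (Algebra.adjoin k (gens k (d + 1) (e + 1) m)) E₀ ≤
      Submodule.span (Algebra.adjoin k (gens k (d + 1) (e + 1) m)) E := by
    refine Submodule.span_le.mpr fun x hx => ?_
    rw [SetLike.mem_coe, ← MvPolynomial.sum_homogeneousComponent x]
    refine sum_mem fun n hn => Submodule.subset_span ?_
    simp only [E, Set.mem_iUnion]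
    exact ⟨x, hx, n, Nat.lt_succ_iff.mp (Finset.mem_range.mp hn), rfl⟩
  refine ⟨E, hE₀f.biUnion fun x _ => (Set.finite_Iic _).biUnion fun n _ =>
    Set.finite_singleton _, hEhom, hEi, ?_⟩
  have hR0 : Res k (d + 1) (e + 1) ≠ 0 := Res_ne_zero
  have hRA : Res k (d + 1) (e + 1) ∈ Algebra.adjoin k (gens k (d + 1) (e + 1) m) :=
    Algebra.subset_adjoin (Res_mem_gens hm')
  have hRi := adjoin_gens_le hm' hRA
  have key : ∀ n, ∀ z ∈ inv k (d + 1) (e + 1) m, z.IsHomogeneous n →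
      z ∈ Submodule.span (Algebra.adjoin k (gens k (d + 1) (e + 1) m)) E := by
    intro n
    induction n using Nat.strong_induction_on with
    | _ n ih =>
      intro z hz hzn
      obtain ⟨y, hy, hyz⟩ := hE₀ z hz
      have hyE := hc_mem_span gens_hom hEhom (hE₀E hy) n
      obtain ⟨w, hw⟩ := Res_dvd_of_Theta_eq_zero k d e (P := z - y)
        (by rw [map_sub, hyz, sub_self])
      have h1 := congrArg (MvPolynomial.homogeneousComponent n) hw
      rw [map_sub, MvPolynomial.homogeneousComponent_eq_self hzn, mul_comm,
        hc_mul_right Res_isHomogeneous, sub_eq_iff_eq_add] at h1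
      rw [h1]
      refine add_mem ?_ hyE
      split_ifs at h1 ⊢ with hle
      · set w' := MvPolynomial.homogeneousComponent (n - (d + 1 + (e + 1))) w
        have hprod : w' * Res k (d + 1) (e + 1) ∈ inv k (d + 1) (e + 1) m := by
          rw [← sub_eq_iff_eq_add] at h1
          rw [← h1]
          exact sub_mem hz (span_subset_inv hm' hEi hyE)
        have hw'i : w' ∈ inv k (d + 1) (e + 1) m := by
          rw [mem_inv] at hprod hRi ⊢
          intro t
          have h2 := hprod t
          rw [map_mul, hRi t] at h2
          exact mul_right_cancel₀ hR0 h2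
        have h3 := ih _ (by omega) w' hw'i
          (MvPolynomial.homogeneousComponent_isHomogeneous _ w)
        rw [mul_comm]
        exact Submodule.smul_mem _
          (⟨_, hRA⟩ : Algebra.adjoin k (gens k (d + 1) (e + 1) m)) h3
      · exact zero_mem _
  intro z hz
  rw [← MvPolynomial.sum_homogeneousComponent z]
  exact sum_mem fun n _ => key n _ (hc_mem_inv hz n)
    (MvPolynomial.homogeneousComponent_isHomogeneous n z)

lemma finProp [Infinite k] {m : ℕ} (hm : 1 ≤ m) (d e : ℕ) (h : d + m = e) : FinProp k d e m := by
  induction d generalizing e with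
  | zero =>
    rw [zero_add] at h
    subst h
    exact finProp_zero hm
  | succ d ih =>
    obtain ⟨e, rfl⟩ : ∃ e', e = e' + 1 := ⟨e - 1, by omega⟩
    exact finProp_succ (by omega) (ih e (by omega))

/-! ### Finite fields, and the explicit form of the action -/

section finite

lemma tau_add {m : ℕ} (hm : d + m ≤ e) (h h' : Fin (m + 1) → k) :
    (tau k d e m h).comp (tau k d e m h') = tau k d e m (h + h') := by
  have hp : pol (h + h') = pol h + pol h' := by
    simp [pol, add_mul, Finset.sum_add_distrib]
  have key : ∀ P : (Rg k d e)[X], P.map ((tau k d e m h).comp (tau k d e m h')).toRingHom =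
      (P.map (tau k d e m h').toRingHom).map (tau k d e m h).toRingHom := fun P =>
    (Polynomial.map_map _ _ P).symm
  have hk : (tau k d e m h).toRingHom.comp (algebraMap k (Rg k d e)) = algebraMap k _ :=
    (tau k d e m h).comp_algebraMap
  apply Rg_hom_ext
  · rw [key, tau_F, tau_F, tau_F]
  · rw [key, tau_G hm, Polynomial.map_add, Polynomial.map_mul, tau_G hm, tau_F, tau_G hm,
      Polynomial.map_map, hk, hp, Polynomial.map_add]
    ring

/-- Over a finite field `R` is a finite module over the invariants, and the Artin–Tate lemma
applies. -/
lemma inv_fg_finite [Finite k] {m : ℕ} (hm : d + m ≤ e) : (inv k d e m).FG := by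
  classical
  have := Fintype.ofFinite k
  have hint : Algebra.IsIntegral (inv k d e m) (Rg k d e) := by
    refine ⟨fun x => ?_⟩
    let p : (Rg k d e)[X] := ∏ h : Fin (m + 1) → k, (X - C (tau k d e m h x))
    have hpm : p.Monic := monic_prod_of_monic _ _ fun h _ => monic_X_sub_C _
    have hpi : ∀ t, p.map (tau k d e m t).toRingHom = p := by
      intro t
      simp only [p, Polynomial.map_prod, Polynomial.map_sub, Polynomial.map_X, Polynomial.map_C]
      refine Fintype.prod_equiv (Equiv.addLeft t) _ _ fun h => ?_
      have := congrArg (fun f => f x) (tau_add hm t h)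
      simp only [AlgHom.comp_apply] at this
      rw [Equiv.coe_addLeft, ← this]
      rfl
    have hc : ∀ i, p.coeff i ∈ inv k d e m := by
      intro i
      rw [mem_inv]
      intro t
      conv_rhs => rw [← hpi t]
      rw [coeff_map]; rfl
    have hpl : p ∈ lifts (algebraMap (inv k d e m) (Rg k d e)) := by
      rw [lifts_iff_coeff_lifts]
      exact fun i => ⟨⟨_, hc i⟩, rfl⟩
    obtain ⟨q, hq, -, hqm⟩ := lifts_and_degree_eq_and_monic hpl hpm
    refine ⟨q, hqm, ?_⟩
    rw [← eval_map, hq, eval_prod]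
    refine Finset.prod_eq_zero (Finset.mem_univ 0) ?_
    have : tau k d e m 0 = AlgHom.id k _ := by
      have h0 : pol (0 : Fin (m + 1) → k) = 0 := by simp [pol]
      apply Rg_hom_ext
      · rw [tau_F]; exact (Polynomial.map_id (p := genF k d e)).symm
      · rw [tau_G hm, h0, Polynomial.map_zero, zero_mul, add_zero]
        exact (Polynomial.map_id (p := genG k d e)).symm
    rw [this]; simp
  have hft : Algebra.FiniteType (inv k d e m) (Rg k d e) :=
    Algebra.FiniteType.of_restrictScalars_finiteType k _ _
  have := Algebra.IsIntegral.finite (R := inv k d e m) (A := Rg k d e)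
  have := fg_of_fg_of_fg k (inv k d e m) (Rg k d e) Algebra.FiniteType.out Module.Finite.fg_top
    Subtype.val_injective
  exact (Subalgebra.fg_top _).mp this

end finite

lemma inv_fg {m : ℕ} (hm : 1 ≤ m) (h : d + m = e) : (inv k d e m).FG := by
  rcases finite_or_infinite k with hk | hk
  · exact inv_fg_finite h.le
  · exact finProp_fg h.le (finProp hm d e h)

lemma coeff_pol_mul {A : Type} [CommRing A] {d m : ℕ} (u : Fin (m + 1) → A) (v : Fin (d + 1) → A)
    (j : ℕ) : (pol u * pol v).coeff j =
      ∑ i : Fin (m + 1), ∑ i' : Fin (d + 1), if (i : ℕ) + i' = j then u i * v i' else 0 := by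
  simp only [pol, Finset.sum_mul_sum, finsetSum_coeff]
  refine Finset.sum_congr rfl fun i _ => Finset.sum_congr rfl fun i' _ => ?_
  rw [mul_mul_mul_comm, ← C_mul, ← pow_add, coeff_C_mul_X_pow]
  simp only [eq_comm]

lemma tau_eq (m : ℕ) (h : Fin (m + 1) → k) : tau k d e m h =
    MvPolynomial.aeval (R := k) (Sum.elim
      (fun i : Fin (d + 1) => (MvPolynomial.X (Sum.inl i) : Rg k d e))
      (fun j : Fin (e + 1) => MvPolynomial.X (Sum.inr j) +
        ∑ i : Fin (m + 1), ∑ i' : Fin (d + 1), if (i : ℕ) + (i' : ℕ) = (j : ℕ) then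
          MvPolynomial.C (h i) * MvPolynomial.X (Sum.inl i') else 0)) := by
  rw [tau, ev]
  congr 1
  funext x
  rcases x with i | j
  · exact coeff_pol _ i
  · simp only [Sum.elim_inr, coeff_add]
    rw [map_pol, genF, coeff_pol_mul, genG, coeff_pol]
    rfl

end

end TranslationInvariants

/-- The algebra of invariants of the action of `k^(e-d+1)` on
`R = k[a_0,…,a_d, b_0,…,b_e]` given by `τ_h(a_i) = a_i` and
`τ_h(b_j) = b_j + ∑_{i+i'=j} h_i a_{i'}` is a finitely generated `k`-algebra. -/
theorem stmt_0 (k : Type) [Field k] (d e : ℕ) (hd : 1 ≤ d) (hde : d < e) :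
    Subalgebra.FG (⨅ h : Fin (e - d + 1) → k,
      AlgHom.equalizer
        (MvPolynomial.aeval (R := k)
          (Sum.elim
            (fun i : Fin (d + 1) =>
              (MvPolynomial.X (Sum.inl i) : MvPolynomial (Fin (d + 1) ⊕ Fin (e + 1)) k))
            (fun j : Fin (e + 1) =>
              MvPolynomial.X (Sum.inr j) +
                ∑ i : Fin (e - d + 1), ∑ i' : Fin (d + 1),
                  if (i : ℕ) + (i' : ℕ) = (j : ℕ) then
                    MvPolynomial.C (h i) * MvPolynomial.X (Sum.inl i') else 0)))
        (AlgHom.id k (MvPolynomial (Fin (d + 1) ⊕ Fin (e + 1)) k))) := by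
  have h := TranslationInvariants.inv_fg (k := k) (d := d) (e := e) (m := e - d)
    (by omega) (by omega)
  simpa only [TranslationInvariants.inv, TranslationInvariants.tau_eq] using h
end

section
/- Fix integers 1 ≤ d < e and a field k. Let F ∈ V_d and G ∈ V_e be nonzero coprime homogeneous polynomials. Then for every integer l, the dimension over k of the subspace ⟨F,G⟩_l = {HF + IG : H ∈ V_{l−d}, I ∈ V_{l−e}} of V_l equals HF_{d,e}(l), where HF_{d,e}(l) = 0 if l ≤ d−1, HF_{d,e}(l) = l+1−d if d ≤ l ≤ e−1, HF_{d,e}(l) = 2l+2−d−e if e ≤ l ≤ d+e−1, and HF_{d,e}(l) = l+1 if l ≥ d+e. -/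
/-!
By Grassmann's formula, the dimension of `⟨F,G⟩_l = F·V_{l-d} + G·V_{l-e}` is
`dim V_{l-d} + dim V_{l-e} - dim (F·V_{l-d} ∩ G·V_{l-e})`. Multiplication by a nonzero polynomial is
injective, so the first two terms are `max (l-d+1) 0` and `max (l-e+1) 0` (`finrank_Vz`).
If `HF = IG` lies in the intersection, coprimality gives `I = FJ`, and `J` is homogeneous of degree
`l-d-e` because `F` and `I` are homogeneous (`mem_Vz_of_mul_mem`). Hence the intersection is
`FG·V_{l-d-e}` (`map_inf_map`), of dimension `max (l-d-e+1) 0`, and the four cases of `hfde` are the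
four possible sign patterns of these three terms.
-/

/-- `V_l`: the space of homogeneous polynomials of degree `l ∈ ℤ` in two variables,
with `V_l = 0` for `l < 0`. -/
noncomputable def Vz (k : Type) [Field k] (l : ℤ) : Submodule k (MvPolynomial (Fin 2) k) :=
  if 0 ≤ l then MvPolynomial.homogeneousSubmodule (Fin 2) k l.toNat else ⊥

/-- `⟨F,G⟩_l = {HF + IG : H ∈ V_{l-d}, I ∈ V_{l-e}}`. -/
noncomputable def spanFG (k : Type) [Field k] (d e : ℕ)
    (F G : MvPolynomial (Fin 2) k) (l : ℤ) : Submodule k (MvPolynomial (Fin 2) k) :=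
  (Vz k (l - d)).map (LinearMap.mulRight k F) ⊔ (Vz k (l - e)).map (LinearMap.mulRight k G)

/-- The Hilbert function `HF_{d,e}`. -/
def hfde (d e l : ℤ) : ℤ :=
  if l ≤ d - 1 then 0
  else if l ≤ e - 1 then l + 1 - d
  else if l ≤ d + e - 1 then 2 * l + 2 - d - e
  else l + 1

open MvPolynomial

attribute [local instance] MvPolynomial.gradedAlgebra

/-- Exponents of bivariate monomials of degree `n`, indexed by the exponent of the first variable. -/
noncomputable def degreeEquiv (n : ℕ) : {m : Fin 2 →₀ ℕ | m.degree = n} ≃ Fin (n + 1) where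
  toFun m := ⟨m.1 0, by
    have := m.2
    simp only [Set.mem_ofPred_eq, Finsupp.degree_eq_sum, Fin.sum_univ_two] at this
    omega⟩
  invFun i := ⟨Finsupp.equivFunOnFinite.symm ![i, n - i], by
    have := i.2
    simp only [Set.mem_ofPred_eq, Finsupp.degree_eq_sum, Fin.sum_univ_two]
    simp
    omega⟩
  left_inv m := by
    have := m.2
    simp only [Set.mem_ofPred_eq, Finsupp.degree_eq_sum, Fin.sum_univ_two] at this
    ext j
    fin_cases j
    · simp
    · simp
      omega
  right_inv i := by ext; simp

theorem finrank_homogeneousSubmodule_two (k : Type) [Field k] (n : ℕ) :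
    Module.finrank k (homogeneousSubmodule (Fin 2) k n) = n + 1 := by
  rw [homogeneousSubmodule_eq_finsupp_supported,
    ((AddMonoidAlgebra.supportedEquivFinsupp (R := k) (S := k)
      {m : Fin 2 →₀ ℕ | m.degree = n}).trans
        (Finsupp.domLCongr (degreeEquiv n))).finrank_eq]
  simp

theorem finrank_Vz (k : Type) [Field k] (l : ℤ) :
    (Module.finrank k (Vz k l) : ℤ) = max (l + 1) 0 := by
  unfold Vz
  by_cases h : 0 ≤ l
  · rw [if_pos h, finrank_homogeneousSubmodule_two]
    omega
  · rw [if_neg h, finrank_bot]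
    omega

instance finite_Vz (k : Type) [Field k] (l : ℤ) : Module.Finite k (Vz k l) := by
  unfold Vz
  by_cases h : 0 ≤ l
  · rw [if_pos h]
    exact Module.Finite.iff_fg.mpr (homogeneousSubmodule_fg (Fin 2) k _)
  · rw [if_neg h]
    infer_instance

theorem mulRight_injective {k : Type} [Field k] {F : MvPolynomial (Fin 2) k} (hF0 : F ≠ 0) :
    Function.Injective (LinearMap.mulRight k F) :=
  fun _ _ h => mul_right_cancel₀ hF0 h

theorem finrank_map_mulRight {k : Type} [Field k] {F : MvPolynomial (Fin 2) k} (hF0 : F ≠ 0)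
    (l : ℤ) : (Module.finrank k ((Vz k l).map (LinearMap.mulRight k F)) : ℤ) = max (l + 1) 0 := by
  rw [← finrank_Vz k l,
    (Submodule.equivMapOfInjective _ (mulRight_injective hF0) (Vz k l)).finrank_eq]

theorem mul_mem_Vz {k : Type} [Field k] {d : ℕ} {F J : MvPolynomial (Fin 2) k}
    (hF : F.IsHomogeneous d) {l : ℤ} (h : J ∈ Vz k l) : F * J ∈ Vz k (l + d) := by
  unfold Vz at *
  split_ifs at h with h1
  · rw [if_pos (by omega), show (l + d).toNat = d + l.toNat by omega]
    exact hF.mul h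
  · rw [(Submodule.mem_bot k).mp h, mul_zero]
    exact zero_mem _

/-- A cofactor of a nonzero homogeneous polynomial in a homogeneous polynomial is homogeneous.
This includes negative degrees, where it says that the cofactor vanishes. -/
theorem mem_Vz_of_mul_mem {k : Type} [Field k] {d : ℕ} {F J : MvPolynomial (Fin 2) k}
    (hF : F.IsHomogeneous d) (hF0 : F ≠ 0) {l : ℤ} (h : F * J ∈ Vz k l) : J ∈ Vz k (l - d) := by
  suffices J = 0 ∨ ((d : ℤ) ≤ l ∧ J.IsHomogeneous (l - d).toNat) by
    rcases this with rfl | ⟨hl, hJ⟩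
    · exact zero_mem _
    · unfold Vz
      rwa [if_pos (by omega)]
  unfold Vz at h
  split_ifs at h with hl
  · -- Compare `F * J` with its own homogeneous component of degree `l`.
    have key := DirectSum.coe_decompose_mul_of_left_mem (homogeneousSubmodule (Fin 2) k)
      l.toNat (b := J) ((mem_homogeneousSubmodule d F).mpr hF)
    rw [DirectSum.decompose_of_mem_same _ h] at key
    split_ifs at key with hdl
    · refine Or.inr ⟨by omega, ?_⟩
      rw [mul_left_cancel₀ hF0 key, show (l - d).toNat = l.toNat - d by omega]
      exact (DirectSum.decompose (homogeneousSubmodule (Fin 2) k) J (l.toNat - d)).2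
    · exact Or.inl ((mul_eq_zero.mp key).resolve_left hF0)
  · exact Or.inl ((mul_eq_zero.mp ((Submodule.mem_bot k).mp h)).resolve_left hF0)

/-- In each degree, the common multiples of coprime `F` and `G` are the multiples of `F * G`. -/
theorem map_inf_map {k : Type} [Field k] {d e : ℕ} {F G : MvPolynomial (Fin 2) k}
    (hF : F.IsHomogeneous d) (hF0 : F ≠ 0) (hG : G.IsHomogeneous e)
    (hcop : IsRelPrime F G) (l : ℤ) :
    (Vz k (l - d)).map (LinearMap.mulRight k F) ⊓ (Vz k (l - e)).map (LinearMap.mulRight k G) =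
      (Vz k (l - d - e)).map (LinearMap.mulRight k (F * G)) := by
  ext x
  simp only [Submodule.mem_inf, Submodule.mem_map, LinearMap.mulRight_apply]
  constructor
  · rintro ⟨⟨H, -, rfl⟩, I, hI, h⟩
    obtain ⟨J, rfl⟩ : F ∣ I := hcop.dvd_of_dvd_mul_right ⟨H, by rw [h, mul_comm]⟩
    refine ⟨J, ?_, by rw [← h]; ring⟩
    rw [sub_right_comm]
    exact mem_Vz_of_mul_mem hF hF0 hI
  · rintro ⟨J, hJ, rfl⟩
    refine ⟨⟨G * J, ?_, by ring⟩, F * J, ?_, by ring⟩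
    · simpa using mul_mem_Vz hG hJ
    · rw [sub_right_comm] at hJ
      simpa using mul_mem_Vz hF hJ

/-- for nonzero coprime homogeneous `F` of degree `d` and `G` of degree `e`
with `1 ≤ d < e`, the dimension of `⟨F,G⟩_l` equals `HF_{d,e}(l)` for every integer `l`. -/
theorem stmt_1 (k : Type) [Field k] (d e : ℕ) (hd : 1 ≤ d) (hde : d < e)
    (F G : MvPolynomial (Fin 2) k)
    (hF : F.IsHomogeneous d) (hF0 : F ≠ 0)
    (hG : G.IsHomogeneous e) (hG0 : G ≠ 0)
    (hcop : IsRelPrime F G) :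
    ∀ l : ℤ, (Module.finrank k (spanFG k d e F G l) : ℤ) = hfde d e l := by
  intro l
  have h := Submodule.finrank_sup_add_finrank_inf_eq
    ((Vz k (l - d)).map (LinearMap.mulRight k F)) ((Vz k (l - e)).map (LinearMap.mulRight k G))
  rw [map_inf_map hF hF0 hG hcop] at h
  have h1 := finrank_map_mulRight hF0 (l - d)
  have h2 := finrank_map_mulRight hG0 (l - e)
  have h3 := finrank_map_mulRight (mul_ne_zero hF0 hG0) (l - d - e)
  unfold spanFG hfde
  split_ifs <;> omega
end

section
/- Fix integers 1 ≤ u < d < e and a field k. Let A ∈ V_{d−u}, B ∈ V_u, C ∈ V_{e−d+u} be homogeneous polynomials, not all zero, with no common nonconstant factor (i.e. gcd(A,B,C) is a unit). Then every P ∈ V_{e+u} can be written as P = AH + BI + CJ with H ∈ V_{e−d+2u}, I ∈ V_e and J ∈ V_d; that is, V_{e+u} is generated by the multiples of A, of B and of C. -/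
/-!
In two variables, generators of a homogeneous ideal can be divided by `X₁` one at a time.
Call homogeneous polynomials `Aᵢ` of degrees `δᵢ` with no common nonconstant factor given, and
let `A` be one of least degree among those not divisible by `X₁`. Then `A` contains the pure
power of `X₀` of its degree, so subtracting a multiple of `A` makes any homogeneous polynomial
of degree at least `deg A` divisible by `X₁` (`exists_reduction`). By minimality this applies to
every other generator `Aⱼ`, which becomes `X₁ Aⱼ'`. The family consisting of `A` and the `Aⱼ'`
still has no common factor, and its total degree is smaller. A form `P` of degree `n ≥ ∑ δᵢ` is
likewise `X₁ P'` modulo `A`; by induction `P'` lies in the ideal of the new family, hence `P` lies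
in the ideal of the original one (`mem_span_of_sum_le`). For three generators of degrees `d - u`,
`u`, `e - d + u` the total degree is exactly `e + u`, and taking homogeneous components of the
cofactors gives cofactors of the required degrees.
-/

open MvPolynomial in
/-- Restricted to `X₁ = 0`, a binary form of degree `m` is a multiple of `X₀ ^ m`. -/
lemma X_one_dvd_of_coeff_eq_zero {k : Type} [Field k] {m : ℕ} {G : MvPolynomial (Fin 2) k}
    (hG : G.IsHomogeneous m) (h0 : coeff (Finsupp.single 0 m) G = 0) :
    (X 1 : MvPolynomial (Fin 2) k) ∣ G := by
  rw [G.as_sum]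
  refine Finset.dvd_sum fun s hs => ?_
  rw [X_dvd_monomial]
  right
  intro h1
  have hdeg : s.degree = m := by
    by_contra hne
    exact (mem_support_iff.1 hs) (hG.coeff_eq_zero hne)
  have hs0 : s = Finsupp.single 0 m := by
    rw [Finsupp.degree_eq_sum, Fin.sum_univ_two] at hdeg
    ext i
    fin_cases i <;> simp <;> omega
  exact (mem_support_iff.1 hs) (hs0 ▸ h0)

open MvPolynomial in
/-- For `m = 0` the truncated `m - 1` is harmless, since then `G = 0`. -/
lemma isHomogeneous_of_X_one_mul {k : Type} [Field k] {m : ℕ} {G : MvPolynomial (Fin 2) k}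
    (hG : (X 1 * G).IsHomogeneous m) : G.IsHomogeneous (m - 1) := by
  intro s hs
  have h : coeff (Finsupp.single 1 1 + s) (X 1 * G) ≠ 0 := by
    rwa [coeff_X_mul]
  have := hG h
  rw [Finsupp.weight_apply, Finsupp.sum_fintype _ _ (by simp), Fin.sum_univ_two] at this ⊢
  simp at this ⊢
  omega

open MvPolynomial in
/-- Modulo a form `F` of degree `p` not divisible by `X₁`, every form of degree `m ≥ p` is
divisible by `X₁`. -/
lemma exists_reduction {k : Type} [Field k] {p m : ℕ} {F G : MvPolynomial (Fin 2) k}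
    (hF : F.IsHomogeneous p) (hXF : ¬ (X 1 : MvPolynomial (Fin 2) k) ∣ F)
    (hG : G.IsHomogeneous m) (hpm : p ≤ m) :
    ∃ T G' : MvPolynomial (Fin 2) k, G = T * F + X 1 * G' ∧ G'.IsHomogeneous (m - 1) := by
  have hα : coeff (Finsupp.single 0 p) F ≠ 0 := fun h => hXF (X_one_dvd_of_coeff_eq_zero hF h)
  set α := coeff (Finsupp.single 0 p) F
  set β := coeff (Finsupp.single 0 m) G with hβ
  -- `T` is chosen so that `T * F` and `G` have the same coefficient at `X₀ ^ m`.
  set T : MvPolynomial (Fin 2) k := monomial (Finsupp.single 0 (m - p)) (β / α) with hT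
  have hTF : (T * F).IsHomogeneous m := by
    have := (isHomogeneous_monomial (R := k) (β / α) (d := Finsupp.single (0 : Fin 2) (m - p))
      (n := m - p) (Finsupp.degree_single _ _)).mul hF
    rwa [Nat.sub_add_cancel hpm] at this
  have hc : coeff (Finsupp.single 0 m) (T * F) = β := by
    have : Finsupp.single (0 : Fin 2) m = Finsupp.single 0 (m - p) + Finsupp.single 0 p := by
      rw [← Finsupp.single_add, Nat.sub_add_cancel hpm]
    rw [this, hT, coeff_monomial_mul, div_mul_cancel₀ _ hα]
  have hd := hG.sub hTF
  obtain ⟨G', hG'⟩ := X_one_dvd_of_coeff_eq_zero hd (by rw [coeff_sub, hc, sub_self])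
  refine ⟨T, G', by rw [← hG']; ring, isHomogeneous_of_X_one_mul (hG' ▸ hd)⟩

open MvPolynomial in
lemma isUnit_of_isHomogeneous_zero {k : Type} [Field k] {F : MvPolynomial (Fin 2) k}
    (hF : F.IsHomogeneous 0) (h0 : F ≠ 0) : IsUnit F := by
  have h := totalDegree_eq_zero_iff_eq_C.1 ((totalDegree_zero_iff_isHomogeneous _).2 hF)
  rw [h] at h0 ⊢
  refine IsUnit.map C (isUnit_iff_ne_zero.2 fun h' => h0 (by rw [h', C_0]))

open MvPolynomial in
/-- Binary forms without a common factor generate every form whose degree is at least the sum of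
theirs. -/
lemma mem_span_of_sum_le {k : Type} [Field k] {ι : Type} [Fintype ι] (N : ℕ) :
    ∀ (δ : ι → ℕ) (A : ι → MvPolynomial (Fin 2) k), ∑ i, δ i = N →
      (∀ i, (A i).IsHomogeneous (δ i)) → (∀ p, (∀ i, p ∣ A i) → IsUnit p) →
      ∀ (n : ℕ) (P : MvPolynomial (Fin 2) k), N ≤ n → P.IsHomogeneous n →
      P ∈ Ideal.span (Set.range A) := by
  classical
  induction N using Nat.strong_induction_on with
  | _ N ih =>
  intro δ A hN hA hgcd n P hn hP
  have hunit : ∀ i, IsUnit (A i) → P ∈ Ideal.span (Set.range A) := fun i hi => by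
    have hAi : A i ∈ Ideal.span (Set.range A) := Ideal.subset_span ⟨i, rfl⟩
    rw [Ideal.eq_top_of_isUnit_mem _ hAi hi]
    trivial
  have hX : ∃ i, ¬ (X 1 : MvPolynomial (Fin 2) k) ∣ A i := by
    by_contra! h
    exact X_prime.not_isUnit (hgcd _ h)
  obtain ⟨i₀, hi₀, hmin⟩ := Finset.exists_min_image
    (Finset.univ.filter fun i => ¬ (X 1 : MvPolynomial (Fin 2) k) ∣ A i) δ
    (by obtain ⟨i, hi⟩ := hX; exact ⟨i, by simpa using hi⟩)
  simp only [Finset.mem_filter, Finset.mem_univ, true_and] at hi₀ hmin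
  by_cases hpos : ∃ j, j ≠ i₀ ∧ δ j ≠ 0
  · have hred : ∀ j, ∃ T B : MvPolynomial (Fin 2) k, A j = T * A i₀ + X 1 * B ∧
        B.IsHomogeneous (δ j - 1) := by
      intro j
      by_cases hj : (X 1 : MvPolynomial (Fin 2) k) ∣ A j
      · obtain ⟨B, hB⟩ := hj
        exact ⟨0, B, by simpa using hB, isHomogeneous_of_X_one_mul (hB ▸ hA j)⟩
      · exact exists_reduction (hA i₀) hi₀ (hA j) (hmin j hj)
    choose T B hTB hB using hred
    let δ' : ι → ℕ := fun j => if j = i₀ then δ j else δ j - 1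
    let A' : ι → MvPolynomial (Fin 2) k := fun j => if j = i₀ then A j else B j
    have hlt : ∑ j, δ' j < N := by
      rw [← hN]
      obtain ⟨j, hj, hj'⟩ := hpos
      refine Finset.sum_lt_sum (fun i _ => ?_) ⟨j, Finset.mem_univ j, ?_⟩
      · by_cases h : i = i₀ <;> simp [δ', h]
      · simp only [δ', hj, if_false]; omega
    have hA' : ∀ j, (A' j).IsHomogeneous (δ' j) := by
      intro j
      by_cases h : j = i₀
      · simpa [A', δ', h] using hA i₀
      · simpa [A', δ', h] using hB j
    have hgcd' : ∀ p, (∀ j, p ∣ A' j) → IsUnit p := by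
      intro p hp
      have hp0 : p ∣ A i₀ := by simpa [A'] using hp i₀
      refine hgcd p fun j => ?_
      by_cases h : j = i₀
      · rwa [h]
      · rw [hTB j]
        have hpB : p ∣ B j := by simpa [A', h] using hp j
        exact dvd_add (hp0.mul_left _) (hpB.mul_left _)
    have hi₀n : δ i₀ ≤ n :=
      (Finset.single_le_sum (fun _ _ => Nat.zero_le _) (Finset.mem_univ i₀)).trans (hN.trans_le hn)
    obtain ⟨S, P', hSP, hP'⟩ := exists_reduction (hA i₀) hi₀ hP hi₀n
    have hmem := ih _ hlt δ' A' rfl hA' hgcd' (n - 1) P' (by omega) hP'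
    have hAi₀ : A i₀ ∈ Ideal.span (Set.range A) := Ideal.subset_span ⟨i₀, rfl⟩
    -- Multiplication by `X₁` carries the new ideal into the old one.
    have hcolon : ∀ Q ∈ Ideal.span (Set.range A'), X 1 * Q ∈ Ideal.span (Set.range A) := by
      intro Q hQ
      induction hQ using Submodule.span_induction with
      | mem Q hQ =>
        obtain ⟨j, rfl⟩ := hQ
        by_cases h : j = i₀
        · simpa [A', h] using Ideal.mul_mem_left _ _ hAi₀
        · have hj : X 1 * A' j = A j - T j * A i₀ := by
            simp only [A', h, if_false]
            linear_combination - hTB j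
          rw [hj]
          exact sub_mem (Ideal.subset_span ⟨j, rfl⟩) (Ideal.mul_mem_left _ _ hAi₀)
      | zero => simp
      | add x y _ _ hx hy => rw [mul_add]; exact add_mem hx hy
      | smul a x _ hx =>
        rw [smul_eq_mul, mul_left_comm]
        exact Ideal.mul_mem_left _ _ hx
    rw [hSP]
    exact add_mem (Ideal.mul_mem_left _ _ hAi₀) (hcolon _ hmem)
  · push Not at hpos
    by_cases hz : ∃ j, j ≠ i₀ ∧ A j ≠ 0
    · obtain ⟨j, hj, hj0⟩ := hz
      exact hunit j (isUnit_of_isHomogeneous_zero (hpos j hj ▸ hA j) hj0)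
    · push Not at hz
      refine hunit i₀ (hgcd _ fun j => ?_)
      by_cases h : j = i₀
      · rw [h]
      · rw [hz j h]; exact dvd_zero _

attribute [local instance] MvPolynomial.gradedAlgebra in
open MvPolynomial in
lemma homogeneousComponent_mul_of_isHomogeneous {k : Type} [Field k] {a m n : ℕ}
    {A : MvPolynomial (Fin 2) k} (hA : A.IsHomogeneous a) (H : MvPolynomial (Fin 2) k)
    (hn : a + m = n) :
    homogeneousComponent n (A * H) = A * homogeneousComponent m H := by
  subst hn
  have h := DirectSum.coe_decompose_mul_add_of_left_mem (homogeneousSubmodule (Fin 2) k)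
    (i := a) (j := m) (b := H) hA
  simpa only [← decomposition.decompose'_apply] using! h


/-- if `A ∈ V_{d-u}`, `B ∈ V_u`, `C ∈ V_{e-d+u}` are not all zero and have no
common nonconstant factor, then every `P ∈ V_{e+u}` can be written as `AH + BI + CJ`
with `H ∈ V_{e-d+2u}`, `I ∈ V_e`, `J ∈ V_d`. -/
theorem stmt_2 (k : Type) [Field k] (u d e : ℕ) (hu : 1 ≤ u) (hud : u < d) (hde : d < e)
    (A B C : MvPolynomial (Fin 2) k)
    (hA : A.IsHomogeneous (d - u)) (hB : B.IsHomogeneous u)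
    (hC : C.IsHomogeneous (e - d + u))
    (hne : ¬(A = 0 ∧ B = 0 ∧ C = 0))
    (hgcd : ∀ p : MvPolynomial (Fin 2) k, p ∣ A → p ∣ B → p ∣ C → IsUnit p)
    (P : MvPolynomial (Fin 2) k) (hP : P.IsHomogeneous (e + u)) :
    ∃ H I J : MvPolynomial (Fin 2) k,
      H.IsHomogeneous (e - d + 2 * u) ∧ I.IsHomogeneous e ∧ J.IsHomogeneous d ∧
      P = A * H + B * I + C * J := by
  have hspan := mem_span_of_sum_le (ι := Fin 3) (e + u) ![d - u, u, e - d + u] ![A, B, C]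
    (by simp [Fin.sum_univ_three]; omega)
    (by intro i; fin_cases i <;> simpa)
    (fun p hp => hgcd p (hp 0) (hp 1) (hp 2)) (e + u) P le_rfl hP
  rw [Ideal.mem_span_range_iff_exists_fun] at hspan
  obtain ⟨c, hc⟩ := hspan
  simp only [Fin.sum_univ_three, Matrix.cons_val] at hc
  refine ⟨_, _, _, MvPolynomial.homogeneousComponent_isHomogeneous _ (c 0),
    MvPolynomial.homogeneousComponent_isHomogeneous _ (c 1),
    MvPolynomial.homogeneousComponent_isHomogeneous _ (c 2), ?_⟩
  rw [← homogeneousComponent_mul_of_isHomogeneous (n := e + u) hA _ (by omega),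
    ← homogeneousComponent_mul_of_isHomogeneous (n := e + u) hB _ (by omega),
    ← homogeneousComponent_mul_of_isHomogeneous (n := e + u) hC _ (by omega),
    ← map_add, ← map_add, mul_comm A, mul_comm B, mul_comm C, hc,
    MvPolynomial.homogeneousComponent_eq_self hP]
end

section
/- Fix integers 1 ≤ u < d < e and a field k. Let A ∈ V_{d−u}, B ∈ V_u, C ∈ V_{e−d+u} be homogeneous polynomials, not all zero, with no common nonconstant factor (i.e. gcd(A,B,C) is a unit). Then the linear map V_d ⊕ V_e → V_{e+u}/⟨A⟩_{e+u} sending (F,G) to the class of BG − CF is surjective; equivalently, every P ∈ V_{e+u} can be written as P = BG − CF + AH with F ∈ V_d, G ∈ V_e and H ∈ V_{e−d+2u}. -/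
/-!
The proof uses one fact about binary forms: if `f ≠ 0` and `g` are relatively prime forms of
degrees `m` and `n`, then every form of degree `l` with `m + n ≤ l + 1` lies in
`f V_{l-m} + g V_{l-n}` (`exists_eq_mul_add_mul`). For `l = m + n - 1` it holds because
`(X, Y) ↦ f X + g Y` is an injective map `V_{n-1} × V_{m-1} → V_{m+n-1}` between spaces of the same
dimension `m + n` (`exists_eq_mul_add_mul_critical`); for larger `l`
it follows from `V_l = V_{m+n-1} V_{l-(m+n-1)}`. If `m = 0` or `n = 0`, one of the forms is a
unit.

For three forms with `A, B ≠ 0`, write `A = D A'`, `B = D B'` with `A'`, `B'` relatively prime;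
these factors are again forms, because divisors of nonzero forms are forms
(`MvPolynomial.IsHomogeneous.of_mul`). The fact applied to `D, C` gives `P = D X + C Y`, and applied
to `A', B'` it gives `X = A' H + B' G`, so `P = A H + B G + C Y`. The degree bounds needed are
`deg D ≤ d + 1` and `d ≤ e + u + 1 + deg D`, and both hold. If `A = 0` or `B = 0`, the fact is
applied once, to the remaining pair.
-/

open MvPolynomial

/-- Factors of a nonzero form are forms: the lowest and the highest degree of a monomial are both
additive under multiplication, so if they agree for a product they agree for each factor. -/
theorem MvPolynomial.IsHomogeneous.of_mul {σ R : Type*} [CommRing R] [IsDomain R]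
    {p q : MvPolynomial σ R} {n : ℕ} (h : (p * q).IsHomogeneous n) (h0 : p * q ≠ 0) :
    ∃ a b, a + b = n ∧ p.IsHomogeneous a ∧ q.IsHomogeneous b := by
  have hp : p ≠ 0 := left_ne_zero_of_mul h0
  have hq : q ≠ 0 := right_ne_zero_of_mul h0
  have ht : p.totalDegree + q.totalDegree = n := by
    rw [← totalDegree_mul_of_isDomain hp hq, h.totalDegree h0]
  have key : ∀ r : MvPolynomial σ R, ∀ s ∈ r.support,
      (r : MvPowerSeries σ R).order ≤ s.degree := fun r s hs =>
    MvPowerSeries.order_le (by simpa using hs)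
  have hle : ∀ r : MvPolynomial σ R, ∀ s ∈ r.support, s.degree ≤ r.totalDegree := fun r s hs =>
    le_totalDegree hs
  have bound : ∀ r : MvPolynomial σ R, r ≠ 0 →
      (r : MvPowerSeries σ R).order ≤ r.totalDegree := by
    intro r hr
    obtain ⟨s, hs⟩ := support_nonempty.mpr hr
    exact (key r s hs).trans (by exact_mod_cast hle r s hs)
  have ho : (n : ℕ∞) ≤ (p : MvPowerSeries σ R).order + (q : MvPowerSeries σ R).order := by
    rw [← MvPowerSeries.order_mul, ← coe_mul]
    refine MvPowerSeries.nat_le_order fun s hs => ?_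
    rw [coeff_coe]
    exact h.coeff_eq_zero hs.ne
  obtain ⟨a, ha⟩ := ENat.ne_top_iff_exists.mp (ne_top_of_le_ne_top (ENat.natCast_ne_top _) (bound p hp))
  obtain ⟨b, hb⟩ := ENat.ne_top_iff_exists.mp (ne_top_of_le_ne_top (ENat.natCast_ne_top _) (bound q hq))
  have hap := bound p hp
  have hbq := bound q hq
  rw [← ha] at hap
  rw [← hb] at hbq
  rw [← ha, ← hb] at ho
  norm_cast at hap hbq ho
  have fin : ∀ (r : MvPolynomial σ R) (c : ℕ), (c : ℕ∞) = (r : MvPowerSeries σ R).order →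
      r.totalDegree ≤ c → r.IsHomogeneous c := by
    intro r c hc hrc s hs
    have hs' : s ∈ r.support := mem_support_iff.mpr hs
    have h1 := key r s hs'
    rw [← hc] at h1
    norm_cast at h1
    rw [Pi.one_def, ← Finsupp.degree_eq_weight_one]
    exact le_antisymm ((hle r s hs').trans hrc) h1
  exact ⟨a, b, by omega, fin p a ha (by omega), fin q b hb (by omega)⟩

section BinaryForms

variable {k : Type*} [Field k]

instance (n : ℕ) : FiniteDimensional k (homogeneousSubmodule (Fin 2) k n) :=
  Module.Finite.iff_fg.mpr (homogeneousSubmodule_fg _ _ n)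

theorem finrank_homogeneousSubmodule_fin_two (n : ℕ) :
    Module.finrank k (homogeneousSubmodule (Fin 2) k n) = n + 1 := by
  have hs : {s : Fin 2 →₀ ℕ | s.degree = n} =
      ((Finset.univ : Finset (Fin 2)).finsuppAntidiag n : Set (Fin 2 →₀ ℕ)) := by
    ext s
    simp [Finset.mem_finsuppAntidiag, Finsupp.degree_eq_sum]
  have e : homogeneousSubmodule (Fin 2) k n = restrictSupport k {s | s.degree = n} :=
    homogeneousSubmodule_eq_finsupp_supported _ _ n
  rw [e, Module.finrank_eq_nat_card_basis (basisRestrictSupport k _), hs,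
    Nat.card_coe_set_eq, Set.ncard_coe_finset, Finset.card_finsuppAntidiag_nat_eq_choose,
    Finset.card_univ, Fintype.card_fin, show 2 + n - 1 = n + 1 by omega,
    Nat.choose_succ_self_right]

theorem eq_zero_of_dvd_of_isHomogeneous {σ : Type*} {f p : MvPolynomial σ k} {m n : ℕ}
    (hf : f.IsHomogeneous m) (hp : p.IsHomogeneous n) (hnm : n < m) (h : f ∣ p) : p = 0 := by
  obtain ⟨q, rfl⟩ := h
  by_contra h0
  have h1 := totalDegree_mul_of_isDomain (left_ne_zero_of_mul h0) (right_ne_zero_of_mul h0)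
  rw [hp.totalDegree h0, hf.totalDegree (left_ne_zero_of_mul h0)] at h1
  omega

/-- Multiplication by a form, as a map between spaces of forms. -/
noncomputable def mulForm {f : MvPolynomial (Fin 2) k} {m : ℕ} (hf : f.IsHomogeneous m)
    {a l : ℕ} (h : m + a = l) :
    homogeneousSubmodule (Fin 2) k a →ₗ[k] homogeneousSubmodule (Fin 2) k l :=
  (LinearMap.mulLeft k f).restrict fun _ hx => h ▸ hf.mul hx

/-- The case of critical degree `m + n - 1`, where the cofactors are unique. The degrees are
`m + 1` and `n + 1` to avoid truncated subtraction. -/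
theorem exists_eq_mul_add_mul_critical {f g : MvPolynomial (Fin 2) k} {m n : ℕ}
    (hf : f.IsHomogeneous (m + 1)) (hg : g.IsHomogeneous (n + 1))
    (hfg : IsRelPrime f g) {P : MvPolynomial (Fin 2) k} (hP : P.IsHomogeneous (m + n + 1)) :
    ∃ X Y, X.IsHomogeneous n ∧ Y.IsHomogeneous m ∧ P = f * X + g * Y := by
  let φ := (mulForm hf (a := n) (l := m + n + 1) (by omega)).coprod
    (mulForm hg (a := m) (l := m + n + 1) (by omega))
  have hinj : Function.Injective φ := by
    rw [← LinearMap.ker_eq_bot, LinearMap.ker_eq_bot']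
    rintro ⟨⟨x, hx⟩, ⟨y, hy⟩⟩ h
    have h' : f * x + g * y = 0 := congrArg Subtype.val h
    have hgx : g ∣ x := hfg.symm.dvd_of_dvd_mul_left
      ⟨-y, by linear_combination h'⟩
    have hfy : f ∣ y := hfg.dvd_of_dvd_mul_left
      ⟨-x, by linear_combination h'⟩
    have hx0 := eq_zero_of_dvd_of_isHomogeneous hg hx (Nat.lt_succ_self n) hgx
    have hy0 := eq_zero_of_dvd_of_isHomogeneous hf hy (Nat.lt_succ_self m) hfy
    simp [hx0, hy0]
  have hsurj : Function.Surjective φ := by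
    refine (LinearMap.injective_iff_surjective_of_finrank_eq_finrank ?_).mp hinj
    simp only [Module.finrank_prod, finrank_homogeneousSubmodule_fin_two]
    omega
  obtain ⟨⟨⟨x, hx⟩, ⟨y, hy⟩⟩, h⟩ := hsurj ⟨P, hP⟩
  exact ⟨x, y, hx, hy, (congrArg Subtype.val h).symm⟩

theorem exists_eq_mul_of_isUnit {σ : Type*} {f : MvPolynomial σ k} (hf : IsUnit f)
    {P : MvPolynomial σ k} {l : ℕ} (hP : P.IsHomogeneous l) :
    ∃ X, X.IsHomogeneous l ∧ P = f * X := by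
  obtain ⟨c, hc, rfl⟩ := isUnit_iff_eq_C_of_isReduced.mp hf
  refine ⟨C c⁻¹ * P, hP.C_mul _, ?_⟩
  rw [← mul_assoc, ← C_mul, hc.mul_inv_cancel, C_1, one_mul]

theorem eq_zero_of_isUnit_of_isHomogeneous {σ : Type*} {f : MvPolynomial σ k} (hf : IsUnit f)
    {m : ℕ} (h : f.IsHomogeneous m) : m = 0 := by
  obtain ⟨c, -, rfl⟩ := isUnit_iff_eq_C_of_isReduced.mp hf
  exact h.inj_right (isHomogeneous_C _ c) hf.ne_zero

theorem isUnit_of_isHomogeneous_zero_s3 {σ : Type*} {f : MvPolynomial σ k} (h : f.IsHomogeneous 0)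
    (hf0 : f ≠ 0) : IsUnit f := by
  rw [← totalDegree_zero_iff_isHomogeneous, totalDegree_eq_zero_iff_eq_C] at h
  rw [h] at hf0 ⊢
  exact (isUnit_iff_ne_zero.mpr fun h0 => hf0 (by rw [h0, C_0])).map C

/-- Two relatively prime binary forms of degrees `m` and `n` generate every form of degree
`l ≥ m + n - 1`. Here `g` may be zero, in which case `f` is a nonzero constant. The degrees of the
cofactors are `p = l - m` and `q = l - n`. -/
theorem exists_eq_mul_add_mul {f g : MvPolynomial (Fin 2) k} {m n p q l : ℕ}
    (hf : f.IsHomogeneous m) (hg : g.IsHomogeneous n) (hf0 : f ≠ 0) (hfg : IsRelPrime f g)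
    (hp : m + p = l) (hq : n + q = l) (hl : m + n ≤ l + 1)
    {P : MvPolynomial (Fin 2) k} (hP : P.IsHomogeneous l) :
    ∃ X Y, X.IsHomogeneous p ∧ Y.IsHomogeneous q ∧ P = f * X + g * Y := by
  obtain rfl | ⟨m, rfl⟩ : m = 0 ∨ ∃ m', m = m' + 1 := by cases m <;> simp
  · obtain ⟨X, hX, h⟩ := exists_eq_mul_of_isUnit (isUnit_of_isHomogeneous_zero_s3 hf hf0) hP
    obtain rfl : p = l := by omega
    exact ⟨X, 0, hX, isHomogeneous_zero _ _ _, by simp [h]⟩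
  have hg0 : g ≠ 0 := by
    rintro rfl
    exact absurd (eq_zero_of_isUnit_of_isHomogeneous (isRelPrime_zero_right.mp hfg) hf) (by simp)
  obtain rfl | ⟨n, rfl⟩ : n = 0 ∨ ∃ n', n = n' + 1 := by cases n <;> simp
  · obtain ⟨Y, hY, h⟩ := exists_eq_mul_of_isUnit (isUnit_of_isHomogeneous_zero_s3 hg hg0) hP
    obtain rfl : q = l := by omega
    exact ⟨0, Y, isHomogeneous_zero _ _ _, hY, by simp [h]⟩
  obtain ⟨j, rfl⟩ : ∃ j, l = (m + n + 1) + j := ⟨l - (m + n + 1), by omega⟩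
  obtain rfl : p = n + j := by omega
  obtain rfl : q = m + j := by omega
  have hP' : P ∈ homogeneousSubmodule (Fin 2) k (m + n + 1) * homogeneousSubmodule (Fin 2) k j := by
    rw [← homogeneousSubmodule_one_pow (σ := Fin 2) (R := k) (m + n + 1),
      ← homogeneousSubmodule_one_pow (σ := Fin 2) (R := k) j, ← pow_add,
      homogeneousSubmodule_one_pow]
    exact hP
  induction hP' using Submodule.mul_induction_on' with
  | mem_mul_mem r hr s hs =>
    obtain ⟨X, Y, hX, hY, rfl⟩ := exists_eq_mul_add_mul_critical hf hg hfg hr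
    exact ⟨X * s, Y * s, hX.mul hs, hY.mul hs, by ring⟩
  | add r hr s hs ihr ihs =>
    obtain ⟨X, Y, hX, hY, h⟩ := ihr (homogeneousSubmodule_mul _ _ hr)
    obtain ⟨X', Y', hX', hY', h'⟩ := ihs (homogeneousSubmodule_mul _ _ hs)
    exact ⟨X + X', Y + Y', hX.add hX', hY.add hY', by rw [h, h']; ring⟩

end BinaryForms


/-- if `A ∈ V_{d-u}`, `B ∈ V_u`, `C ∈ V_{e-d+u}` are not all zero and have no
common nonconstant factor, then every `P ∈ V_{e+u}` can be written as `BG - CF + AH`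
with `F ∈ V_d`, `G ∈ V_e`, `H ∈ V_{e-d+2u}`. -/
theorem stmt_3 (k : Type) [Field k] (u d e : ℕ) (hu : 1 ≤ u) (hud : u < d) (hde : d < e)
    (A B C : MvPolynomial (Fin 2) k)
    (hA : A.IsHomogeneous (d - u)) (hB : B.IsHomogeneous u)
    (hC : C.IsHomogeneous (e - d + u))
    (hne : ¬(A = 0 ∧ B = 0 ∧ C = 0))
    (hgcd : ∀ p : MvPolynomial (Fin 2) k, p ∣ A → p ∣ B → p ∣ C → IsUnit p)
    (P : MvPolynomial (Fin 2) k) (hP : P.IsHomogeneous (e + u)) :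
    ∃ F G H : MvPolynomial (Fin 2) k,
      F.IsHomogeneous d ∧ G.IsHomogeneous e ∧ H.IsHomogeneous (e - d + 2 * u) ∧
      P = B * G - C * F + A * H := by
  by_cases hA0 : A = 0
  · subst hA0
    have hBC : IsRelPrime B C := fun p hpB hpC => hgcd p (dvd_zero p) hpB hpC
    have hB0 : B ≠ 0 := by
      rintro rfl
      have := eq_zero_of_isUnit_of_isHomogeneous (isRelPrime_zero_left.mp hBC) hC
      omega
    obtain ⟨G, Y, hG, hY, h⟩ := exists_eq_mul_add_mul (p := e) (q := d) hB hC hB0 hBC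
      (by omega) (by omega) (by omega) hP
    exact ⟨-Y, G, 0, hY.neg, hG, isHomogeneous_zero _ _ _, by rw [h]; ring⟩
  by_cases hB0 : B = 0
  · subst hB0
    have hAC : IsRelPrime A C := fun p hpA hpC => hgcd p hpA (dvd_zero p) hpC
    obtain ⟨H, Y, hH, hY, h⟩ := exists_eq_mul_add_mul (p := e - d + 2 * u) (q := d) hA hC hA0 hAC
      (by omega) (by omega) (by omega) hP
    exact ⟨-Y, 0, H, hY.neg, isHomogeneous_zero _ _ _, hH, by rw [h]; ring⟩
  obtain ⟨A', B', D, hAB, rfl, rfl⟩ := UniqueFactorizationMonoid.exists_reduced_factors A hA0 B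
  obtain ⟨δ, a, hδa, hD, hA'⟩ := hA.of_mul hA0
  obtain ⟨δ', b, hδb, hD', hB'⟩ := hB.of_mul hB0
  have hD0 : D ≠ 0 := left_ne_zero_of_mul hA0
  obtain rfl : δ = δ' := hD.inj_right hD' hD0
  have hDC : IsRelPrime D C := fun p hpD hpC =>
    hgcd p (hpD.mul_right A') (hpD.mul_right B') hpC
  obtain ⟨X, Y, hX, hY, h⟩ := exists_eq_mul_add_mul (p := e + u - δ) (q := d) hD hC hD0 hDC
    (by omega) (by omega) (by omega) hP
  obtain ⟨H, G, hH, hG, h'⟩ := exists_eq_mul_add_mul (p := e - d + 2 * u) (q := e) hA' hB'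
    (right_ne_zero_of_mul hA0) hAB (by omega) (by omega) (by omega) hX
  exact ⟨-Y, G, H, hY.neg, hG, hH, by rw [h, h']; ring⟩
end

section
/- Fix integers 0 ≤ u < d < e and a field k. Let A ∈ V_{d−u}, B ∈ V_u, C ∈ V_{e−d+u} be nonzero homogeneous polynomials with no common nonconstant factor (gcd(A,B,C) is a unit). Suppose H ∈ V_{d−u}, I ∈ V_u, J ∈ V_{e−d+u} and scalars λ, μ ∈ k satisfy BH + AI = λ·AB and CH + AJ = μ·AC. Then there exist scalars α, β, γ ∈ k with H = αA, I = βB and J = γC. (This expresses that the multiplication map (⟨A⟩,⟨B⟩,⟨C⟩) ↦ (⟨AB⟩,⟨AC⟩) is immersive on the locus gcd(A,B,C) = 1.) -/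
/-!
The two relations give `A ∣ B * H` and `A ∣ C * H`, and trivially `A ∣ A * H`. Since
`k[X₀, X₁]` is a UFD, `A` divides `gcd(A, B, C) * H`, which is `H` up to a unit
(`dvd_of_dvd_mul_of_coprime₃`). As `H` and `A` have the same degree, the quotient is a scalar `α`
(`eq_smul_of_dvd_of_isHomogeneous`). Cancelling `A` in the relations then gives
`I = (λ - α) B` and `J = (μ - α) C`.
-/

/-- Euclid's lemma for a triple that is coprime as a whole, though perhaps not pairwise. -/
theorem dvd_of_dvd_mul_of_coprime₃ {R : Type*} [CommRing R] [IsDomain R]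
    [UniqueFactorizationMonoid R] {a b c h : R}
    (hgcd : ∀ p : R, p ∣ a → p ∣ b → p ∣ c → IsUnit p)
    (hb : a ∣ b * h) (hc : a ∣ c * h) : a ∣ h := by
  classical
  let _ : GCDMonoid R := UniqueFactorizationMonoid.toGCDMonoid R
  have hunit : IsUnit (gcd a (gcd b c)) :=
    hgcd _ (gcd_dvd_left _ _) ((gcd_dvd_right _ _).trans (gcd_dvd_left _ _))
      ((gcd_dvd_right _ _).trans (gcd_dvd_right _ _))
  have h1 : a ∣ gcd b c * h := (dvd_gcd hb hc).trans (gcd_mul_right' h b c).dvd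
  have h2 : a ∣ gcd a (gcd b c) * h :=
    (dvd_gcd (dvd_mul_right a h) h1).trans (gcd_mul_right' h a (gcd b c)).dvd
  exact hunit.dvd_mul_left.mp h2

theorem eq_smul_of_dvd_of_isHomogeneous {σ k : Type*} [Field k] {n : ℕ}
    {A H : MvPolynomial σ k} (hA : A.IsHomogeneous n) (hA0 : A ≠ 0)
    (hH : H.IsHomogeneous n) (h : A ∣ H) : ∃ α : k, H = α • A := by
  obtain ⟨q, rfl⟩ := h
  by_cases hq : q = 0
  · exact ⟨0, by simp [hq]⟩
  have h1 := MvPolynomial.totalDegree_mul_of_isDomain hA0 hq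
  rw [hH.totalDegree (mul_ne_zero hA0 hq), hA.totalDegree hA0] at h1
  have h2 := MvPolynomial.totalDegree_eq_zero_iff_eq_C.mp (by omega : q.totalDegree = 0)
  refine ⟨q.coeff 0, ?_⟩
  rw [MvPolynomial.smul_eq_C_mul, ← h2, mul_comm]


/-- for nonzero homogeneous `A ∈ V_{d-u}`, `B ∈ V_u`, `C ∈ V_{e-d+u}` with no
common nonconstant factor, if `H ∈ V_{d-u}`, `I ∈ V_u`, `J ∈ V_{e-d+u}` satisfy
`BH + AI = λ·AB` and `CH + AJ = μ·AC`, then `H`, `I`, `J` are scalar multiples of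
`A`, `B`, `C` respectively. -/
theorem stmt_4 (k : Type) [Field k] (u d e : ℕ) (hud : u < d) (hde : d < e)
    (A B C : MvPolynomial (Fin 2) k)
    (hA : A.IsHomogeneous (d - u)) (hA0 : A ≠ 0)
    (hB : B.IsHomogeneous u) (hB0 : B ≠ 0)
    (hC : C.IsHomogeneous (e - d + u)) (hC0 : C ≠ 0)
    (hgcd : ∀ p : MvPolynomial (Fin 2) k, p ∣ A → p ∣ B → p ∣ C → IsUnit p)
    (H I J : MvPolynomial (Fin 2) k)
    (hH : H.IsHomogeneous (d - u)) (hI : I.IsHomogeneous u)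
    (hJ : J.IsHomogeneous (e - d + u))
    (lam mu : k)
    (e1 : B * H + A * I = lam • (A * B))
    (e2 : C * H + A * J = mu • (A * C)) :
    ∃ α β γ : k, H = α • A ∧ I = β • B ∧ J = γ • C := by
  simp only [MvPolynomial.smul_eq_C_mul] at e1 e2
  have hAH : A ∣ H := dvd_of_dvd_mul_of_coprime₃ hgcd
    ⟨MvPolynomial.C lam * B - I, by linear_combination e1⟩
    ⟨MvPolynomial.C mu * C - J, by linear_combination e2⟩
  obtain ⟨α, rfl⟩ := eq_smul_of_dvd_of_isHomogeneous hA hA0 hH hAH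
  rw [MvPolynomial.smul_eq_C_mul] at e1 e2
  refine ⟨α, lam - α, mu - α, rfl, mul_left_cancel₀ hA0 ?_, mul_left_cancel₀ hA0 ?_⟩
  · rw [MvPolynomial.smul_eq_C_mul, map_sub]
    linear_combination e1
  · rw [MvPolynomial.smul_eq_C_mul, map_sub]
    linear_combination e2
end

section
/- Fix integers 0 ≤ v ≤ u < d < e and a field k. Let A ∈ V_{d−u} be nonzero, let K ∈ V_{u−v}, B′ ∈ V_v, C′ ∈ V_{e−d+v} be nonzero with B′ and C′ coprime, and set B := KB′ ∈ V_u and C := KC′ ∈ V_{e−d+u} (so that gcd(B,C) = K has degree u−v). Suppose H ∈ V_{d−u}, I ∈ V_u, J ∈ V_{e−d+u}, H′ ∈ V_{d−v}, I′ ∈ V_v, J′ ∈ V_{e−d+v} and scalars λ, μ ∈ k satisfy BH + AI = B′H′ + AKI′ + λ·AB and CH + AJ = C′H′ + AKJ′ + μ·AC. Then there exists L ∈ V_{u−v} such that KH − H′ = AL, I = KI′ − B′L + λB, and J = KJ′ − C′L + μC. -/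
/-!
Put `X = K H - H'`. Substituting `B = K B'` and `C = K C'` turns the two relations into
`B' X = A P` and `C' X = A Q`, where `P = K I' - I + λ B` and `Q = K J' - J + μ C`. Cancelling
`A ≠ 0` from `A P C' = B' C' X = A Q B'` gives `C' P = B' Q`, so coprimality and unique
factorization give `B' ∣ P`, say `P = B' L`. Cancelling `B'` yields `X = A L`, and then cancelling
`A` yields `Q = C' L`. Since `X` is homogeneous of degree `d - v = (d - u) + (u - v)` and `A` is
nonzero and homogeneous of degree `d - u`, comparing graded components shows that the cofactor `L`
is homogeneous of degree `u - v`.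
-/

/-- Over a domain, the cofactor of a nonzero homogeneous factor of a homogeneous polynomial is
homogeneous of the complementary degree. -/
lemma isHomogeneous_of_mul_left {σ R : Type*} [CommRing R] [IsDomain R] {m n : ℕ}
    {A L : MvPolynomial σ R} (hA : A.IsHomogeneous m) (hA0 : A ≠ 0)
    (hAL : (A * L).IsHomogeneous (m + n)) : L.IsHomogeneous n := by
  letI := MvPolynomial.gradedAlgebra (σ := σ) (R := R)
  have h1 := DirectSum.coe_decompose_mul_add_of_left_mem
    (MvPolynomial.homogeneousSubmodule σ R) (i := m) (j := n) (b := L) hA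
  have h2 := DirectSum.decompose_of_mem_same (MvPolynomial.homogeneousSubmodule σ R)
    (x := A * L) (i := m + n) hAL
  have h3 := mul_left_cancel₀ hA0 (h2.symm.trans h1)
  have h4 := (DirectSum.decompose (MvPolynomial.homogeneousSubmodule σ R) L n).2
  rwa [← h3] at h4


/-- with `A ∈ V_{d-u}` nonzero, `K ∈ V_{u-v}`, `B' ∈ V_v`, `C' ∈ V_{e-d+v}`
nonzero with `B'` and `C'` coprime, `B = KB'`, `C = KC'`, if
`BH + AI = B'H' + AKI' + λ·AB` and `CH + AJ = C'H' + AKJ' + μ·AC`, then there is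
`L ∈ V_{u-v}` with `KH - H' = AL`, `I = KI' - B'L + λB` and `J = KJ' - C'L + μC`. -/
theorem stmt_5 (k : Type) [Field k] (v u d e : ℕ) (hvu : v ≤ u) (hud : u < d) (hde : d < e)
    (A K B' C' B C : MvPolynomial (Fin 2) k)
    (hA : A.IsHomogeneous (d - u)) (hA0 : A ≠ 0)
    (hK : K.IsHomogeneous (u - v)) (hK0 : K ≠ 0)
    (hB' : B'.IsHomogeneous v) (hB'0 : B' ≠ 0)
    (hC' : C'.IsHomogeneous (e - d + v)) (hC'0 : C' ≠ 0)
    (hcop : IsRelPrime B' C')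
    (hBdef : B = K * B') (hCdef : C = K * C')
    (H I J H' I' J' : MvPolynomial (Fin 2) k)
    (hH : H.IsHomogeneous (d - u)) (hI : I.IsHomogeneous u)
    (hJ : J.IsHomogeneous (e - d + u))
    (hH' : H'.IsHomogeneous (d - v)) (hI' : I'.IsHomogeneous v)
    (hJ' : J'.IsHomogeneous (e - d + v))
    (lam mu : k)
    (e1 : B * H + A * I = B' * H' + A * K * I' + lam • (A * B))
    (e2 : C * H + A * J = C' * H' + A * K * J' + mu • (A * C)) :
    ∃ L : MvPolynomial (Fin 2) k, L.IsHomogeneous (u - v) ∧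
      K * H - H' = A * L ∧
      I = K * I' - B' * L + lam • B ∧
      J = K * J' - C' * L + mu • C := by
  subst hBdef hCdef
  have hP : B' * (K * H - H') = A * (K * I' - I + lam • (K * B')) := by
    simp only [MvPolynomial.smul_eq_C_mul] at e1 ⊢
    linear_combination e1
  have hQ : C' * (K * H - H') = A * (K * J' - J + mu • (K * C')) := by
    simp only [MvPolynomial.smul_eq_C_mul] at e2 ⊢
    linear_combination e2
  have hPQ : C' * (K * I' - I + lam • (K * B')) = B' * (K * J' - J + mu • (K * C')) := by
    apply mul_left_cancel₀ hA0
    linear_combination B' * hQ - C' * hP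
  obtain ⟨L, hL⟩ := hcop.dvd_of_dvd_mul_left ⟨_, hPQ⟩
  have hX : K * H - H' = A * L := by
    apply mul_left_cancel₀ hB'0
    linear_combination hP + A * hL
  have hQL : K * J' - J + mu • (K * C') = C' * L := by
    apply mul_left_cancel₀ hA0
    linear_combination C' * hX - hQ
  refine ⟨L, isHomogeneous_of_mul_left hA hA0 ?_, hX, ?_, ?_⟩
  · rw [← hX]
    have hKH := hK.mul hH
    rw [show u - v + (d - u) = d - u + (u - v) by omega] at hKH
    rw [show d - v = d - u + (u - v) by omega] at hH'
    exact hKH.sub hH'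
  · linear_combination -hL
  · linear_combination -hQL
end

section
/- Let k be a field and let F ∈ V_d and G ∈ V_e be nonzero coprime homogeneous polynomials of degrees d, e ≥ 0 in two variables. For any integer l, if I ∈ V_{l−d} and J ∈ V_{l−e} satisfy IF + JG = 0, then there exists K ∈ V_{l−d−e} such that I = KG and J = −KF. In particular, if l < d + e, then I = 0 and J = 0. -/
/-- A nonzero cofactor `K` of a nonzero homogeneous polynomial in a homogeneous polynomial is
homogeneous, and the degrees add up. -/
theorem exists_isHomogeneous_cofactor {σ k : Type*} [Field k] {K G : MvPolynomial σ k} {e n : ℕ}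
    (hG : G.IsHomogeneous e) (hG0 : G ≠ 0) (hK0 : K ≠ 0) (hKG : (K * G).IsHomogeneous n) :
    ∃ m, m + e = n ∧ K.IsHomogeneous m := by
  have key : ∀ i, MvPolynomial.homogeneousComponent i K ≠ 0 → i + e = n := by
    intro i hi
    by_contra hne
    have h1 : MvPolynomial.homogeneousComponent (i + e) (K * G)
        = MvPolynomial.homogeneousComponent i K * G := by
      letI := MvPolynomial.gradedAlgebra (σ := σ) (R := k)
      have h := DirectSum.coe_decompose_mul_add_of_right_mem
        (MvPolynomial.homogeneousSubmodule σ k) (a := K) (i := i) (j := e) hG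
      exact (MvPolynomial.decomposition.decompose'_apply _ _).symm.trans
        (h.trans (congrArg (· * G) (MvPolynomial.decomposition.decompose'_apply _ _)))
    rw [MvPolynomial.homogeneousComponent_of_mem hKG, if_neg hne] at h1
    exact mul_ne_zero hi hG0 h1.symm
  obtain ⟨i, hi⟩ : ∃ i, MvPolynomial.homogeneousComponent i K ≠ 0 := by
    by_contra! h
    apply hK0
    rw [← MvPolynomial.sum_homogeneousComponent K]
    exact Finset.sum_eq_zero fun i _ => h i
  refine ⟨i, key i hi, ?_⟩
  rw [← MvPolynomial.sum_homogeneousComponent K]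
  refine MvPolynomial.IsHomogeneous.sum _ _ _ fun j _ => ?_
  by_cases hj : MvPolynomial.homogeneousComponent j K = 0
  · rw [hj]
    exact MvPolynomial.isHomogeneous_zero _ _ _
  · have : i = j := by have := key i hi; have := key j hj; omega
    exact this ▸ MvPolynomial.homogeneousComponent_isHomogeneous _ _

/-- for nonzero coprime homogeneous `F ∈ V_d`, `G ∈ V_e` and any integer `l`,
if `I ∈ V_{l-d}` and `J ∈ V_{l-e}` satisfy `IF + JG = 0`, then `I = KG`, `J = -KF` for
some `K ∈ V_{l-d-e}`; in particular `I = J = 0` if `l < d + e`. -/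
theorem stmt_7 (k : Type) [Field k] (d e : ℕ)
    (F G : MvPolynomial (Fin 2) k)
    (hF : F.IsHomogeneous d) (hF0 : F ≠ 0)
    (hG : G.IsHomogeneous e) (hG0 : G ≠ 0)
    (hcop : IsRelPrime F G)
    (l : ℤ) (I J : MvPolynomial (Fin 2) k)
    (hI : I ∈ Vz k (l - d)) (hJ : J ∈ Vz k (l - e))
    (heq : I * F + J * G = 0) :
    (∃ K : MvPolynomial (Fin 2) k, K ∈ Vz k (l - d - e) ∧ I = K * G ∧ J = -(K * F)) ∧
      (l < d + e → I = 0 ∧ J = 0) := by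
  have hdvd : G ∣ I := hcop.symm.dvd_of_dvd_mul_right ⟨-J, by linear_combination heq⟩
  obtain ⟨K, hIK⟩ := hdvd
  rw [mul_comm] at hIK
  have hJK : J = -(K * F) := by
    apply mul_right_cancel₀ hG0
    rw [hIK] at heq
    linear_combination heq
  by_cases hK0 : K = 0
  · subst hK0
    simp only [zero_mul, neg_zero] at hIK hJK
    exact ⟨⟨0, Submodule.zero_mem _, by simpa using hIK, by simpa using hJK⟩,
      fun _ => ⟨hIK, hJK⟩⟩
  have hI0 : I ≠ 0 := hIK ▸ mul_ne_zero hK0 hG0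
  unfold Vz at hI
  split_ifs at hI with hl
  · rw [MvPolynomial.mem_homogeneousSubmodule, hIK] at hI
    obtain ⟨m, hm, hKm⟩ := exists_isHomogeneous_cofactor hG hG0 hK0 hI
    refine ⟨⟨K, ?_, hIK, hJK⟩, fun h => by omega⟩
    unfold Vz
    rw [if_pos (by omega), MvPolynomial.mem_homogeneousSubmodule]
    have : (l - d - e).toNat = m := by omega
    rwa [this]
  · exact absurd ((Submodule.mem_bot k).1 hI) hI0
end

section
/- Fix integers 1 ≤ d < e and e ≤ l ≤ e + d − 1, and a field k. Let F ∈ V_d and G ∈ V_e be nonzero homogeneous polynomials whose greatest common divisor has degree at most d + e − l − 1. If I ∈ V_{l−d} and J ∈ V_{l−e} satisfy IF + JG = 0, then I = 0 and J = 0. -/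
/-!
Write `F = D F'` and `G = D G'` with `D` a greatest common divisor and `F'`, `G'` relatively prime,
using that the polynomial ring is a UFD. Cancelling `D` from the relation gives `I F' = -J G'`,
hence `F' ∣ J`. The bound on `deg D` makes the degree of `F'` at least `l - e + 1`, so a nonzero `J`
of degree `l - e` cannot be a multiple of `F'`. Thus `J = 0`, and then `I F = 0` forces `I = 0`.
-/

/-- for `1 ≤ d < e`, `e ≤ l ≤ e + d - 1`, and nonzero homogeneous
`F ∈ V_d`, `G ∈ V_e` whose gcd has degree at most `d + e - l - 1` (i.e. every common
divisor has degree at most `d + e - l - 1`), if `I ∈ V_{l-d}` and `J ∈ V_{l-e}` satisfy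
`IF + JG = 0`, then `I = 0` and `J = 0`. -/
theorem stmt_9 (k : Type) [Field k] (d e l : ℕ) (hd : 1 ≤ d) (hde : d < e)
    (hl1 : e ≤ l) (hl2 : l ≤ e + d - 1)
    (F G : MvPolynomial (Fin 2) k)
    (hF : F.IsHomogeneous d) (hF0 : F ≠ 0)
    (hG : G.IsHomogeneous e) (hG0 : G ≠ 0)
    (hgcd : ∀ D : MvPolynomial (Fin 2) k, D ∣ F → D ∣ G →
      (D.totalDegree : ℤ) ≤ (d : ℤ) + e - l - 1)
    (I J : MvPolynomial (Fin 2) k)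
    (hI : I.IsHomogeneous (l - d)) (hJ : J.IsHomogeneous (l - e))
    (heq : I * F + J * G = 0) :
    I = 0 ∧ J = 0 := by
  obtain ⟨F', G', D, hrel, rfl, rfl⟩ := UniqueFactorizationMonoid.exists_reduced_factors F hF0 G
  have hD0 : D ≠ 0 := left_ne_zero_of_mul hF0
  have hF'0 : F' ≠ 0 := right_ne_zero_of_mul hF0
  have heq' : I * F' + J * G' = 0 := by
    apply mul_left_cancel₀ hD0
    linear_combination heq
  have hJ0 : J = 0 := by
    by_contra hJ0
    obtain ⟨H, rfl⟩ : F' ∣ J :=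
      hrel.dvd_of_dvd_mul_right ⟨-I, by linear_combination heq'⟩
    have hDdeg := hgcd D (dvd_mul_right _ _) (dvd_mul_right _ _)
    have hFdeg := hF.totalDegree hF0
    have hJdeg := hJ.totalDegree hJ0
    rw [MvPolynomial.totalDegree_mul_of_isDomain hD0 hF'0] at hFdeg
    rw [MvPolynomial.totalDegree_mul_of_isDomain hF'0 (right_ne_zero_of_mul hJ0)] at hJdeg
    -- `deg F' = d - deg D ≥ l - e + 1`, while `F' ∣ J` bounds it by `l - e`.
    omega
  refine ⟨?_, hJ0⟩
  rw [hJ0, zero_mul, add_zero] at heq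
  exact (mul_eq_zero.mp heq).resolve_right hF0
end

section
/- Fix integers 1 ≤ d < e and e ≤ l ≤ e + d − 1, and a field k. Let F ∈ V_d and G ∈ V_e be nonzero homogeneous polynomials whose greatest common divisor has degree at most d + e − l − 2 (in particular G is not a multiple of F). Suppose F′ ∈ V_d and G′ ∈ V_e satisfy IF′ + JG′ ∈ ⟨F,G⟩_l for all I ∈ V_{l−d} and J ∈ V_{l−e}. Then F′ is a scalar multiple of F and G′ ∈ ⟨F,G⟩_e, i.e. G′ = λG + HF for some λ ∈ k and H ∈ V_{e−d}. -/
/-!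
Work with congruences modulo `F`. For `A = F'` or `A = G'` the hypothesis says that every form `I`
of a certain degree `a` admits a form `K` of degree `b = l - e` with `I * A ≡ K * G` modulo `F`
(`CongrMul F G A a b`).

The bound on the gcd makes multiplication by `G` modulo `F` injective on forms of degree at most
`b + 1` (`eq_zero_of_dvd_mul`): if `F = D f` and `G = D g` with `f`, `g` coprime, then `F ∣ K * G`
forces `f ∣ K`, while `deg f > b + 1`. Hence, if `X₀ I A ≡ K₀ G` and `X₁ I A ≡ K₁ G`, then
`X₁ K₀ - X₀ K₁` has degree `b + 1` and vanishes, so `K₀ = X₀ K` and `K₁ = X₁ K` for a common `K`,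
and `X₀` and `X₁` can both be cancelled to give `I A ≡ K G`. Thus `CongrMul F G A (a + 1) (b + 1)`
implies `CongrMul F G A a b` (`CongrMul.descend`).

For `A = G'` one has `a = b`, and descending to `a = b = 0` gives `G' ≡ λ G` modulo `F`.
For `A = F'` one has `a = l - d > b`, and descending to `b = 0` leaves positive degree in `I`;
there the constants `K₀ = X₀ K` must vanish, so `F` divides `I * F'` for all forms `I` of some
degree, and cancelling variables once more gives `F ∣ F'`.
-/

open MvPolynomial

/-- A cofactor of a homogeneous polynomial by a nonzero homogeneous polynomial is homogeneous. -/
lemma isHomogeneous_of_mul_left_s11 {k : Type} [Field k] {F B : MvPolynomial (Fin 2) k} {a t : ℕ}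
    (hF : F.IsHomogeneous a) (hF0 : F ≠ 0) (h : (F * B).IsHomogeneous (a + t)) :
    B.IsHomogeneous t := by
  letI : GradedAlgebra (homogeneousSubmodule (Fin 2) k) := MvPolynomial.gradedAlgebra
  have h1 := DirectSum.coe_decompose_mul_add_of_left_mem
    (homogeneousSubmodule (Fin 2) k) (i := a) (j := t) (b := B)
    ((mem_homogeneousSubmodule a F).2 hF)
  rw [DirectSum.decompose_of_mem_same _ ((mem_homogeneousSubmodule _ _).2 h)] at h1
  rw [mul_left_cancel₀ hF0 h1]
  exact (mem_homogeneousSubmodule _ _).1 (SetLike.coe_mem _)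

/-- The Koszul relation between the two variables. -/
lemma exists_of_X_mul_eq {k : Type} [Field k] {B C : MvPolynomial (Fin 2) k}
    (h : X 1 * B = X 0 * C) : ∃ E, B = X 0 * E ∧ C = X 1 * E := by
  have h0 : (X 0 : MvPolynomial (Fin 2) k) ∣ X 1 * B := ⟨C, h⟩
  have hn : ¬ (X 0 : MvPolynomial (Fin 2) k) ∣ X 1 := by
    rw [X_dvd_X]; decide
  obtain ⟨E, rfl⟩ := ((X_prime (R := k) (i := (0 : Fin 2))).dvd_or_dvd h0).resolve_left hn
  refine ⟨E, rfl, ?_⟩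
  apply mul_left_cancel₀ (X_ne_zero (R := k) (0 : Fin 2))
  rw [← h]; ring

/-- The two variables have no common factor, so they can be cancelled jointly. -/
lemma dvd_of_dvd_X_mul {k : Type} [Field k] {F A : MvPolynomial (Fin 2) k} (hF0 : F ≠ 0)
    (h0 : F ∣ X 0 * A) (h1 : F ∣ X 1 * A) : F ∣ A := by
  obtain ⟨B, hB⟩ := h0
  obtain ⟨C, hC⟩ := h1
  have h : X 1 * B = X 0 * C := by
    apply mul_left_cancel₀ hF0
    linear_combination X 0 * hC - X 1 * hB
  obtain ⟨E, rfl, rfl⟩ := exists_of_X_mul_eq h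
  refine ⟨E, mul_left_cancel₀ (X_ne_zero (R := k) (0 : Fin 2)) ?_⟩
  rw [hB]; ring

/-- Multiplication by `G` modulo `F` is injective in degrees below `deg F - deg (gcd F G)`. -/
lemma eq_zero_of_dvd_mul {k : Type} [Field k] {F G : MvPolynomial (Fin 2) k} {d t : ℕ}
    (hF : F.IsHomogeneous d) (hF0 : F ≠ 0)
    (hgcd : ∀ D : MvPolynomial (Fin 2) k, D ∣ F → D ∣ G → D.totalDegree + t < d)
    {K : MvPolynomial (Fin 2) k} (hK : K.IsHomogeneous t) (h : F ∣ K * G) : K = 0 := by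
  obtain ⟨f, g, D, hfg, rfl, rfl⟩ := UniqueFactorizationMonoid.exists_reduced_factors F hF0 G
  have hD0 : D ≠ 0 := left_ne_zero_of_mul hF0
  have hf0 : f ≠ 0 := right_ne_zero_of_mul hF0
  have hd : D.totalDegree + f.totalDegree = d := by
    rw [← totalDegree_mul_of_isDomain hD0 hf0, hF.totalDegree hF0]
  have hfK : f ∣ K := by
    refine hfg.dvd_of_dvd_mul_right ((mul_dvd_mul_iff_left hD0).1 ?_)
    rwa [mul_left_comm] at h
  by_contra hK0
  obtain ⟨r, rfl⟩ := hfK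
  have h1 := hK.totalDegree hK0
  rw [totalDegree_mul_of_isDomain hf0 (right_ne_zero_of_mul hK0)] at h1
  have h2 := hgcd D (dvd_mul_right _ _) (dvd_mul_right _ _)
  omega

/-- Modulo `F`, multiplication by `A` sends every form of degree `a` to a multiple of `G` by a
form of degree `b`. -/
def CongrMul {k : Type} [Field k] (F G A : MvPolynomial (Fin 2) k) (a b : ℕ) : Prop :=
  ∀ I : MvPolynomial (Fin 2) k, I.IsHomogeneous a →
    ∃ K : MvPolynomial (Fin 2) k, K.IsHomogeneous b ∧ F ∣ I * A - K * G

/-- If `G` is injective modulo `F` in degree `b + 1`, the multipliers attached to `X₀ I` and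
`X₁ I` have a common quotient. -/
lemma CongrMul.exists_common {k : Type} [Field k] {F G A : MvPolynomial (Fin 2) k} {a b : ℕ}
    (hF0 : F ≠ 0)
    (hinj : ∀ K : MvPolynomial (Fin 2) k, K.IsHomogeneous (b + 1) → F ∣ K * G → K = 0)
    (h : CongrMul F G A (a + 1) b) (I : MvPolynomial (Fin 2) k) (hI : I.IsHomogeneous a) :
    ∃ K : MvPolynomial (Fin 2) k, (X 0 * K).IsHomogeneous b ∧ F ∣ I * A - K * G := by
  have hX (i : Fin 2) : (X i * I).IsHomogeneous (a + 1) := by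
    rw [add_comm]; exact (isHomogeneous_X k i).mul hI
  obtain ⟨K₀, hK₀, h₀⟩ := h _ (hX 0)
  obtain ⟨K₁, hK₁, h₁⟩ := h _ (hX 1)
  have hz : X 1 * K₀ - X 0 * K₁ = 0 := by
    apply hinj
    · rw [add_comm]
      exact ((isHomogeneous_X k 1).mul hK₀).sub ((isHomogeneous_X k 0).mul hK₁)
    · convert dvd_sub (h₁.mul_left (X 0)) (h₀.mul_left (X 1)) using 1
      ring
  obtain ⟨K, rfl, rfl⟩ := exists_of_X_mul_eq (sub_eq_zero.1 hz)
  refine ⟨K, hK₀, dvd_of_dvd_X_mul hF0 ?_ ?_⟩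
  · convert h₀ using 1; ring
  · convert h₁ using 1; ring

lemma CongrMul.descend {k : Type} [Field k] {F G A : MvPolynomial (Fin 2) k} {a b : ℕ}
    (hF0 : F ≠ 0)
    (hinj : ∀ K : MvPolynomial (Fin 2) k, K.IsHomogeneous (b + 2) → F ∣ K * G → K = 0)
    (h : CongrMul F G A (a + 1) (b + 1)) : CongrMul F G A a b := by
  intro I hI
  obtain ⟨K, hK, hd⟩ := h.exists_common hF0 hinj I hI
  rw [add_comm] at hK
  exact ⟨K, isHomogeneous_of_mul_left_s11 (isHomogeneous_X k 0) (X_ne_zero 0) hK, hd⟩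

lemma CongrMul.descend_to_zero {k : Type} [Field k] {F G A : MvPolynomial (Fin 2) k} {c b : ℕ}
    (hF0 : F ≠ 0)
    (hinj : ∀ t ≤ b + 1, ∀ K : MvPolynomial (Fin 2) k, K.IsHomogeneous t → F ∣ K * G → K = 0)
    (h : CongrMul F G A (c + b) b) : CongrMul F G A c 0 := by
  induction b with
  | zero => exact h
  | succ b ih =>
    exact ih (fun t ht => hinj t (by omega))
      (CongrMul.descend (a := c + b) hF0 (hinj _ le_rfl) h)

/-- When `I` has positive degree and the multipliers are constants, the multipliers vanish:
they are divisible by `X₀`. -/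
lemma CongrMul.dvd_mul {k : Type} [Field k] {F G A : MvPolynomial (Fin 2) k} {a : ℕ}
    (hF0 : F ≠ 0)
    (hinj : ∀ K : MvPolynomial (Fin 2) k, K.IsHomogeneous 1 → F ∣ K * G → K = 0)
    (h : CongrMul F G A (a + 1) 0) (I : MvPolynomial (Fin 2) k) (hI : I.IsHomogeneous a) :
    F ∣ I * A := by
  obtain ⟨K, hK, hd⟩ := h.exists_common hF0 hinj I hI
  have hK0 : K = 0 := by
    by_contra hK0
    have h1 := hK.totalDegree (mul_ne_zero (X_ne_zero 0) hK0)
    rw [totalDegree_mul_of_isDomain (X_ne_zero 0) hK0, totalDegree_X] at h1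
    omega
  simpa [hK0] using hd

lemma dvd_of_forall_dvd_mul {k : Type} [Field k] {F A : MvPolynomial (Fin 2) k} {a : ℕ}
    (hF0 : F ≠ 0)
    (h : ∀ I : MvPolynomial (Fin 2) k, I.IsHomogeneous a → F ∣ I * A) : F ∣ A := by
  induction a with
  | zero => simpa using h 1 (isHomogeneous_one _ _)
  | succ a ih =>
    refine ih fun I hI => dvd_of_dvd_X_mul hF0 ?_ ?_ <;> rw [← mul_assoc] <;> apply h <;>
      rw [add_comm] <;> exact (isHomogeneous_X k _).mul hI


/-- for `1 ≤ d < e`, `e ≤ l ≤ e + d - 1`, and nonzero homogeneous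
`F ∈ V_d`, `G ∈ V_e` whose gcd has degree at most `d + e - l - 2` (i.e. every common
divisor has degree at most `d + e - l - 2`), if `F' ∈ V_d` and `G' ∈ V_e` satisfy
`IF' + JG' ∈ ⟨F,G⟩_l` for all `I ∈ V_{l-d}` and `J ∈ V_{l-e}`, then `F'` is a scalar
multiple of `F` and `G' = λG + HF` for some scalar `λ` and some `H ∈ V_{e-d}`. -/
theorem stmt_11 (k : Type) [Field k] (d e l : ℕ) (hd : 1 ≤ d) (hde : d < e)
    (hl1 : e ≤ l) (hl2 : l ≤ e + d - 1)
    (F G : MvPolynomial (Fin 2) k)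
    (hF : F.IsHomogeneous d) (hF0 : F ≠ 0)
    (hG : G.IsHomogeneous e) (hG0 : G ≠ 0)
    (hgcd : ∀ D : MvPolynomial (Fin 2) k, D ∣ F → D ∣ G →
      (D.totalDegree : ℤ) ≤ (d : ℤ) + e - l - 2)
    (F' G' : MvPolynomial (Fin 2) k)
    (hF' : F'.IsHomogeneous d) (hG' : G'.IsHomogeneous e)
    (hmem : ∀ I J : MvPolynomial (Fin 2) k,
      I.IsHomogeneous (l - d) → J.IsHomogeneous (l - e) →
      ∃ H I' : MvPolynomial (Fin 2) k,
        H.IsHomogeneous (l - d) ∧ I'.IsHomogeneous (l - e) ∧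
        I * F' + J * G' = H * F + I' * G) :
    (∃ c : k, F' = c • F) ∧
      ∃ (lam : k) (H : MvPolynomial (Fin 2) k),
        H.IsHomogeneous (e - d) ∧ G' = lam • G + H * F := by
  have hinj : ∀ t ≤ (l - e) + 1, ∀ K : MvPolynomial (Fin 2) k, K.IsHomogeneous t →
      F ∣ K * G → K = 0 := by
    intro t ht K hK h
    refine eq_zero_of_dvd_mul hF hF0 (fun D h1 h2 => ?_) hK h
    have := hgcd D h1 h2
    omega
  have hFc : CongrMul F G F' (l - d) (l - e) := by
    intro I hI
    obtain ⟨H, K, -, hK, h⟩ := hmem I 0 hI (isHomogeneous_zero _ _ _)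
    exact ⟨K, hK, H, by linear_combination h⟩
  have hGc : CongrMul F G G' (0 + (l - e)) (l - e) := by
    intro J hJ
    rw [zero_add] at hJ
    obtain ⟨H, K, -, hK, h⟩ := hmem 0 J (isHomogeneous_zero _ _ _) hJ
    exact ⟨K, hK, H, by linear_combination h⟩
  constructor
  · rw [show l - d = (e - d - 1 + 1) + (l - e) by omega] at hFc
    obtain ⟨B, rfl⟩ := dvd_of_forall_dvd_mul hF0
      ((hFc.descend_to_zero hF0 hinj).dvd_mul hF0 (hinj 1 (by omega)))
    have hB : B.IsHomogeneous 0 := isHomogeneous_of_mul_left_s11 hF hF0 hF'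
    refine ⟨coeff 0 B, ?_⟩
    rw [totalDegree_eq_zero_iff_eq_C.1 (Nat.le_zero.1 hB.totalDegree_le), smul_eq_C_mul, coeff_C,
      if_pos rfl, mul_comm]
  · obtain ⟨K, hK, B, hB⟩ := hGc.descend_to_zero hF0 hinj 1 (isHomogeneous_one _ _)
    have hKC := totalDegree_eq_zero_iff_eq_C.1 (Nat.le_zero.1 hK.totalDegree_le)
    refine ⟨coeff 0 K, B, ?_, ?_⟩
    · refine isHomogeneous_of_mul_left_s11 hF hF0 ?_
      rw [← hB, one_mul, show d + (e - d) = e by omega]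
      refine hG'.sub ?_
      simpa using hK.mul hG
    · rw [smul_eq_C_mul, ← hKC]
      linear_combination hB
end

section
/- Fix integers d, e, l, u with 1 ≤ l − e + 1 < u < d < e, and a field k. Let F ∈ V_d and G ∈ V_e be homogeneous polynomials whose greatest common divisor has degree exactly d − u (in particular F and G are nonzero). Let G′ ∈ V_e. If JG′ ∈ ⟨F,G⟩_l for every J ∈ V_{l−e}, then G′ ∈ ⟨F,G⟩_e, i.e. G′ = λG + HF for some λ ∈ k and H ∈ V_{e−d}. -/
/-!
Write `m = l - e`, `F = D f`, `G = D g` with `f`, `g` coprime and `deg f = u`. Since `D` divides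
both `X₀ᵐ G'` and `X₁ᵐ G'`, it divides `G'`, say `G' = D g'`. For each monomial
`Jᵢ = X₀ⁱ X₁ᵐ⁻ⁱ` there is `aᵢ` of degree `m` with `Jᵢ g' ≡ aᵢ g (mod f)`. As `X₀ Jᵢ = X₁ Jᵢ₊₁` and
`g` is coprime to `f`, the polynomial `f` divides `X₀ aᵢ - X₁ aᵢ₊₁`; this has degree at most
`m + 1 < u`, so it vanishes. Hence `X₀ᵐ a₀ = X₁ᵐ aₘ`, which forces `a₀ = λ X₁ᵐ` and `aₘ = λ X₀ᵐ`
for one scalar `λ`. Then `f` divides `X₀ᵐ (g' - λ g)` and `X₁ᵐ (g' - λ g)`, so it divides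
`g' - λ g`, and multiplying by `D` gives the claim.
-/

open MvPolynomial in
theorem isRelPrime_X_pow (k : Type) [Field k] (m n : ℕ) :
    IsRelPrime ((X 0 : MvPolynomial (Fin 2) k) ^ m) ((X 1 : MvPolynomial (Fin 2) k) ^ n) := by
  apply IsRelPrime.pow
  rw [(X_prime (R := k) (i := (0 : Fin 2))).irreducible.isRelPrime_iff_not_dvd, X_dvd_X]
  simp

open MvPolynomial in
theorem dvd_of_dvd_X_pow_mul {k : Type} [Field k] {m : ℕ} {A B : MvPolynomial (Fin 2) k}
    (h0 : A ∣ X 0 ^ m * B) (h1 : A ∣ X 1 ^ m * B) : A ∣ B := by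
  obtain ⟨P, hP⟩ := h0
  obtain ⟨Q, hQ⟩ := h1
  have hX : (X 0 : MvPolynomial (Fin 2) k) ^ m ≠ 0 := pow_ne_zero _ (X_ne_zero _)
  by_cases hA : A = 0
  · subst hA
    rw [zero_mul] at hP
    rw [(mul_eq_zero.mp hP).resolve_left hX]
  have key : X 1 ^ m * P = X 0 ^ m * Q :=
    mul_left_cancel₀ hA (by linear_combination X 0 ^ m * hQ - X 1 ^ m * hP)
  obtain ⟨R, rfl⟩ := (isRelPrime_X_pow k m m).dvd_of_dvd_mul_left ⟨Q, key⟩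
  exact ⟨R, mul_left_cancel₀ hX (by linear_combination hP)⟩

open MvPolynomial in
theorem eq_C_mul_of_homogeneous_mul {k : Type} [Field k] {m : ℕ}
    {a P c : MvPolynomial (Fin 2) k} (ha : a.IsHomogeneous m) (hP : P.IsHomogeneous m)
    (h : a = P * c) : ∃ lam : k, a = P * C lam := by
  by_cases ha0 : a = 0
  · exact ⟨0, by simp [ha0]⟩
  have hP0 : P ≠ 0 := by rintro rfl; simp_all
  have hc0 : c ≠ 0 := by rintro rfl; simp_all
  have := totalDegree_mul_of_isDomain hP0 hc0
  rw [← h, ha.totalDegree ha0, hP.totalDegree hP0] at this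
  exact ⟨_, h.trans (congrArg _ (totalDegree_eq_zero_iff_eq_C.mp (by omega)))⟩

open MvPolynomial in
/-- A multiple `H * F` that is homogeneous can be rewritten with a homogeneous cofactor, namely
the component of `H` of the right degree. -/
theorem exists_homogeneous_cofactor {k : Type} [Field k] {d n : ℕ}
    {P F H : MvPolynomial (Fin 2) k} (hF : F.IsHomogeneous d) (hP : P.IsHomogeneous (n + d))
    (h : P = H * F) : ∃ H' : MvPolynomial (Fin 2) k, H'.IsHomogeneous n ∧ P = H' * F := by
  refine ⟨homogeneousComponent n H, homogeneousComponent_isHomogeneous _ _, ?_⟩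
  let _ : GradedAlgebra (homogeneousSubmodule (Fin 2) k) := gradedAlgebra
  have key := DirectSum.coe_decompose_mul_add_of_right_mem
    (homogeneousSubmodule (Fin 2) k) (i := n) (a := H) ((mem_homogeneousSubmodule d F).mpr hF)
  rw [← h, DirectSum.decompose_of_mem_same _ ((mem_homogeneousSubmodule _ P).mpr hP)] at key
  rw [key, ← decomposition.decompose'_apply]
  rfl


/-- for `1 ≤ l - e + 1 < u < d < e` and homogeneous `F ∈ V_d`, `G ∈ V_e`
whose greatest common divisor has degree exactly `d - u`, if `G' ∈ V_e` satisfies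
`JG' ∈ ⟨F,G⟩_l` for every `J ∈ V_{l-e}`, then `G' = λG + HF` for some scalar `λ` and
some `H ∈ V_{e-d}`. -/
theorem stmt_12 (k : Type) [Field k] (d e l u : ℕ)
    (hle : e ≤ l) (hlu : l - e + 1 < u) (hud : u < d) (hde : d < e)
    (F G : MvPolynomial (Fin 2) k)
    (hF : F.IsHomogeneous d) (hG : G.IsHomogeneous e)
    (hgcd : ∃ D : MvPolynomial (Fin 2) k, D ∣ F ∧ D ∣ G ∧
      (∀ D' : MvPolynomial (Fin 2) k, D' ∣ F → D' ∣ G → D' ∣ D) ∧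
      D.totalDegree = d - u)
    (G' : MvPolynomial (Fin 2) k) (hG' : G'.IsHomogeneous e)
    (hmem : ∀ J : MvPolynomial (Fin 2) k, J.IsHomogeneous (l - e) →
      ∃ H I : MvPolynomial (Fin 2) k,
        H.IsHomogeneous (l - d) ∧ I.IsHomogeneous (l - e) ∧
        J * G' = H * F + I * G) :
    ∃ (lam : k) (H : MvPolynomial (Fin 2) k),
      H.IsHomogeneous (e - d) ∧ G' = lam • G + H * F := by
  obtain ⟨D, ⟨f, rfl⟩, ⟨g, rfl⟩, hD, hdeg⟩ := hgcd
  have hD0 : D ≠ 0 := by rintro rfl; simp at hdeg; omega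
  have hrel : IsRelPrime f g := by
    intro x hxf hxg
    have h := hD (D * x) (mul_dvd_mul_left _ hxf) (mul_dvd_mul_left _ hxg)
    have h' : D * x ∣ D * 1 := by rwa [mul_one]
    exact isUnit_of_dvd_one ((mul_dvd_mul_iff_left hD0).mp h')
  -- If `f = 0` then `g` is a unit, so `D * g` has degree `d - u`, which is not `e`.
  have hf0 : f ≠ 0 := by
    rintro rfl
    have hg : IsUnit g := hrel (dvd_zero _) dvd_rfl
    have hg0 := hg.ne_zero
    have h1 := MvPolynomial.totalDegree_mul_of_isDomain hD0 hg0
    rw [hG.totalDegree (mul_ne_zero hD0 hg0)] at h1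
    obtain ⟨c, -, rfl⟩ := (MvPolynomial.isUnit_iff_eq_C_of_isReduced).mp hg
    simp at h1
    omega
  have hfdeg : f.totalDegree = u := by
    have h1 := MvPolynomial.totalDegree_mul_of_isDomain hD0 hf0
    rw [hF.totalDegree (mul_ne_zero hD0 hf0)] at h1
    omega
  -- The integer `l` is written `e + m`.
  obtain ⟨m, rfl⟩ := Nat.exists_eq_add_of_le hle
  rw [Nat.add_sub_cancel_left] at hmem hlu
  have hJ : ∀ i ≤ m, (MvPolynomial.X 0 ^ i * MvPolynomial.X 1 ^ (m - i) : MvPolynomial (Fin 2) k).IsHomogeneous m := by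
    intro i hi
    have := ((MvPolynomial.isHomogeneous_X k (0 : Fin 2)).pow i).mul ((MvPolynomial.isHomogeneous_X k (1 : Fin 2)).pow (m - i))
    convert this using 1
    omega
  have hex : ∀ i, ∃ H I : MvPolynomial (Fin 2) k, i ≤ m → I.IsHomogeneous m ∧
      MvPolynomial.X 0 ^ i * MvPolynomial.X 1 ^ (m - i) * G' = H * (D * f) + I * (D * g) := by
    intro i
    by_cases hi : i ≤ m
    · obtain ⟨H, I, -, hI, h⟩ := hmem _ (hJ i hi)
      exact ⟨H, I, fun _ => ⟨hI, h⟩⟩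
    · exact ⟨0, 0, fun h => absurd h hi⟩
  choose H a hHa using hex
  have e0 := (hHa 0 (Nat.zero_le _)).2
  have em := (hHa m le_rfl).2
  simp only [pow_zero, one_mul, Nat.sub_zero, Nat.sub_self, mul_one] at e0 em
  have hDG' : D ∣ G' := by
    refine dvd_of_dvd_X_pow_mul (m := m) ⟨H m * f + a m * g, ?_⟩ ⟨H 0 * f + a 0 * g, ?_⟩
    · linear_combination em
    · linear_combination e0
  obtain ⟨g', rfl⟩ := hDG'
  have hstep : ∀ i < m, MvPolynomial.X 0 * a i = MvPolynomial.X 1 * a (i + 1) := by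
    intro i hi
    -- Both `X₀ aᵢ g` and `X₁ aᵢ₊₁ g` are congruent to `X₀ⁱ⁺¹ X₁ᵐ⁻ⁱ g'` modulo `f`.
    obtain ⟨ha1, h1⟩ := hHa i hi.le
    obtain ⟨ha2, h2⟩ := hHa (i + 1) hi
    obtain ⟨j, rfl⟩ := Nat.exists_eq_add_of_lt hi
    rw [show i + j + 1 - i = j + 1 by omega] at h1
    rw [show i + j + 1 - (i + 1) = j by omega] at h2
    have hdvd : f ∣ MvPolynomial.X 0 * a i - MvPolynomial.X 1 * a (i + 1) := by
      refine hrel.dvd_of_dvd_mul_right ⟨MvPolynomial.X 1 * H (i + 1) - MvPolynomial.X 0 * H i, mul_left_cancel₀ hD0 ?_⟩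
      linear_combination MvPolynomial.X 1 * h2 - MvPolynomial.X 0 * h1
    -- A nonzero multiple of `f` has degree at least `u`, but this one has degree `m + 1 < u`.
    by_contra hne
    obtain ⟨q, hq⟩ := hdvd
    have hne' : MvPolynomial.X 0 * a i - MvPolynomial.X 1 * a (i + 1) ≠ 0 := sub_ne_zero.mpr hne
    have hh : (MvPolynomial.X 0 * a i - MvPolynomial.X 1 * a (i + 1)).IsHomogeneous (1 + (i + j + 1)) :=
      ((MvPolynomial.isHomogeneous_X k _).mul ha1).sub ((MvPolynomial.isHomogeneous_X k _).mul ha2)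
    have ht := hh.totalDegree hne'
    have hq0 : q ≠ 0 := by rintro rfl; simp_all
    rw [hq, MvPolynomial.totalDegree_mul_of_isDomain hf0 hq0] at ht
    omega
  have hchain : ∀ i ≤ m, MvPolynomial.X 0 ^ i * a 0 = MvPolynomial.X 1 ^ i * a i := by
    intro i
    induction i with
    | zero => simp
    | succ i ih =>
      intro hi
      linear_combination MvPolynomial.X 0 * ih (by omega) + MvPolynomial.X 1 ^ i * hstep i hi
  have hm := hchain m le_rfl
  obtain ⟨c, hc⟩ := (isRelPrime_X_pow k m m).symm.dvd_of_dvd_mul_left ⟨a m, hm⟩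
  have hX1 : (MvPolynomial.X 1 ^ m : MvPolynomial (Fin 2) k).IsHomogeneous m := by
    simpa using hJ 0 (Nat.zero_le _)
  obtain ⟨lam, hlam⟩ := eq_C_mul_of_homogeneous_mul (hHa 0 (Nat.zero_le _)).1 hX1 hc
  have ham : a m = MvPolynomial.X 0 ^ m * MvPolynomial.C lam :=
    mul_left_cancel₀ (pow_ne_zero m (MvPolynomial.X_ne_zero (R := k) (1 : Fin 2)))
      (by linear_combination MvPolynomial.X 0 ^ m * hlam - hm)
  have hfd : f ∣ g' - MvPolynomial.C lam * g := by
    refine dvd_of_dvd_X_pow_mul (m := m) ⟨H m, mul_left_cancel₀ hD0 ?_⟩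
      ⟨H 0, mul_left_cancel₀ hD0 ?_⟩
    · linear_combination em + D * g * ham
    · linear_combination e0 + D * g * hlam
  obtain ⟨h, hh⟩ := hfd
  have hP : (D * g' - MvPolynomial.C lam * (D * g)).IsHomogeneous ((e - d) + d) := by
    rw [Nat.sub_add_cancel hde.le]
    refine hG'.sub ?_
    simpa using (MvPolynomial.isHomogeneous_C (Fin 2) lam).mul hG
  obtain ⟨H', hH', heq⟩ := exists_homogeneous_cofactor (H := h) hF hP
    (by linear_combination D * hh)
  exact ⟨lam, H', hH', by rw [MvPolynomial.smul_eq_C_mul]; linear_combination heq⟩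
end

section
/- Fix integers 1 ≤ u < d < e and e − 1 ≤ l ≤ e + d − 1, and a field k. Let A ∈ V_{d−u}, B ∈ V_u, C ∈ V_{e−d+u} be nonzero homogeneous polynomials with B and C coprime, and let F ∈ V_d, G ∈ V_e be such that A and BG − CF are coprime. Suppose I₀, I₁ ∈ V_{l−d} and J₀, J₁ ∈ V_{l−e} satisfy I₀·AB + J₀·AC = 0 and A(I₁B + J₁C) + I₀F + J₀G = 0. Then I₀ = 0 and J₀ = 0. -/
/-!
Cancelling `A` in the first equation gives `I₀ B = -J₀ C`, so coprimality of `B` and `C` yields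
`J₀ = B H` and `I₀ = -C H`. The second equation then shows that `A` divides `H (B G - C F)`, hence
`A ∣ H`. So `A B`, of degree `d`, divides `J₀`, which is zero or homogeneous of degree
`l - e < d`. Therefore `J₀ = 0`, and `I₀ = 0` follows from the first equation.
-/

/-- for `1 ≤ u < d < e` and `e - 1 ≤ l ≤ e + d - 1`, with nonzero
homogeneous `A ∈ V_{d-u}`, `B ∈ V_u`, `C ∈ V_{e-d+u}`, `B` and `C` coprime,
`F ∈ V_d`, `G ∈ V_e` such that `A` and `BG - CF` are coprime, if `I₀, I₁ ∈ V_{l-d}`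
and `J₀, J₁ ∈ V_{l-e}` satisfy `I₀·AB + J₀·AC = 0` and
`A(I₁B + J₁C) + I₀F + J₀G = 0`, then `I₀ = 0` and `J₀ = 0`. -/
theorem stmt_13 (k : Type) [Field k] (u d e : ℕ) (hu : 1 ≤ u) (hud : u < d) (hde : d < e)
    (l : ℤ) (hl1 : (e : ℤ) - 1 ≤ l) (hl2 : l ≤ (e : ℤ) + d - 1)
    (A B C : MvPolynomial (Fin 2) k)
    (hA : A.IsHomogeneous (d - u)) (hA0 : A ≠ 0)
    (hB : B.IsHomogeneous u) (hB0 : B ≠ 0)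
    (hC : C.IsHomogeneous (e - d + u)) (hC0 : C ≠ 0)
    (hBC : IsRelPrime B C)
    (F G : MvPolynomial (Fin 2) k)
    (hF : F.IsHomogeneous d) (hG : G.IsHomogeneous e)
    (hAcop : IsRelPrime A (B * G - C * F))
    (I₀ I₁ J₀ J₁ : MvPolynomial (Fin 2) k)
    (hI₀ : I₀ ∈ Vz k (l - d)) (hI₁ : I₁ ∈ Vz k (l - d))
    (hJ₀ : J₀ ∈ Vz k (l - e)) (hJ₁ : J₁ ∈ Vz k (l - e))
    (e1 : I₀ * (A * B) + J₀ * (A * C) = 0)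
    (e2 : A * (I₁ * B + J₁ * C) + I₀ * F + J₀ * G = 0) :
    I₀ = 0 ∧ J₀ = 0 := by
  have e1' : I₀ * B + J₀ * C = 0 := by
    refine (mul_eq_zero.mp ?_).resolve_left hA0
    linear_combination e1
  have hBJ : B ∣ J₀ := hBC.dvd_of_dvd_mul_right ⟨-I₀, by linear_combination e1'⟩
  obtain ⟨H, rfl⟩ := hBJ
  have hI : I₀ = -(C * H) := by
    refine mul_left_cancel₀ hB0 ?_
    linear_combination e1'
  have hAH : A ∣ H := by
    refine hAcop.dvd_of_dvd_mul_right ⟨-(I₁ * B + J₁ * C), ?_⟩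
    rw [hI] at e2
    linear_combination e2
  obtain ⟨K, rfl⟩ := hAH
  have hJ : B * (A * K) = 0 := by
    by_contra hne
    have hK : K ≠ 0 := fun h => hne (by simp [h])
    unfold Vz at hJ₀
    split_ifs at hJ₀ with hl
    · have h1 := MvPolynomial.IsHomogeneous.totalDegree
        ((MvPolynomial.mem_homogeneousSubmodule _ _).mp hJ₀) hne
      rw [MvPolynomial.totalDegree_mul_of_isDomain hB0 (mul_ne_zero hA0 hK),
        MvPolynomial.totalDegree_mul_of_isDomain hA0 hK, hA.totalDegree hA0,
        hB.totalDegree hB0] at h1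
      omega
    · exact hne ((Submodule.mem_bot k).mp hJ₀)
  refine ⟨?_, hJ⟩
  rw [hJ, zero_mul, add_zero] at e1'
  exact (mul_eq_zero.mp e1').resolve_right hB0
end
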